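/- arXiv:2403.06270 — 6 statements merged into one kernel-verified Lean document; each statement's English description precedes it below -/
import Mathlib

section
/- Let f_1,…,f_ℓ, g ∈ k⟨x_1,…,x_d⟩ be nonzero. Then the following are equivalent: (i) for every n ≥ 1 and every X ∈ M_n(k)^d, if det f_j(X) = 0 for all j = 1,…,ℓ then det g(X) = 0; (ii) there exist an index j ∈ {1,…,ℓ} and factorizations f_j = u·p_1⋯p_m and g = u'·q_1⋯q_s, where u, u' ∈ k are nonzero scalars and the p_i and q_t are irreducible elements of k⟨x_1,…,x_d⟩, such that for every i ∈ {1,…,m} there exists t ∈ {1,…,s} with p_i stably associated to q_t. -/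
/-- Evaluation of a noncommutative polynomial at a tuple of `n × n` matrices. -/
noncomputable def ncEval {k : Type*} [CommSemiring k] {d n : ℕ}
    (X : Fin d → Matrix (Fin n) (Fin n) k) (f : FreeAlgebra k (Fin d)) :
    Matrix (Fin n) (Fin n) k :=
  FreeAlgebra.lift k X f

/-- `f` and `g` are stably associated if `diag(f,1) = P ⬝ diag(g,1) ⬝ Q` for some
invertible `2 × 2` matrices `P, Q` over the free algebra. -/
def StablyAssociated {k : Type*} [CommSemiring k] {d : ℕ}
    (f g : FreeAlgebra k (Fin d)) : Prop :=
  ∃ P Q : Matrix (Fin 2) (Fin 2) (FreeAlgebra k (Fin d)),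
    IsUnit P ∧ IsUnit Q ∧
      Matrix.diagonal ![f, 1] = P * Matrix.diagonal ![g, 1] * Q


namespace NCN

section Coeff
variable {k : Type*} [Field k] {X : Type*}

/-- coefficient of a word in a noncommutative polynomial -/
noncomputable def cf (f : FreeAlgebra k X) (w : List X) : k :=
  (FreeAlgebra.equivMonoidAlgebraFreeMonoid (R := k) (X := X) f).coeff (FreeMonoid.ofList w)

lemma cf_ext {f g : FreeAlgebra k X} (h : ∀ w, cf f w = cf g w) : f = g := by
  apply (FreeAlgebra.equivMonoidAlgebraFreeMonoid (R := k) (X := X)).injective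
  ext w
  exact h (FreeMonoid.toList w)

@[simp] lemma cf_zero (w : List X) : cf (0 : FreeAlgebra k X) w = 0 := by simp [cf]

@[simp] lemma cf_add (f g : FreeAlgebra k X) (w : List X) : cf (f + g) w = cf f w + cf g w := by
  simp [cf]

@[simp] lemma cf_smul (a : k) (f : FreeAlgebra k X) (w : List X) : cf (a • f) w = a * cf f w := by
  simp [cf]

lemma cf_sum {ι : Type*} (s : Finset ι) (F : ι → FreeAlgebra k X) (w : List X) :
    cf (∑ i ∈ s, F i) w = ∑ i ∈ s, cf (F i) w := by
  classical
  induction s using Finset.induction_on with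
  | empty => simp
  | insert a s ha ih => simp [Finset.sum_insert ha, ih]

lemma cf_one [DecidableEq X] (w : List X) :
    cf (1 : FreeAlgebra k X) w = if w = [] then 1 else 0 := by
  classical
  simp only [cf, map_one, MonoidAlgebra.one_def, MonoidAlgebra.coeff_single, Finsupp.single_apply]
  by_cases h : w = []
  · subst h; simp
  · rw [if_neg h, if_neg]
    intro h'; apply h
    exact (congrArg FreeMonoid.toList h').symm

lemma cf_mul (f g : FreeAlgebra k X) (w : List X) :
    cf (f * g) w = ∑ i ∈ Finset.range (w.length + 1), cf f (w.take i) * cf g (w.drop i) := by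
  classical
  have key := MonoidAlgebra.coeff_mul_antidiag
    (FreeAlgebra.equivMonoidAlgebraFreeMonoid (R := k) (X := X) f)
    (FreeAlgebra.equivMonoidAlgebraFreeMonoid (R := k) (X := X) g)
    (FreeMonoid.ofList w)
    ((Finset.range (w.length + 1)).image
      fun i => (FreeMonoid.ofList (w.take i), FreeMonoid.ofList (w.drop i)))
    (by
      intro p
      simp only [Finset.mem_image, Finset.mem_range]
      constructor
      · rintro ⟨i, hi, rfl⟩
        simp [← FreeMonoid.ofList_append]
      · intro h
        have h' : FreeMonoid.toList p.1 ++ FreeMonoid.toList p.2 = w := by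
          rw [← FreeMonoid.toList_mul, h]; rfl
        refine ⟨(FreeMonoid.toList p.1).length, ?_, ?_⟩
        · rw [← h']; simp
        · rw [← h']; simp)
  rw [cf, map_mul, key, Finset.sum_image]
  · rfl
  · intro i hi j hj hij
    simp only [Finset.coe_range, Set.mem_Iio] at hi hj
    have := congrArg (fun p => (FreeMonoid.toList p.1).length) hij
    simp at this
    omega

/-- finite support -/
noncomputable def supp (f : FreeAlgebra k X) : Finset (List X) :=
  ((FreeAlgebra.equivMonoidAlgebraFreeMonoid (R := k) (X := X) f).coeff.support).map
    FreeMonoid.toList.toEmbedding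

lemma mem_supp (f : FreeAlgebra k X) (w : List X) : w ∈ supp f ↔ cf f w ≠ 0 := by
  simp only [supp, Finset.mem_map, Finsupp.mem_support_iff, cf]
  constructor
  · rintro ⟨a, ha, rfl⟩; exact ha
  · intro h; exact ⟨_, h, rfl⟩

/-- degree -/
noncomputable def dg (f : FreeAlgebra k X) : ℕ := (supp f).sup List.length

lemma le_dg {f : FreeAlgebra k X} {w : List X} (h : cf f w ≠ 0) : w.length ≤ dg f :=
  Finset.le_sup (f := List.length) ((mem_supp f w).2 h)

lemma cf_eq_zero {f : FreeAlgebra k X} {w : List X} (h : dg f < w.length) : cf f w = 0 := by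
  by_contra h'
  exact absurd (le_dg h') (by omega)

lemma supp_nonempty {f : FreeAlgebra k X} (hf : f ≠ 0) : (supp f).Nonempty := by
  by_contra h
  apply hf
  apply cf_ext
  intro w
  by_contra h'
  exact h ⟨w, (mem_supp f w).2 (by simpa using h')⟩

lemma exists_top {f : FreeAlgebra k X} (hf : f ≠ 0) : ∃ w, cf f w ≠ 0 ∧ w.length = dg f := by
  obtain ⟨w, hw, h⟩ := Finset.exists_mem_eq_sup (supp f) (supp_nonempty hf) List.length
  exact ⟨w, (mem_supp f w).1 hw, h.symm⟩

lemma dg_lt {f : FreeAlgebra k X} {n : ℕ} (hf : f ≠ 0) (h : ∀ w, n ≤ w.length → cf f w = 0) :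
    dg f < n := by
  obtain ⟨w, hw, hl⟩ := exists_top hf
  by_contra h'
  exact hw (h w (by omega))

lemma exists_of_fin {c : List X → k} (s : Finset (List X)) (h : ∀ w, c w ≠ 0 → w ∈ s) :
    ∃ f : FreeAlgebra k X, ∀ w, cf f w = c w := by
  classical
  refine ⟨(FreeAlgebra.equivMonoidAlgebraFreeMonoid (R := k) (X := X)).symm
    (MonoidAlgebra.ofCoeff (Finsupp.onFinset (s.map FreeMonoid.ofList.toEmbedding)
      (fun w => c (FreeMonoid.toList w)) ?_)), ?_⟩
  · intro a ha
    simp only [Finset.mem_map]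
    exact ⟨_, h _ ha, rfl⟩
  · intro w
    simp [cf]

/-- right transduction by a word -/
lemma exists_tr (f : FreeAlgebra k X) (w : List X) :
    ∃ h : FreeAlgebra k X, ∀ v, cf h v = cf f (v ++ w) := by
  classical
  apply exists_of_fin ((supp f).image (fun u => u.take (u.length - w.length)))
  intro v hv
  refine Finset.mem_image.2 ⟨v ++ w, (mem_supp _ _).2 hv, ?_⟩
  simp

lemma cf_mul_top {f g : FreeAlgebra k X} {u v : List X} (hu : u.length = dg f)
    (hv : v.length = dg g) : cf (f * g) (u ++ v) = cf f u * cf g v := by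
  rw [cf_mul, Finset.sum_eq_single u.length]
  · simp
  · intro i hi hne
    simp only [Finset.mem_range, List.length_append] at hi
    rcases lt_or_gt_of_ne hne with h | h
    · rw [cf_eq_zero (f := g), mul_zero]
      simp; omega
    · rw [cf_eq_zero (f := f), zero_mul]
      simp; omega
  · simp

lemma cf_mul_eq_zero {f g : FreeAlgebra k X} {w : List X} (h : dg f + dg g < w.length) :
    cf (f * g) w = 0 := by
  rw [cf_mul]
  apply Finset.sum_eq_zero
  intro i hi
  simp only [Finset.mem_range] at hi
  by_cases h' : dg f < i
  · rw [cf_eq_zero (f := f), zero_mul]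
    simp; omega
  · rw [cf_eq_zero (f := g), mul_zero]
    simp; omega

lemma dg_mul {f g : FreeAlgebra k X} (hf : f ≠ 0) (hg : g ≠ 0) : dg (f * g) = dg f + dg g := by
  apply le_antisymm
  · have : dg (f * g) < dg f + dg g + 1 := by
      apply dg_lt (mul_ne_zero hf hg)
      intro w hw
      exact cf_mul_eq_zero (by omega)
    omega
  · obtain ⟨u, hu, hul⟩ := exists_top hf
    obtain ⟨v, hv, hvl⟩ := exists_top hg
    have : cf (f * g) (u ++ v) ≠ 0 := by
      rw [cf_mul_top hul hvl]; exact mul_ne_zero hu hv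
    have := le_dg this
    simp at this
    omega

lemma dg_one : dg (1 : FreeAlgebra k X) = 0 := by
  classical
  obtain ⟨w, hw, hl⟩ := exists_top (one_ne_zero (α := FreeAlgebra k X))
  rw [cf_one] at hw
  have : w = [] := by by_contra h; simp [h] at hw
  rw [← hl, this]; rfl

lemma eq_algebraMap_of_dg {f : FreeAlgebra k X} (h : dg f = 0) :
    f = algebraMap k _ (cf f []) := by
  classical
  rw [Algebra.algebraMap_eq_smul_one]
  apply cf_ext
  intro w
  rw [cf_smul, cf_one]
  by_cases hw : w = []
  · simp [hw]
  · rw [if_neg hw, cf_eq_zero]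
    · simp
    · rw [h]; exact List.length_pos_iff.2 hw

lemma isUnit_iff_dg {f : FreeAlgebra k X} (hf : f ≠ 0) : IsUnit f ↔ dg f = 0 := by
  constructor
  · rintro ⟨u, rfl⟩
    have h := u.mul_inv
    have := dg_mul (f := (u : FreeAlgebra k X)) (g := (↑u⁻¹ : FreeAlgebra k X))
      (Units.ne_zero _) (Units.ne_zero _)
    rw [h, dg_one] at this
    omega
  · intro h
    have h1 := eq_algebraMap_of_dg h
    rw [h1]
    have : cf f [] ≠ 0 := by
      intro h2; rw [h2, map_zero] at h1; exact hf h1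
    exact (IsUnit.mk0 _ this).map (algebraMap k (FreeAlgebra k X))

/-- existence of factorizations -/
lemma exists_factor (f : FreeAlgebra k X) (hf : f ≠ 0) :
    ∃ (u : k) (ps : List (FreeAlgebra k X)), u ≠ 0 ∧ (∀ p ∈ ps, Irreducible p) ∧
      f = algebraMap k _ u * ps.prod := by
  induction hn : dg f using Nat.strong_induction_on generalizing f with
  | _ n ih =>
    subst hn
    by_cases hu : IsUnit f
    · have h := eq_algebraMap_of_dg ((isUnit_iff_dg hf).1 hu)
      refine ⟨cf f [], [], ?_, by simp, by simpa using h⟩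
      intro h2; rw [h2, map_zero] at h; exact hf h
    · by_cases hi : Irreducible f
      · exact ⟨1, [f], one_ne_zero, by simpa using hi, by simp⟩
      · rw [irreducible_iff] at hi
        push Not at hi
        obtain ⟨a, b, rfl, ha, hb⟩ := hi hu
        have ha0 : a ≠ 0 := left_ne_zero_of_mul hf
        have hb0 : b ≠ 0 := right_ne_zero_of_mul hf
        have hd := dg_mul ha0 hb0
        rw [isUnit_iff_dg ha0] at ha
        rw [isUnit_iff_dg hb0] at hb
        obtain ⟨u, ps, h1, h2, h3⟩ := ih (dg a) (by omega) a ha0 rfl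
        obtain ⟨v, qs, h4, h5, h6⟩ := ih (dg b) (by omega) b hb0 rfl
        refine ⟨u * v, ps ++ qs, mul_ne_zero h1 h4, ?_, ?_⟩
        · intro p hp
          rcases List.mem_append.1 hp with hp | hp
          · exact h2 p hp
          · exact h5 p hp
        · rw [List.prod_append, map_mul, h3, h6]
          rw [mul_assoc, mul_assoc, ← mul_assoc ps.prod, ← Algebra.commutes v ps.prod, mul_assoc]

/-- The weak algorithm reduction step. -/
lemma weak_step {n : Type*} [Fintype n] (c d : n → FreeAlgebra k X)
    (h1 : ∑ j, c j * d j = 1) :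
    ∃ i, c i ≠ 0 ∧ (dg (c i) = 0 ∨ ∃ (a : k) (h : n → FreeAlgebra k X), a ≠ 0 ∧
      h i = algebraMap k _ a ∧ (∑ j, c j * h j = 0 ∨ dg (∑ j, c j * h j) < dg (c i))) := by
  classical
  let S : Finset n := Finset.univ.filter (fun j => c j ≠ 0 ∧ d j ≠ 0)
  have hS : S.Nonempty := by
    by_contra hS
    rw [Finset.not_nonempty_iff_eq_empty] at hS
    have : ∑ j, c j * d j = 0 := by
      apply Finset.sum_eq_zero
      intro j _
      by_contra hj
      have : j ∈ S := by
        simp only [S, Finset.mem_filter, Finset.mem_univ, true_and]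
        exact ⟨left_ne_zero_of_mul hj, right_ne_zero_of_mul hj⟩
      simp [hS] at this
    rw [this] at h1
    exact zero_ne_one h1
  obtain ⟨i0, hi0, he0⟩ := Finset.exists_max_image S (fun j => dg (c j) + dg (d j)) hS
  let e := dg (c i0) + dg (d i0)
  let S' := S.filter (fun j => dg (c j) + dg (d j) = e)
  have hS' : S'.Nonempty := ⟨i0, by simp [S', hi0, e]⟩
  obtain ⟨i, hi, hmax⟩ := Finset.exists_max_image S' (fun j => dg (c j)) hS'
  simp only [S', S, Finset.mem_filter, Finset.mem_univ, true_and] at hi hmax he0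
  obtain ⟨⟨hci, hdi⟩, hie⟩ := hi
  refine ⟨i, hci, ?_⟩
  by_cases h0 : e = 0
  · left; omega
  right
  obtain ⟨w, hw, hwl⟩ := exists_top hdi
  choose h hh using fun j => exists_tr (d j) w
  refine ⟨cf (d i) w, h, hw, ?_, ?_⟩
  · have hdh : dg (h i) = 0 := by
      by_cases hz : h i = 0
      · rw [hz]; simp [dg, supp]
      · have : dg (h i) < 1 := by
          apply dg_lt hz
          intro v hv
          rw [hh, cf_eq_zero]
          simp; omega
        omega
    rw [eq_algebraMap_of_dg hdh, hh]; rfl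
  · by_cases hz : ∑ j, c j * h j = 0
    · left; exact hz
    right
    apply dg_lt hz
    intro v hv
    have hone : cf (∑ j, c j * d j) (v ++ w) = 0 := by
      rw [h1, cf_one, if_neg]
      intro hvw
      have := congrArg List.length hvw
      simp only [List.length_append, List.length_nil] at this
      omega
    rw [cf_sum] at hone ⊢
    rw [← hone]
    apply Finset.sum_congr rfl
    intro j _
    by_cases hcj : c j = 0
    · simp [hcj]
    by_cases hdj : d j = 0
    · have : h j = 0 := by
        apply cf_ext; intro u; rw [hh, hdj]; simp
      simp [hdj, this]
    have hje := he0 j ⟨hcj, hdj⟩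
    by_cases hjn : dg (c j) ≤ dg (c i)
    · rw [cf_mul, cf_mul]
      symm
      rw [List.length_append, show v.length + w.length + 1 = (v.length + 1) + w.length by omega,
        Finset.sum_range_add]
      have : ∑ x ∈ Finset.range w.length, cf (c j) (List.take (v.length + 1 + x) (v ++ w)) *
          cf (d j) (List.drop (v.length + 1 + x) (v ++ w)) = 0 := by
        apply Finset.sum_eq_zero
        intro x hx
        rw [Finset.mem_range] at hx
        rw [cf_eq_zero (f := c j), zero_mul]
        simp; omega
      rw [this, add_zero]
      apply Finset.sum_congr rfl
      intro x hx
      rw [Finset.mem_range] at hx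
      rw [hh, List.take_append_of_le_length (by omega), List.drop_append_of_le_length (by omega)]
    · have hlt : dg (c j) + dg (d j) < e := by
        rcases lt_or_eq_of_le hje with h | h
        · exact h
        · exact absurd (hmax j ⟨⟨hcj, hdj⟩, h⟩) hjn
      rw [cf_mul_eq_zero (f := c j) (g := d j) (by simp; omega)]
      by_cases hz : h j = 0
      · simp [hz]
      · apply cf_mul_eq_zero
        obtain ⟨u, hu, hul⟩ := exists_top hz
        rw [hh] at hu
        have := le_dg hu
        simp at this
        omega

end Coeff
end NCN

set_option linter.unusedSimpArgs false
namespace NCN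
open Matrix

section HE
variable {R : Type*} [Ring R]

/-- homotopy equivalence of square matrices seen as two-term complexes
(a convenient form of stable association) -/
def HE {m n : Type} [Fintype m] [Fintype n] [DecidableEq m] [DecidableEq n]
    (A : Matrix m m R) (B : Matrix n n R) : Prop :=
  ∃ (a : Matrix m n R) (a' : Matrix n m R) (b : Matrix m n R) (b' : Matrix n m R)
    (s : Matrix m m R) (s' : Matrix n n R),
    a * B = A * b ∧ a' * A = B * b' ∧ a * a' + A * s = 1 ∧ a' * a + B * s' = 1 ∧
    b * b' + s * A = 1 ∧ b' * b + s' * B = 1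

variable {m n l : Type} [Fintype m] [Fintype n] [Fintype l]
  [DecidableEq m] [DecidableEq n] [DecidableEq l]

lemma HE.symm {A : Matrix m m R} {B : Matrix n n R} (h : HE A B) : HE B A := by
  obtain ⟨a, a', b, b', s, s', h1, h2, h3, h4, h5, h6⟩ := h
  exact ⟨a', a, b', b, s', s, h2, h1, h4, h3, h6, h5⟩

lemma HE.trans {A : Matrix m m R} {B : Matrix n n R} {C : Matrix l l R}
    (h : HE A B) (h' : HE B C) : HE A C := by
  obtain ⟨a, a', b, b', s, s', h1, h2, h3, h4, h5, h6⟩ := h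
  obtain ⟨c, c', d, d', t, t', g1, g2, g3, g4, g5, g6⟩ := h'
  refine ⟨a * c, c' * a', b * d, d' * b', s + b * t * a', t' + d' * s' * c, ?_, ?_, ?_, ?_, ?_, ?_⟩
  · rw [Matrix.mul_assoc, g1, ← Matrix.mul_assoc, h1, Matrix.mul_assoc]
  · rw [Matrix.mul_assoc, h2, ← Matrix.mul_assoc, g2, Matrix.mul_assoc]
  · have e : a * c * (c' * a') = a * (c * c') * a' := by simp only [Matrix.mul_assoc]
    rw [e, eq_sub_of_add_eq g3, ← h3]
    have e2 : A * (b * t * a') = a * B * t * a' := by rw [h1]; simp only [Matrix.mul_assoc]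
    rw [Matrix.mul_add, e2]
    simp only [Matrix.mul_sub, Matrix.sub_mul, Matrix.mul_assoc, Matrix.mul_one, Matrix.one_mul]
    abel
  · have e : c' * a' * (a * c) = c' * (a' * a) * c := by simp only [Matrix.mul_assoc]
    rw [e, eq_sub_of_add_eq h4, ← g4]
    have e2 : C * (d' * s' * c) = c' * B * s' * c := by rw [g2]; simp only [Matrix.mul_assoc]
    rw [Matrix.mul_add, e2]
    simp only [Matrix.mul_sub, Matrix.sub_mul, Matrix.mul_assoc, Matrix.mul_one, Matrix.one_mul]
    abel
  · have e : b * d * (d' * b') = b * (d * d') * b' := by simp only [Matrix.mul_assoc]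
    rw [e, eq_sub_of_add_eq g5, ← h5]
    have e2 : (b * t * a') * A = b * t * (B * b') := by rw [← h2]; simp only [Matrix.mul_assoc]
    rw [Matrix.add_mul, e2]
    simp only [Matrix.mul_sub, Matrix.sub_mul, Matrix.mul_assoc, Matrix.mul_one, Matrix.one_mul]
    abel
  · have e : d' * b' * (b * d) = d' * (b' * b) * d := by simp only [Matrix.mul_assoc]
    rw [e, eq_sub_of_add_eq h6, ← g6]
    have e2 : (d' * s' * c) * C = d' * s' * (B * d) := by rw [← g1]; simp only [Matrix.mul_assoc]
    rw [Matrix.add_mul, e2]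
    simp only [Matrix.mul_sub, Matrix.sub_mul, Matrix.mul_assoc, Matrix.mul_one, Matrix.one_mul]
    abel

lemma isUnit_of_two {M : Type*} [Monoid M] {a b : M} (h : a * b = 1) (h' : b * a = 1) : IsUnit a :=
  ⟨⟨a, b, h, h'⟩, rfl⟩

lemma HE.isUnit {A : Matrix m m R} {B : Matrix n n R} (h : HE A B) (hB : IsUnit B) : IsUnit A := by
  obtain ⟨a, a', b, b', s, s', h1, h2, h3, h4, h5, h6⟩ := h
  obtain ⟨⟨B, V, hV, hV'⟩, rfl⟩ := hB
  simp only at *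
  apply isUnit_of_two (b := b * V * a' + s)
  · rw [Matrix.mul_add, ← Matrix.mul_assoc, ← Matrix.mul_assoc, ← h1, Matrix.mul_assoc a, hV,
      Matrix.mul_one, h3]
  · rw [Matrix.add_mul, Matrix.mul_assoc, h2, Matrix.mul_assoc, ← Matrix.mul_assoc V, hV',
      Matrix.one_mul, h5]

lemma HE.isUnit_iff {A : Matrix m m R} {B : Matrix n n R} (h : HE A B) : IsUnit A ↔ IsUnit B :=
  ⟨h.symm.isUnit, h.isUnit⟩

lemma HE.map {S : Type*} [Ring S] (φ : R →+* S) {A : Matrix m m R} {B : Matrix n n R}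
    (h : HE A B) : HE (A.map φ) (B.map φ) := by
  obtain ⟨a, a', b, b', s, s', h1, h2, h3, h4, h5, h6⟩ := h
  refine ⟨a.map φ, a'.map φ, b.map φ, b'.map φ, s.map φ, s'.map φ, ?_, ?_, ?_, ?_, ?_, ?_⟩
  · simp only [← Matrix.map_mul, h1]
  · simp only [← Matrix.map_mul, h2]
  · rw [← Matrix.map_mul, ← Matrix.map_mul, ← Matrix.map_add φ (map_add φ), h3]
    exact Matrix.map_one φ (map_zero φ) (map_one φ)
  · rw [← Matrix.map_mul, ← Matrix.map_mul, ← Matrix.map_add φ (map_add φ), h4]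
    exact Matrix.map_one φ (map_zero φ) (map_one φ)
  · rw [← Matrix.map_mul, ← Matrix.map_mul, ← Matrix.map_add φ (map_add φ), h5]
    exact Matrix.map_one φ (map_zero φ) (map_one φ)
  · rw [← Matrix.map_mul, ← Matrix.map_mul, ← Matrix.map_add φ (map_add φ), h6]
    exact Matrix.map_one φ (map_zero φ) (map_one φ)

lemma HE_equiv {A : Matrix m m R} {B : Matrix n n R} {P : Matrix m n R} {P' : Matrix n m R}
    {Q : Matrix n m R} {Q' : Matrix m n R} (hP : P * P' = 1) (hP' : P' * P = 1)
    (hQ : Q * Q' = 1) (hQ' : Q' * Q = 1) (h : A = P * B * Q) : HE A B := by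
  refine ⟨P, P', Q', Q, 0, 0, ?_, ?_, by simpa using hP, by simpa using hP', by simpa using hQ',
    by simpa using hQ⟩
  · rw [h, Matrix.mul_assoc, hQ, Matrix.mul_one]
  · rw [h, Matrix.mul_assoc P, ← Matrix.mul_assoc P', hP', Matrix.one_mul]

lemma HE_block_left {B : Matrix m m R} {C : Matrix m n R} {D : Matrix n n R} (hD : IsUnit D) :
    HE (fromBlocks B C 0 D) B := by
  obtain ⟨⟨D, V, hV, hV'⟩, rfl⟩ := hD
  simp only
  refine ⟨fromRows 1 0, fromCols 1 (-(C * V)), fromRows 1 0, fromCols 1 0,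
    fromBlocks 0 0 0 V, 0, ?_, ?_, ?_, ?_, ?_, ?_⟩
  · ext (i | i) j <;> simp [fromBlocks_mul_fromRows, fromRows_mul]
  · rw [fromCols_mul_fromBlocks, mul_fromCols]
    simp [Matrix.mul_assoc, hV']
  · rw [fromRows_mul_fromCols, fromBlocks_multiply]
    simp [fromBlocks_add, hV]
  · simp [fromCols_mul_fromRows]
  · rw [fromRows_mul_fromCols, fromBlocks_multiply]
    simp [fromBlocks_add, hV']
  · simp [fromCols_mul_fromRows]

lemma HE_block_right {B : Matrix m m R} {C : Matrix m n R} {D : Matrix n n R} (hB : IsUnit B) :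
    HE (fromBlocks B C 0 D) D := by
  obtain ⟨⟨B, V, hV, hV'⟩, rfl⟩ := hB
  simp only
  refine ⟨fromRows 0 1, fromCols 0 1, fromRows (-(V * C)) 1, fromCols 0 1,
    fromBlocks V 0 0 0, 0, ?_, ?_, ?_, ?_, ?_, ?_⟩
  · rw [fromBlocks_mul_fromRows, fromRows_mul]
    simp [← Matrix.mul_assoc, hV]
  · rw [fromCols_mul_fromBlocks, mul_fromCols]
    simp
  · rw [fromRows_mul_fromCols, fromBlocks_multiply]
    simp [fromBlocks_add, hV]
  · simp [fromCols_mul_fromRows]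
  · rw [fromRows_mul_fromCols, fromBlocks_multiply]
    simp [fromBlocks_add, hV']
  · simp [fromCols_mul_fromRows]

lemma isUnit_block {B : Matrix m m R} {C : Matrix m n R} {D : Matrix n n R} (hB : IsUnit B)
    (hD : IsUnit D) : IsUnit (fromBlocks B C 0 D) := (HE_block_left hD).isUnit hB

/-- element as a 1×1 matrix -/
def pm (p : R) : Matrix Unit Unit R := Matrix.of fun _ _ => p

lemma isUnit_pm {p : R} : IsUnit (pm p) ↔ IsUnit p := by
  constructor
  · rintro ⟨⟨A, V, hV, hV'⟩, h⟩
    simp only at h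
    subst h
    apply isUnit_of_two (b := V () ())
    · simpa [Matrix.mul_apply, pm] using congrFun (congrFun hV ()) ()
    · simpa [Matrix.mul_apply, pm] using congrFun (congrFun hV' ()) ()
  · rintro ⟨⟨A, V, hV, hV'⟩, rfl⟩
    apply isUnit_of_two (b := pm V)
    · ext i j; simp [pm, Matrix.mul_apply, hV]
    · ext i j; simp [pm, Matrix.mul_apply, hV']

end HE

section Herm
variable {k : Type*} [Field k] {X : Type*}

local notation "R" => FreeAlgebra k X

lemma updRow_mul {n : Type} [Fintype n] [DecidableEq n] (i : n) (r r' : n → R)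
    (h : ∀ q, r i * r' q + (if q = i then 0 else r q) = if q = i then 1 else 0) :
    Matrix.updateRow (1 : Matrix n n R) i r * Matrix.updateRow 1 i r' = 1 := by
  ext p q
  rw [Matrix.mul_apply]
  by_cases hp : p = i
  · subst hp
    rw [← Finset.add_sum_erase _ _ (Finset.mem_univ p)]
    have : ∑ x ∈ Finset.univ.erase p, updateRow (1 : Matrix n n R) p r p x *
        updateRow (1 : Matrix n n R) p r' x q = if q = p then 0 else r q := by
      rw [Finset.sum_congr rfl (g := fun x => if x = q then r x else 0)]
      · rw [Finset.sum_ite_eq']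
        by_cases hq : q = p <;> simp [hq]
      · intro x hx
        rw [Finset.mem_erase] at hx
        simp [updateRow_ne hx.1, Matrix.one_apply]
    rw [this]
    simp only [updateRow_self]
    rw [h, Matrix.one_apply]
    by_cases hq : q = p
    · simp [hq]
    · simp [hq, Ne.symm hq]
  · simp only [updateRow_ne hp]
    rw [Finset.sum_eq_single p]
    · simp [updateRow_ne hp]
    · intro b _ hb
      simp [Matrix.one_apply, hb.symm]
    · simp

lemma updCol_mul {n : Type} [Fintype n] [DecidableEq n] (i : n) (r r' : n → R)
    (h : ∀ q, r q * r' i + (if q = i then 0 else r' q) = if q = i then 1 else 0) :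
    Matrix.updateCol (1 : Matrix n n R) i r * Matrix.updateCol 1 i r' = 1 := by
  ext q p
  rw [Matrix.mul_apply]
  by_cases hp : p = i
  · subst hp
    rw [← Finset.add_sum_erase _ _ (Finset.mem_univ p)]
    have : ∑ x ∈ Finset.univ.erase p, updateCol (1 : Matrix n n R) p r q x *
        updateCol (1 : Matrix n n R) p r' x p = if q = p then 0 else r' q := by
      rw [Finset.sum_congr rfl (g := fun x => if x = q then r' x else 0)]
      · rw [Finset.sum_ite_eq']
        by_cases hq : q = p <;> simp [hq]
      · intro x hx
        rw [Finset.mem_erase] at hx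
        simp [updateCol_ne hx.1, Matrix.one_apply, eq_comm]
    rw [this]
    simp only [updateCol_self]
    rw [h, Matrix.one_apply]
  · rw [Finset.sum_eq_single p]
    · simp [updateCol_ne hp]
    · intro b _ hb
      simp [updateCol_ne hp, Matrix.one_apply, hb]
    · simp

lemma am_mul_inv (a : k) (ha : a ≠ 0) : algebraMap k R a * algebraMap k R a⁻¹ = 1 := by
  rw [← map_mul, mul_inv_cancel₀ ha, map_one]

lemma am_inv_mul (a : k) (ha : a ≠ 0) : algebraMap k R a⁻¹ * algebraMap k R a = 1 := by
  rw [← map_mul, inv_mul_cancel₀ ha, map_one]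

lemma row_lemma {n : Type} [Fintype n] [DecidableEq n] (c d : n → R) (h : ∑ j, c j * d j = 1) :
    ∃ (i : n) (U U' : Matrix n n R), U * U' = 1 ∧ U' * U = 1 ∧ c ᵥ* U = Pi.single i 1 := by
  classical
  induction hN : (∑ j, if c j = 0 then 0 else dg (c j) + 1) using Nat.strong_induction_on
    generalizing c d with
  | _ N ih =>
    obtain ⟨i, hci, h' | ⟨a, g, ha, hg, hlt⟩⟩ := weak_step c d h
    · have hc := eq_algebraMap_of_dg h'
      set a := cf (c i) [] with hadef
      have ha : a ≠ 0 := by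
        intro h2; rw [h2, map_zero] at hc; exact hci hc
      let r' : n → R := fun q => if q = i then algebraMap k R a⁻¹ else - (algebraMap k R a⁻¹ * c q)
      have e1 : Matrix.updateRow (1 : Matrix n n R) i c * Matrix.updateRow 1 i r' = 1 := by
        apply updRow_mul
        intro q
        by_cases hq : q = i
        · simp [r', hq, hc, am_mul_inv a ha]
        · simp only [r', hq, if_false]
          rw [hc, mul_neg, ← mul_assoc, am_mul_inv a ha]; simp
      have e2 : Matrix.updateRow (1 : Matrix n n R) i r' * Matrix.updateRow 1 i c = 1 := by
        apply updRow_mul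
        intro q
        by_cases hq : q = i
        · simp [r', hq, hc, am_inv_mul a ha]
        · simp [r', hq]
      refine ⟨i, _, _, e2, e1, ?_⟩
      have : c = (Pi.single i 1 : n → R) ᵥ* Matrix.updateRow (1 : Matrix n n R) i c := by
        ext q; simp
      conv_lhs => rw [this]
      rw [vecMul_vecMul, e1, vecMul_one]
    · let g' : n → R := fun q => if q = i then algebraMap k R a⁻¹ else - (g q * algebraMap k R a⁻¹)
      have e1 : Matrix.updateCol (1 : Matrix n n R) i g * Matrix.updateCol 1 i g' = 1 := by
        apply updCol_mul
        intro q
        by_cases hq : q = i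
        · simp [g', hq, hg, am_mul_inv a ha]
        · simp [g', hq]
      have e2 : Matrix.updateCol (1 : Matrix n n R) i g' * Matrix.updateCol 1 i g = 1 := by
        apply updCol_mul
        intro q
        by_cases hq : q = i
        · simp [g', hq, hg, am_inv_mul a ha]
        · simp only [g', hq, if_false]
          rw [hg, neg_mul, mul_assoc, am_inv_mul a ha]; simp
      set V := Matrix.updateCol (1 : Matrix n n R) i g
      set V' := Matrix.updateCol (1 : Matrix n n R) i g'
      have hcV : ∀ q, (c ᵥ* V) q = if q = i then ∑ j, c j * g j else c q := by
        intro q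
        by_cases hq : q = i
        · subst hq; simp [V, vecMul, dotProduct]
        · simp only [hq, if_false, vecMul, dotProduct, V, updateCol_ne hq]
          simp [Matrix.one_apply]
      obtain ⟨i', U, U', h1, h2, h3⟩ := ih (∑ j, if (c ᵥ* V) j = 0 then 0 else dg ((c ᵥ* V) j) + 1)
        (by
          rw [← hN]
          apply Finset.sum_lt_sum
          · intro j _
            rw [hcV]
            by_cases hj : j = i
            · subst hj
              simp only [if_true, hci, if_false]
              rcases hlt with h | h
              · simp [h]
              · split_ifs <;> omega
            · simp [hj]
          · refine ⟨i, Finset.mem_univ _, ?_⟩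
            rw [hcV]
            simp only [if_true, hci, if_false]
            rcases hlt with h | h
            · simp [h]
            · split_ifs <;> omega) (c ᵥ* V) (V' *ᵥ d)
        (by
          change (c ᵥ* V) ⬝ᵥ (V' *ᵥ d) = 1
          rw [← dotProduct_mulVec, mulVec_mulVec, e1, one_mulVec]
          exact h) rfl
      refine ⟨i', V * U, U' * V', ?_, ?_, ?_⟩
      · rw [Matrix.mul_assoc, ← Matrix.mul_assoc U, h1, Matrix.one_mul, e1]
      · rw [Matrix.mul_assoc, ← Matrix.mul_assoc V', e2, Matrix.one_mul, h2]
      · rw [← vecMul_vecMul, h3]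

lemma row_split {n : Type} [Fintype n] [DecidableEq n] (c : Matrix Unit n R) (d : Matrix n Unit R)
    (h : c * d = 1) :
    ∃ (n' : Type) (_ : Fintype n') (_ : DecidableEq n') (K : Matrix n n' R) (Λ : Matrix n' n R)
      (u : Matrix n Unit R), Fintype.card n = Fintype.card n' + 1 ∧ c * K = 0 ∧ Λ * K = 1 ∧
      K * Λ + u * c = 1 := by
  obtain ⟨i, U, U', h1, h2, h3⟩ := row_lemma (c ()) (fun j => d j ()) (by
    simpa [Matrix.mul_apply] using congrFun (congrFun h ()) ())
  have hrow : ∀ q, U' i q = c () q := by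
    intro q
    have : c () = (Pi.single i 1) ᵥ* U' := by
      rw [← h3, vecMul_vecMul, h1, vecMul_one]
    rw [this]; simp
  refine ⟨{j // j ≠ i}, inferInstance, inferInstance, U.submatrix id Subtype.val,
    U'.submatrix Subtype.val id, U.submatrix id (fun _ => i), ?_, ?_, ?_, ?_⟩
  · have := Fintype.card_pos_iff.2 ⟨i⟩
    simp; omega
  · ext x j
    have := congrFun h3 j.1
    simp only [vecMul, dotProduct] at this
    simp only [Matrix.mul_apply, Matrix.submatrix_apply, id, Matrix.zero_apply]
    rw [this]
    simp [j.2]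
  · ext x j
    have := congrFun (congrFun h2 x.1) j.1
    rw [Matrix.mul_apply] at this
    simp only [Matrix.mul_apply, Matrix.submatrix_apply, id]
    rw [this]
    simp [Matrix.one_apply, Subtype.ext_iff]
  · ext x j
    have := congrFun (congrFun h1 x) j
    rw [Matrix.mul_apply] at this
    rw [← this]
    simp only [Matrix.add_apply, Matrix.mul_apply, Matrix.submatrix_apply, id, Finset.univ_unique, Finset.sum_singleton]
    rw [← Finset.sum_erase_add _ _ (Finset.mem_univ i), hrow]
    congr 1
    rw [← Finset.sum_subtype (Finset.univ.erase i) (p := fun j => j ≠ i) (by simp)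
      (f := fun t => U x t * U' t j)]

lemma hermite (a : ℕ) : ∀ {n : Type} [Fintype n] [DecidableEq n] (C : Matrix (Fin a) n R)
    (E : Matrix n (Fin a) R), C * E = 1 →
    ∃ (r : Type) (_ : Fintype r) (_ : DecidableEq r) (K : Matrix n r R) (Λ : Matrix r n R),
      Fintype.card n = a + Fintype.card r ∧ C * K = 0 ∧ Λ * K = 1 ∧ E * C + K * Λ = 1 := by
  induction a with
  | zero =>
    intro n _ _ C E h
    refine ⟨n, inferInstance, inferInstance, 1, 1, by simp, ?_, by simp, ?_⟩
    · ext i; exact i.elim0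
    · ext i j; simp [Matrix.mul_apply]
  | succ a ih =>
    intro n _ _ C E h
    let c : Matrix Unit n R := C.submatrix (fun _ => 0) id
    let C2 : Matrix (Fin a) n R := C.submatrix Fin.succ id
    let e : Matrix n Unit R := E.submatrix id (fun _ => 0)
    let E2 : Matrix n (Fin a) R := E.submatrix id Fin.succ
    have hce : c * e = 1 := by
      ext i j
      have := congrFun (congrFun h 0) 0
      simpa [c, e, Matrix.mul_apply] using this
    have hcE : c * E2 = 0 := by
      ext i j
      have := congrFun (congrFun h 0) j.succ
      simpa [c, E2, Matrix.mul_apply, Matrix.one_apply, (Fin.succ_ne_zero j).symm] using this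
    have hCE : C2 * E2 = 1 := by
      ext i j
      have := congrFun (congrFun h i.succ) j.succ
      simpa [C2, E2, Matrix.mul_apply, Matrix.one_apply] using this
    obtain ⟨n', _, _, K0, Λ0, u, hcard, hK0, hΛK, hsum⟩ := row_split c e hce
    obtain ⟨r, _, _, K1, Λ1, hcard1, hK1, hΛK1, hsum1⟩ := ih (C2 * K0) (Λ0 * E2) (by
      rw [Matrix.mul_assoc, ← Matrix.mul_assoc K0, eq_sub_of_add_eq hsum, Matrix.sub_mul,
        Matrix.mul_assoc u, hcE]
      simp [hCE])
    have hCK : C * (K0 * K1) = 0 := by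
      ext i j
      refine Fin.cases ?_ (fun i => ?_) i
      · have : c * (K0 * K1) = 0 := by rw [← Matrix.mul_assoc, hK0, Matrix.zero_mul]
        exact congrFun (congrFun this ()) j
      · have : C2 * (K0 * K1) = 0 := by rw [← Matrix.mul_assoc, hK1]
        exact congrFun (congrFun this i) j
    have hCy : C * (1 - E * C) = 0 := by
      rw [Matrix.mul_sub, ← Matrix.mul_assoc, h]; simp
    set y := 1 - E * C with hy
    have hcy : c * y = 0 := by
      ext i j; exact congrFun (congrFun hCy 0) j
    have hC2y : C2 * y = 0 := by
      ext i j; exact congrFun (congrFun hCy i.succ) j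
    have hyK : K0 * (Λ0 * y) = y := by
      rw [← Matrix.mul_assoc, eq_sub_of_add_eq hsum, Matrix.sub_mul, Matrix.mul_assoc, hcy]; simp
    refine ⟨r, inferInstance, inferInstance, K0 * K1, Λ1 * Λ0 * y, by omega, hCK, ?_, ?_⟩
    · rw [Matrix.mul_assoc, hy, Matrix.sub_mul, Matrix.mul_assoc E, hCK, Matrix.mul_zero, sub_zero,
        Matrix.one_mul, Matrix.mul_assoc, ← Matrix.mul_assoc Λ0, hΛK, Matrix.one_mul, hΛK1]
    · have : K0 * K1 * (Λ1 * Λ0 * y) = y := by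
        have e1 : K0 * K1 * (Λ1 * Λ0 * y) = K0 * ((K1 * Λ1) * (Λ0 * y)) := by
          simp only [Matrix.mul_assoc]
        have e2 : Λ0 * E2 * (C2 * K0) * (Λ0 * y) = 0 := by
          rw [Matrix.mul_assoc, Matrix.mul_assoc C2, hyK, hC2y, Matrix.mul_zero]
        rw [e1, eq_sub_of_add_eq' hsum1, Matrix.sub_mul, e2, Matrix.one_mul, sub_zero, hyK]
      rw [this, hy]; abel

lemma weakly_finite {a : ℕ} {C E : Matrix (Fin a) (Fin a) R} (h : C * E = 1) : E * C = 1 := by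
  obtain ⟨r, _, _, K, Λ, hc, h1, h2, h3⟩ := hermite a C E h
  have : Fintype.card r = 0 := by simp at hc; exact hc
  have := Fintype.card_eq_zero_iff.1 this
  have hK : K * Λ = 0 := by ext i j; simp [Matrix.mul_apply]
  rwa [hK, add_zero] at h3

/-- An irreducible polynomial gives an atomic matrix. -/
lemma atom {p : R} (hp : Irreducible p) {n : ℕ} {L C D : Matrix (Fin n) (Fin n) R}
    (h : HE (pm p) L) (hL : L = C * D) : IsUnit C ∨ IsUnit D := by
  obtain ⟨a, a', b, b', s, s', h1, h2, h3, h4, h5, h6⟩ := h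
  have hright : fromCols a' C * fromRows a (D * s') = 1 := by
    rw [fromCols_mul_fromRows, ← Matrix.mul_assoc, ← hL, h4]
  obtain ⟨r, _, _, K, Λ, hc, g1, g2, g3⟩ := hermite n _ _ hright
  have hr : Fintype.card r = 1 := by simp at hc; omega
  obtain ⟨r0, hr0⟩ := Fintype.card_eq_one_iff.1 hr
  let ur : Unit ≃ r := ⟨fun _ => r0, fun _ => (), fun _ => rfl, fun y => (hr0 y).symm⟩
  obtain ⟨K, Λ, g1, g2, g3⟩ : ∃ (K : Matrix (Unit ⊕ Fin n) Unit R) (Λ : Matrix Unit (Unit ⊕ Fin n) R),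
      fromCols a' C * K = 0 ∧ Λ * K = 1 ∧ fromRows a (D * s') * fromCols a' C + K * Λ = 1 := by
    refine ⟨K.submatrix id ur, Λ.submatrix ur id, ?_, ?_, ?_⟩
    · ext i j; exact congrFun (congrFun g1 i) (ur j)
    · ext i j
      have := congrFun (congrFun g2 (ur i)) (ur j)
      simpa [Matrix.mul_apply, Matrix.one_apply] using this
    · rw [← g3]; congr 1
      exact Matrix.submatrix_mul_equiv K Λ id ur id
  -- components
  let u1 : Matrix Unit Unit R := K.toRows₁
  let u2 : Matrix (Fin n) Unit R := K.toRows₂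
  let l1 : Matrix Unit Unit R := Λ.toCols₁
  let l2 : Matrix Unit (Fin n) R := Λ.toCols₂
  have hK : K = fromRows u1 u2 := (fromRows_toRows K).symm
  have hΛ : Λ = fromCols l1 l2 := (fromCols_toCols Λ).symm
  have hker : fromCols a' C * fromRows (pm p) (-(D * b')) = 0 := by
    rw [fromCols_mul_fromRows, Matrix.mul_neg, ← Matrix.mul_assoc, ← hL, h2]; simp
  let v : Matrix Unit Unit R := Λ * fromRows (pm p) (-(D * b'))
  have hv : fromRows (pm p) (-(D * b')) = K * v := by
    have := congrArg (· * fromRows (pm p) (-(D * b'))) g3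
    simp only [Matrix.add_mul, Matrix.one_mul, Matrix.mul_assoc] at this
    rw [hker, Matrix.mul_zero, zero_add] at this
    exact this.symm
  rw [hK, fromRows_mul] at hv
  obtain ⟨hv1, hv2⟩ := fromRows_inj hv
  have hfac : p = u1 () () * v () () := by
    have := congrFun (congrFun hv1 ()) ()
    simpa [pm, Matrix.mul_apply] using this
  have hpm : ∀ M : Matrix Unit Unit R, M = pm (M () ()) := fun M => by ext i j; rfl
  rcases hp.isUnit_or_isUnit hfac with hu | hu
  · left
    rw [← isUnit_pm, ← hpm] at hu
    obtain ⟨⟨U, U', hU, hU'⟩, e⟩ := hu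
    simp only at e
    rw [e] at hU hU'
    rw [hK, fromCols_mul_fromRows] at g1
    have ha' : a' = C * (-(u2 * U')) := by
      have := congrArg (· * U') g1
      simp only [Matrix.add_mul, Matrix.mul_assoc, hU, Matrix.mul_one, Matrix.zero_mul] at this
      rw [Matrix.mul_neg]
      exact eq_neg_of_add_eq_zero_left this
    have hC : C * (-(u2 * U') * a + D * s') = 1 := by
      rw [Matrix.mul_add, ← Matrix.mul_assoc, ← ha', ← Matrix.mul_assoc, ← hL, h4]
    exact isUnit_of_two hC (weakly_finite hC)
  · right
    rw [← isUnit_pm, ← hpm] at hu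
    obtain ⟨⟨V, V', hV, hV'⟩, e⟩ := hu
    simp only at e
    have hvdef : v = l1 * pm p - l2 * (D * b') := by
      simp only [v]
      rw [hΛ, fromCols_mul_fromRows, Matrix.mul_neg, sub_eq_add_neg]
    have hb : b = V' * (l1 * a * C - l2 + l2 * D * s' * C) * D := by
      have e1 : b = V' * (v * b) := by rw [← Matrix.mul_assoc, ← e, hV', Matrix.one_mul]
      have e2 : v * b = (l1 * a * C - l2 + l2 * D * s' * C) * D := by
        rw [hvdef, Matrix.sub_mul, Matrix.mul_assoc, ← h1, Matrix.mul_assoc, Matrix.mul_assoc,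
          eq_sub_of_add_eq h6, hL]
        simp only [Matrix.mul_assoc, Matrix.mul_sub, Matrix.sub_mul, Matrix.add_mul, Matrix.mul_add,
          Matrix.mul_one]
        abel
      rw [Matrix.mul_assoc, ← e2]; exact e1
    have hD : (b' * (V' * (l1 * a * C - l2 + l2 * D * s' * C)) + s' * C) * D = 1 := by
      rw [Matrix.add_mul, Matrix.mul_assoc b', ← hb, Matrix.mul_assoc, ← hL, h6]
    exact isUnit_of_two (weakly_finite hD) hD

end Herm
end NCN

set_option linter.unusedSimpArgs false
set_option linter.unusedSectionVars false
set_option linter.unnecessarySeqFocus false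
namespace NCN
open Matrix

lemma HE_reindex {S : Type*} [Ring S] {m n : Type} [Fintype m] [Fintype n] [DecidableEq m]
    [DecidableEq n] (e : m ≃ n) (B : Matrix n n S) : HE (B.submatrix e e) B := by
  refine HE_equiv (P := (1 : Matrix _ _ _).submatrix e id) (P' := (1 : Matrix _ _ _).submatrix id e)
      (Q := (1 : Matrix _ _ _).submatrix id e) (Q' := (1 : Matrix _ _ _).submatrix e id) ?_ ?_ ?_ ?_ ?_
  · ext i j; simp [Matrix.mul_apply, Matrix.one_apply]
  · rw [Matrix.submatrix_mul_equiv]; simp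
  · rw [Matrix.submatrix_mul_equiv]; simp
  · ext i j; simp [Matrix.mul_apply, Matrix.one_apply]
  · ext i j; simp [Matrix.mul_apply, Matrix.one_apply]

section SA
variable {k : Type*} [Field k] {d : ℕ}

lemma sa_of_HE {p q : FreeAlgebra k (Fin d)} (hp : p ≠ 0) (hq : q ≠ 0) (h : HE (pm p) (pm q)) :
    StablyAssociated p q := by
  obtain ⟨A, A', B, B', S, S', h1, h2, h3, h4, h5, h6⟩ := h
  have ext1 : ∀ {M N : Matrix Unit Unit (FreeAlgebra k (Fin d))}, M = N → M () () = N () () := by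
    intro M N h; rw [h]
  obtain ⟨a, ha⟩ : ∃ a, a = A () () := ⟨_, rfl⟩
  obtain ⟨a', ha'⟩ : ∃ a, a = A' () () := ⟨_, rfl⟩
  obtain ⟨b, hb⟩ : ∃ a, a = B () () := ⟨_, rfl⟩
  obtain ⟨b', hb'⟩ : ∃ a, a = B' () () := ⟨_, rfl⟩
  obtain ⟨s, hs⟩ : ∃ a, a = S () () := ⟨_, rfl⟩
  obtain ⟨s', hs'⟩ : ∃ a, a = S' () () := ⟨_, rfl⟩
  replace h1 := ext1 h1
  replace h2 := ext1 h2
  replace h3 := ext1 h3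
  replace h4 := ext1 h4
  replace h5 := ext1 h5
  replace h6 := ext1 h6
  simp only [Matrix.mul_apply, Matrix.add_apply, Finset.univ_unique, Finset.sum_singleton, pm,
    Matrix.of_apply, Matrix.one_apply_eq, PUnit.default_eq_unit, ← ha, ← ha', ← hb, ← hb',
    ← hs, ← hs'] at h1 h2 h3 h4 h5 h6
  have e1 : -s' * a' + b' * s = 0 := by
    have : q * (-s' * a' + b' * s) = 0 := by
      calc q * (-s' * a' + b' * s) = -(q * s') * a' + (q * b') * s := by noncomm_ring
        _ = -(1 - a' * a) * a' + a' * (p * s) := by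
          rw [← h2, eq_sub_of_add_eq' h4]; noncomm_ring
        _ = -(1 - a' * a) * a' + a' * (1 - a * a') := by rw [eq_sub_of_add_eq' h3]
        _ = 0 := by noncomm_ring
    exact (mul_eq_zero.1 this).resolve_left hq
  have e2 : s * a - b * s' = 0 := by
    have : p * (s * a - b * s') = 0 := by
      calc p * (s * a - b * s') = (p * s) * a - (p * b) * s' := by noncomm_ring
        _ = (1 - a * a') * a - a * (q * s') := by
          rw [← h1, eq_sub_of_add_eq' h3]; noncomm_ring
        _ = (1 - a * a') * a - a * (1 - a' * a) := by rw [eq_sub_of_add_eq' h4]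
        _ = 0 := by noncomm_ring
    exact (mul_eq_zero.1 this).resolve_left hp
  have hM : !![a, p; -s', b'] * !![a', -q; s, b] = 1 := by
    rw [Matrix.mul_fin_two, Matrix.one_fin_two, h3, e1]
    have : a * -q + p * b = 0 := by rw [← h1]; noncomm_ring
    rw [this]
    have : -s' * -q + b' * b = 1 := by rw [← h6]; noncomm_ring
    rw [this]
  have hM' : !![a', -q; s, b] * !![a, p; -s', b'] = 1 := by
    rw [Matrix.mul_fin_two, Matrix.one_fin_two]
    have t1 : a' * a + -q * -s' = 1 := by rw [← h4]; noncomm_ring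
    have t2 : a' * p + -q * b' = 0 := by rw [h2]; noncomm_ring
    have t3 : s * a + b * -s' = 0 := by rw [← e2]; noncomm_ring
    have t4 : s * p + b * b' = 1 := by rw [← h5]; abel
    rw [t1, t2, t3, t4]
  have hN : !![b, 1; b' * b - 1, b'] * !![b', -1; 1 - b * b', b] = 1 := by
    rw [Matrix.mul_fin_two, Matrix.one_fin_two]
    congr 1
    ext i j; fin_cases i <;> fin_cases j <;> simp <;> noncomm_ring
  have hN' : !![b', -1; 1 - b * b', b] * !![b, 1; b' * b - 1, b'] = 1 := by
    rw [Matrix.mul_fin_two, Matrix.one_fin_two]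
    congr 1
    ext i j; fin_cases i <;> fin_cases j <;> simp <;> noncomm_ring
  have hd : ∀ x : FreeAlgebra k (Fin d), Matrix.diagonal ![x, 1] = !![x, 0; 0, 1] := by
    intro x; ext i j; fin_cases i <;> fin_cases j <;> rfl
  refine ⟨!![a, p; -s', b'], !![b', -1; 1 - b * b', b], isUnit_of_two hM hM',
    isUnit_of_two hN' hN, ?_⟩
  have key : !![a, p; -s', b'] * Matrix.diagonal ![q, 1] =
      Matrix.diagonal ![p, 1] * !![b, 1; b' * b - 1, b'] := by
    rw [hd, hd, Matrix.mul_fin_two, Matrix.mul_fin_two]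
    have : -s' * q = b' * b - 1 := by rw [← h6]; noncomm_ring
    simp [h1, this]
  rw [key, Matrix.mul_assoc, hN, Matrix.mul_one]

lemma HE_of_sa {p q : FreeAlgebra k (Fin d)} (h : StablyAssociated p q) : HE (pm p) (pm q) := by
  obtain ⟨P, Q, ⟨⟨P, P', hP, hP'⟩, rfl⟩, ⟨⟨Q, Q', hQ, hQ'⟩, rfl⟩, h⟩ := h
  simp only at h
  have h2 : ∀ x : FreeAlgebra k (Fin d), HE (Matrix.diagonal ![x, 1]) (pm x) := by
    intro x
    let e : Fin 2 ≃ Unit ⊕ Unit := ⟨![Sum.inl (), Sum.inr ()], Sum.elim (fun _ => 0) (fun _ => 1),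
      fun i => by fin_cases i <;> rfl, fun i => by rcases i with i | i <;> rfl⟩
    refine HE.trans (B := fromBlocks (pm x) 0 0 (1 : Matrix Unit Unit _)) ?_
      (HE_block_left isUnit_one)
    have : Matrix.diagonal ![x, 1] = (fromBlocks (pm x) 0 0 (1 : Matrix Unit Unit _)).submatrix e e := by
      ext i j
      fin_cases i <;> fin_cases j <;> rfl
    rw [this]
    exact HE_reindex e _
  exact (h2 p).symm.trans ((HE_equiv hP hP' hQ hQ' h).trans (h2 q))

end SA

section Pencil
variable {k : Type*} [Field k] {X : Type} [Fintype X]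

local notation "R" => FreeAlgebra k X

/-- homogenized variables -/
noncomputable def xx : Option X → FreeAlgebra k X
  | none => 1
  | some x => FreeAlgebra.ι k x

/-- the linear pencil with given coefficients -/
noncomputable def lp {m n : Type} (A : Option X → Matrix m n k) : Matrix m n (FreeAlgebra k X) :=
  ∑ o, (A o).map (fun t => t • (xx o : FreeAlgebra k X))

lemma lp_apply {m n : Type} (A : Option X → Matrix m n k) (i : m) (j : n) :
    lp A i j = ∑ o, A o i j • (xx o : R) := by
  simp [lp, Matrix.sum_apply]

/-- constants -/
noncomputable def cm {m n : Type} (A : Matrix m n k) : Matrix m n (FreeAlgebra k X) :=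
  A.map (algebraMap k _)

lemma cm_mul {m n l : Type} [Fintype n] (A : Matrix m n k) (B : Matrix n l k) :
    (cm (A * B) : Matrix _ _ R) = (cm A : Matrix m n R) * (cm B : Matrix n l R) := by
  unfold cm; rw [Matrix.map_mul]

lemma cm_one {n : Type} [DecidableEq n] : (cm (1 : Matrix n n k) : Matrix _ _ R) = 1 := by
  simp [cm]

lemma lp_mul {m n m' n' : Type} [Fintype m] [Fintype n] (M : Matrix m' m k) (N : Matrix n n' k)
    (A : Option X → Matrix m n k) : (lp (fun o => M * A o * N) : Matrix m' n' R) =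
      (cm M : Matrix m' m R) * lp A * (cm N : Matrix n n' R) := by
  ext i j
  simp only [lp_apply, Matrix.mul_apply, cm, Matrix.map_apply, Finset.sum_mul, Finset.mul_sum,
    Finset.sum_smul]
  rw [Finset.sum_comm]
  refine Finset.sum_congr rfl fun b _ => ?_
  rw [Finset.sum_comm]
  refine Finset.sum_congr rfl fun a _ => ?_
  refine Finset.sum_congr rfl fun o _ => ?_
  rw [← Algebra.commutes (N b j)]
  simp only [Algebra.algebraMap_eq_smul_one, smul_mul_assoc, mul_smul_comm, one_mul, smul_smul]
  congr 1
  ring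

/-- constant pencil -/
def cp {m n : Type} (M : Matrix m n k) : Option X → Matrix m n k
  | none => M
  | some _ => 0

lemma lp_cp {m n : Type} (M : Matrix m n k) : (lp (cp M) : Matrix m n R) = cm M := by
  ext i j
  rw [lp_apply, Fintype.sum_option]
  simp [cp, xx, cm, Algebra.algebraMap_eq_smul_one]

lemma lp_fromBlocks {m n m' n' : Type} (A : Option X → Matrix m n k) (B : Option X → Matrix m n' k)
    (C : Option X → Matrix m' n k) (D : Option X → Matrix m' n' k) :
    (lp (fun o => fromBlocks (A o) (B o) (C o) (D o)) : Matrix _ _ R) =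
      fromBlocks (lp A) (lp B) (lp C) (lp D) := by
  ext (i | i) (j | j) <;> simp [lp_apply]

lemma lp_zero {m n : Type} : (lp (fun _ => (0 : Matrix m n k)) : Matrix m n R) = 0 := by
  ext i j; simp [lp_apply]

/-- realizability -/
def Rz (f : R) : Prop := ∃ (n : Type) (_ : Fintype n) (_ : DecidableEq n)
  (A : Option X → Matrix n n k) (V : Matrix n n R) (c : Matrix Unit n k) (b : Matrix n Unit k),
  lp A * V = 1 ∧ V * lp A = 1 ∧ pm f = (cm c : Matrix Unit n R) * V * (cm b : Matrix n Unit R)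

lemma rz_all (f : R) : Rz f := by
  classical
  induction f using FreeAlgebra.induction with
  | grade0 r =>
    refine ⟨Unit, inferInstance, inferInstance, cp 1, 1, Matrix.of fun _ _ => r, 1, ?_, ?_, ?_⟩
    · rw [lp_cp, cm_one, Matrix.mul_one]
    · rw [lp_cp, cm_one, Matrix.mul_one]
    · rw [cm_one]; ext i j; simp [pm, cm]
  | grade1 x =>
    let A : Option X → Matrix (Fin 2) (Fin 2) k
      | none => 1
      | some y => if y = x then !![0, -1; 0, 0] else 0
    have hA : (lp A : Matrix _ _ R) = !![1, -FreeAlgebra.ι k x; 0, 1] := by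
      ext i j
      rw [lp_apply, Fintype.sum_option, Finset.sum_eq_single x]
      · fin_cases i <;> fin_cases j <;> simp [A, xx]
      · intro y _ hy; simp [A, hy]
      · simp
    refine ⟨Fin 2, inferInstance, inferInstance, A, !![1, FreeAlgebra.ι k x; 0, 1],
      Matrix.of fun _ => ![1, 0], Matrix.of fun i _ => ![0, 1] i, ?_, ?_, ?_⟩
    · rw [hA, Matrix.mul_fin_two, Matrix.one_fin_two]; simp
    · rw [hA, Matrix.mul_fin_two, Matrix.one_fin_two]; simp
    · ext i j; simp [pm, cm, Matrix.mul_apply, Fin.sum_univ_two]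
  | mul f g hf hg =>
    obtain ⟨n, _, _, A, V, c, b, h1, h2, h3⟩ := hf
    obtain ⟨n', _, _, A', V', c', b', h1', h2', h3'⟩ := hg
    refine ⟨n ⊕ n', inferInstance, inferInstance,
      fun o => fromBlocks (A o) (cp (-(b * c')) o) 0 (A' o),
      fromBlocks V (V * (cm (b * c') : Matrix n n' R) * V') 0 V', fromCols c 0, fromRows 0 b', ?_, ?_, ?_⟩
    · rw [lp_fromBlocks, lp_cp, lp_zero, fromBlocks_multiply]
      have : (cm (-(b * c')) : Matrix _ _ R) = - cm (b * c') := by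
        ext i j; simp only [cm, Matrix.map_apply, Matrix.neg_apply, map_neg]
      rw [this]
      simp [h1, h1', ← Matrix.mul_assoc]
    · rw [lp_fromBlocks, lp_cp, lp_zero, fromBlocks_multiply]
      have : (cm (-(b * c')) : Matrix _ _ R) = - cm (b * c') := by
        ext i j; simp only [cm, Matrix.map_apply, Matrix.neg_apply, map_neg]
      rw [this]
      simp [h2, h2', Matrix.mul_assoc]
    · have e1 : (cm (fromCols c 0) : Matrix _ (n ⊕ n') R) = fromCols (cm c) 0 := by
        ext i (j | j) <;> simp [cm]
      have e2 : (cm (fromRows 0 b') : Matrix (n ⊕ n') _ R) = fromRows 0 (cm b') := by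
        ext (i | i) j <;> simp [cm]
      have e3 : pm (f * g) = pm f * pm g := by ext i j; simp [pm, Matrix.mul_apply]
      rw [e1, e2, e3, h3, h3', fromCols_mul_fromBlocks, fromCols_mul_fromRows, cm_mul]
      simp [Matrix.mul_assoc]
  | add f g hf hg =>
    obtain ⟨n, _, _, A, V, c, b, h1, h2, h3⟩ := hf
    obtain ⟨n', _, _, A', V', c', b', h1', h2', h3'⟩ := hg
    refine ⟨n ⊕ n', inferInstance, inferInstance,
      fun o => fromBlocks (A o) 0 0 (A' o),
      fromBlocks V 0 0 V', fromCols c c', fromRows b b', ?_, ?_, ?_⟩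
    · rw [lp_fromBlocks, lp_zero, lp_zero, fromBlocks_multiply]
      simp [h1, h1']
    · rw [lp_fromBlocks, lp_zero, lp_zero, fromBlocks_multiply]
      simp [h2, h2']
    · have e1 : (cm (fromCols c c') : Matrix _ (n ⊕ n') R) = fromCols (cm c) (cm c') := by
        ext i (j | j) <;> simp [cm]
      have e2 : (cm (fromRows b b') : Matrix (n ⊕ n') _ R) = fromRows (cm b) (cm b') := by
        ext (i | i) j <;> simp [cm]
      have e3 : pm (f + g) = pm f + pm g := by ext i j; simp [pm]
      rw [e1, e2, e3, h3, h3', fromCols_mul_fromBlocks, fromCols_mul_fromRows]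
      simp

/-- Higman linearization -/
lemma linearize (f : R) : ∃ (n : ℕ) (A : Option X → Matrix (Fin n) (Fin n) k),
    HE (pm f) (lp A) := by
  obtain ⟨n, _, _, A, V, c, b, h1, h2, h3⟩ := rz_all f
  let A' : Option X → Matrix (n ⊕ Unit) (n ⊕ Unit) k :=
    fun o => fromBlocks (A o) (cp b o) (cp (-c) o) 0
  have hA' : lp A' = fromBlocks (1 : Matrix n n R) 0 (-((cm c : Matrix Unit n R) * V)) (1 : Matrix Unit Unit R) *
      fromBlocks (lp A) (cm b : Matrix n Unit R) 0 (pm f) * 1 := by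
    have : (cm (-c) : Matrix _ _ R) = - cm c := by ext i j; simp [cm]
    simp only [A']
    rw [lp_fromBlocks, lp_cp, lp_cp, lp_zero, Matrix.mul_one, fromBlocks_multiply, h3, this]
    simp [Matrix.mul_assoc, h2]
  have hE : HE (pm f) (lp A') := by
    refine HE.symm (HE.trans (HE_equiv (P' := fromBlocks (1 : Matrix n n R) 0 ((cm c : Matrix Unit n R) * V) 1)
      (Q' := 1) ?_ ?_ (by simp) (by simp) hA') (HE_block_right (isUnit_of_two h1 h2)))
    · rw [fromBlocks_multiply]; simp
    · rw [fromBlocks_multiply]; simp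
  let e := (Fintype.equivFin (n ⊕ Unit)).symm
  refine ⟨_, fun o => (A' o).submatrix e e, hE.trans (HE.symm ?_)⟩
  have : lp (fun o => (A' o).submatrix e e) = (lp A').submatrix e e := by
    ext i j; simp [lp_apply]
  rw [this]
  exact HE_reindex e _

/-- evaluation of a homogeneous pencil -/
noncomputable def pe {κ : Type} [Fintype κ] {n m : Type} (A : κ → Matrix n n k)
    (Y : κ → Matrix m m k) : Matrix (n × m) (n × m) k :=
  ∑ o, kroneckerMap (· * ·) (A o) (Y o)

lemma pe_apply {κ : Type} [Fintype κ] {n m : Type} (A : κ → Matrix n n k)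
    (Y : κ → Matrix m m k) (i j : n × m) :
    pe A Y i j = ∑ o, A o i.1 j.1 * Y o i.2 j.2 := by
  simp [pe, Matrix.sum_apply]

lemma eval_unit {n m : Type} [Fintype n] [Fintype m] [DecidableEq n] [DecidableEq m] {h : R}
    {A : Option X → Matrix n n k} (hA : HE (pm h) (lp A)) (T : X → Matrix m m k) :
    IsUnit (FreeAlgebra.lift k T h) ↔ IsUnit (pe A (fun o => Option.elim o 1 T)) := by
  have h1 := (hA.map ((FreeAlgebra.lift k T : R →ₐ[k] Matrix m m k) : R →+* Matrix m m k)).isUnit_iff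
  have e1 : (pm h).map ((FreeAlgebra.lift k T : R →ₐ[k] Matrix m m k) : R →+* Matrix m m k) =
      pm (FreeAlgebra.lift k T h) := by ext; simp [pm]
  rw [e1, isUnit_pm] at h1
  rw [h1, ← MulEquiv.isUnit_map (Matrix.compRingEquiv n m k)]
  congr! 1
  ext i j
  rw [pe_apply, Matrix.compRingEquiv_apply, Matrix.comp_apply]
  simp only [Matrix.map_apply, lp_apply, RingHom.coe_coe, map_sum, Matrix.sum_apply]
  refine Finset.sum_congr rfl fun o _ => ?_
  rcases o with _ | x
  · simp [xx]
  · simp [xx]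

/-- stability of a Kronecker representation -/
def Stab {κ : Type} {n : ℕ} (A : κ → Matrix (Fin n) (Fin n) k) : Prop :=
  ∀ U : Submodule k (Fin n → k),
    Module.finrank k (⨆ o, U.map (A o).mulVecLin : Submodule k (Fin n → k)) ≤ Module.finrank k U →
      U = ⊥ ∨ U = ⊤

end Pencil
end NCN

set_option linter.unusedSimpArgs false
set_option linter.unusedSectionVars false
namespace NCN
open Matrix

section LemS
variable {k : Type*} [Field k] {X : Type} [Fintype X]

lemma adapt_basis {n w z : ℕ} (hn : w + z = n) (U : Submodule k (Fin n → k))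
    (hU : Module.finrank k U = w) : ∃ b : Module.Basis (Fin w ⊕ Fin z) k (Fin n → k),
      (∀ i, b (Sum.inl i) ∈ U) ∧ ∀ x ∈ U, ∀ i, b.repr x (Sum.inr i) = 0 := by
  obtain ⟨U', hc⟩ := Submodule.exists_isCompl U
  have h1 := Submodule.finrank_add_eq_of_isCompl hc
  have hU' : Module.finrank k U' = z := by
    rw [Module.finrank_fin_fun] at h1; omega
  let b1 := Module.finBasisOfFinrankEq k U hU
  let b2 := Module.finBasisOfFinrankEq k U' hU'
  refine ⟨(b1.prod b2).map (Submodule.prodEquivOfIsCompl U U' hc), ?_, ?_⟩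
  · intro i; simp
  · intro x hx i
    simp only [Module.Basis.map_repr, LinearEquiv.trans_apply, Module.Basis.prod_repr_inr]
    rw [(Submodule.prodEquivOfIsCompl_symm_apply_snd_eq_zero U U' hc).2 hx]
    simp

lemma adapt_basis' {n u v : ℕ} (hn : u + v = n) (W : Submodule k (Fin n → k))
    (hW : Module.finrank k W ≤ u) : ∃ b : Module.Basis (Fin u ⊕ Fin v) k (Fin n → k),
      ∀ x ∈ W, ∀ i, b.repr x (Sum.inr i) = 0 := by
  obtain ⟨w, hw⟩ : ∃ w, w = Module.finrank k W := ⟨_, rfl⟩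
  rw [← hw] at hW
  obtain ⟨t, rfl⟩ := Nat.exists_eq_add_of_le hW
  obtain ⟨b, -, hb⟩ := adapt_basis (w := w) (z := t + v) (by omega) W hw.symm
  let e : Fin w ⊕ Fin (t + v) ≃ Fin (w + t) ⊕ Fin v :=
    ((Equiv.sumCongr (Equiv.refl _) finSumFinEquiv.symm).trans (Equiv.sumAssoc _ _ _).symm).trans
      (Equiv.sumCongr finSumFinEquiv (Equiv.refl _))
  refine ⟨b.reindex e, fun x hx i => ?_⟩
  rw [Module.Basis.repr_reindex_apply]
  have : e.symm (Sum.inr i) = Sum.inr (finSumFinEquiv (Sum.inr i)) := by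
    simp [e]
  rw [this, hb x hx]

lemma exists_stab {p : FreeAlgebra k X} (hp : Irreducible p) : 
    ∀ (n : ℕ) (A : Option X → Matrix (Fin n) (Fin n) k), HE (pm p) (lp A) →
    ∃ (n : ℕ) (A : Option X → Matrix (Fin n) (Fin n) k), HE (pm p) (lp A) ∧ Stab A := by
  intro n
  induction n using Nat.strong_induction_on with
  | _ n ih =>
  intro A hA
  by_cases hst : Stab A
  · exact ⟨n, A, hA, hst⟩
  simp only [Stab, not_forall, not_or] at hst
  obtain ⟨U, hU, hbot, htop⟩ := hst
  obtain ⟨u, hu⟩ : ∃ u, u = Module.finrank k U := ⟨_, rfl⟩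
  have hu0 : 0 < u := by
    rw [hu]
    have : Nontrivial U := (Submodule.nontrivial_iff_ne_bot).2 hbot
    exact Module.finrank_pos
  have hun : u < n := by
    have := Submodule.finrank_lt (s := U) htop
    rw [Module.finrank_fin_fun] at this; omega
  obtain ⟨v, hv⟩ := Nat.exists_eq_add_of_le hun.le
  obtain ⟨b, hb, -⟩ := adapt_basis (w := u) (z := v) hv.symm U hu.symm
  obtain ⟨c, hc⟩ := adapt_basis' (u := u) (v := v) hv.symm
    (⨆ o, U.map (A o).mulVecLin : Submodule k (Fin n → k)) (by rw [hu]; exact hU)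
  let s := Pi.basisFun k (Fin n)
  let M : Option X → Matrix (Fin u ⊕ Fin v) (Fin u ⊕ Fin v) k :=
    fun o => LinearMap.toMatrix b c (A o).mulVecLin
  let P := s.toMatrix c
  let P' := c.toMatrix s
  let Q := b.toMatrix s
  let Q' := s.toMatrix b
  have hP : P * P' = 1 := Module.Basis.toMatrix_mul_toMatrix_flip _ _
  have hP' : P' * P = 1 := Module.Basis.toMatrix_mul_toMatrix_flip _ _
  have hQ : Q * Q' = 1 := Module.Basis.toMatrix_mul_toMatrix_flip _ _
  have hQ' : Q' * Q = 1 := Module.Basis.toMatrix_mul_toMatrix_flip _ _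
  have hAM : A = fun o => P * M o * Q := by
    funext o
    simp only [P, M, Q]
    rw [basis_toMatrix_mul_linearMap_toMatrix_mul_basis_toMatrix]
    exact (LinearMap.toMatrix'_toLin' (A o)).symm
  have hM21 : ∀ o, (M o).toBlocks₂₁ = 0 := by
    intro o
    ext i j
    simp only [M, Matrix.toBlocks₂₁, Matrix.of_apply, LinearMap.toMatrix_apply, Matrix.zero_apply]
    apply hc
    exact Submodule.mem_iSup_of_mem o (Submodule.mem_map_of_mem (hb j))
  let B := fun o => (M o).toBlocks₁₁
  let C := fun o => (M o).toBlocks₁₂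
  let D := fun o => (M o).toBlocks₂₂
  have hM : M = fun o => fromBlocks (B o) (C o) 0 (D o) := by
    funext o
    rw [← hM21 o]; exact (Matrix.fromBlocks_toBlocks _).symm
  have cmm : ∀ {a b : Type} [Fintype a] [Fintype b] [DecidableEq a] {x : Matrix a b k}
      {y : Matrix b a k}, x * y = 1 →
      (cm x : Matrix a b (FreeAlgebra k X)) * (cm y : Matrix b a (FreeAlgebra k X)) = 1 := by
    intro a b _ _ _ x y h
    rw [← cm_mul, h, cm_one]
  have hlM : (lp M : Matrix _ _ (FreeAlgebra k X)) = fromBlocks (lp B) (lp C) 0 (lp D) := by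
    rw [hM, lp_fromBlocks, lp_zero]
  have hlA : lp A = (cm P : Matrix _ _ (FreeAlgebra k X)) * lp M *
      (cm Q : Matrix _ _ (FreeAlgebra k X)) := by
    conv_lhs => rw [hAM]
    rw [lp_mul]
  have hAME : HE (lp A) (lp M) := HE_equiv (cmm hP) (cmm hP') (cmm hQ) (cmm hQ') hlA
  have hfac : lp A = ((cm P : Matrix _ _ (FreeAlgebra k X)) *
      (fromBlocks 1 0 0 (lp D) : Matrix (Fin u ⊕ Fin v) (Fin u ⊕ Fin v) (FreeAlgebra k X)) *
      (cm P' : Matrix _ _ (FreeAlgebra k X))) * ((cm P : Matrix _ _ (FreeAlgebra k X)) *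
      (fromBlocks (lp B) (lp C) 0 1 : Matrix (Fin u ⊕ Fin v) (Fin u ⊕ Fin v) (FreeAlgebra k X)) * (cm Q : Matrix _ _ (FreeAlgebra k X))) := by
    have e1 : fromBlocks (1 : Matrix (Fin u) (Fin u) (FreeAlgebra k X)) 0 0 (lp D) *
      fromBlocks (lp B) (lp C) 0 1 = lp M := by
      rw [fromBlocks_multiply, hlM]; simp
    rw [hlA, ← e1]
    simp only [Matrix.mul_assoc]
    rw [← Matrix.mul_assoc (cm P' : Matrix _ _ (FreeAlgebra k X)) (cm P), cmm hP', Matrix.one_mul]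
  rcases atom hp hA hfac with h | h
  · have hD : IsUnit (lp D : Matrix _ _ (FreeAlgebra k X)) :=
      (HE_block_right isUnit_one).symm.isUnit
        ((HE_equiv (cmm hP) (cmm hP') (cmm hP') (cmm hP) rfl).symm.isUnit h)
    rw [hlM] at hAME
    exact ih u (by omega) B (hA.trans (hAME.trans (HE_block_left hD)))
  · have hB : IsUnit (lp B : Matrix _ _ (FreeAlgebra k X)) :=
      (HE_block_left isUnit_one).symm.isUnit
        ((HE_equiv (cmm hP) (cmm hP') (cmm hQ) (cmm hQ') rfl).symm.isUnit h)
    rw [hlM] at hAME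
    exact ih v (by omega) D (hA.trans (hAME.trans (HE_block_right hB)))

lemma stable_pencil {p : FreeAlgebra k X} (hp : Irreducible p) :
    ∃ (n : ℕ) (A : Option X → Matrix (Fin n) (Fin n) k), HE (pm p) (lp A) ∧ Stab A := by
  obtain ⟨n, A, h⟩ := linearize p
  exact exists_stab hp n A h

end LemS
end NCN

set_option linter.unusedSimpArgs false
set_option linter.unusedSectionVars false
namespace NCN
open Matrix

section LemN
variable {k : Type*} [Field k] {X : Type}

lemma lift_eq_sum {B : Type*} [Ring B] [Algebra k B] (T : X → B) (f : FreeAlgebra k X) :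
    FreeAlgebra.lift k T f = ∑ w ∈ supp f, cf f w • (w.map T).prod := by
  classical
  have h1 : ∀ w : List X, ∃ g : FreeAlgebra k X, g = (w.map (FreeAlgebra.ι k)).prod ∧
      ∀ v, cf g v = if v = w then 1 else 0 := by
    intro w
    refine ⟨_, rfl, ?_⟩
    induction w with
    | nil => intro v; simp [cf_one]
    | cons x w ih =>
      intro v
      have hx : ∀ v, cf (FreeAlgebra.ι k x : FreeAlgebra k X) v = if v = [x] then 1 else 0 := by
        intro v
        simp only [cf, FreeAlgebra.equivMonoidAlgebraFreeMonoid, AlgEquiv.ofAlgHom_apply,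
          FreeAlgebra.lift_ι_apply, MonoidAlgebra.of_apply, MonoidAlgebra.coeff_single,
          Finsupp.single_apply]
        by_cases h : v = [x]
        · subst h; rw [if_pos rfl, if_pos]; rfl
        · rw [if_neg h, if_neg]
          intro h'; exact h (congrArg FreeMonoid.toList h').symm
      rw [List.map_cons, List.prod_cons, cf_mul]
      simp only [hx, ih]
      by_cases hv : v = x :: w
      · subst hv
        rw [Finset.sum_eq_single 1]
        · simp
        · intro b hb hb1
          rw [if_neg, zero_mul]
          intro h
          have := congrArg List.length h
          simp at this hb
          omega
        · simp
      · rw [if_neg hv]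
        apply Finset.sum_eq_zero
        intro i _
        by_cases h1 : v.take i = [x]
        · rw [if_neg (c := v.drop i = w), mul_zero]
          intro h2
          apply hv
          rw [← List.take_append_drop i v, h1, h2]; rfl
        · rw [if_neg h1, zero_mul]
  have h2 : f = ∑ w ∈ supp f, cf f w • (w.map (FreeAlgebra.ι k)).prod := by
    apply cf_ext
    intro v
    rw [cf_sum]
    simp only [cf_smul]
    have : ∀ w, cf ((w.map (FreeAlgebra.ι k)).prod : FreeAlgebra k X) v = if v = w then 1 else 0 := by
      intro w
      obtain ⟨g, rfl, hg⟩ := h1 w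
      exact hg v
    simp only [this, mul_ite, mul_one, mul_zero]
    rw [Finset.sum_ite_eq]
    split_ifs with h
    · rfl
    · rw [mem_supp] at h; push Not at h; exact h
  conv_lhs => rw [h2]
  rw [map_sum]
  refine Finset.sum_congr rfl fun w _ => ?_
  rw [map_smul, map_list_prod, List.map_map]
  congr 3
  funext x; simp

/-- cyclic weights -/
def cval {N : ℕ} {S : Type*} [CommRing S] (y : X × ZMod N → S) : ZMod N → List X → S
  | _, [] => 1
  | a, (i :: w) => y (i, a) * cval y (a + 1) w

lemma cval_map {N : ℕ} {S S' : Type*} [CommRing S] [CommRing S'] (φ : S →+* S')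
    (y : X × ZMod N → S) (w : List X) : ∀ a, φ (cval y a w) = cval (fun z => φ (y z)) a w := by
  induction w with
  | nil => intro a; simp [cval]
  | cons i w ih => intro a; simp [cval, ih]

/-- the exponent of the monomial -/
noncomputable def wt {N : ℕ} : ZMod N → List X → (X × ZMod N →₀ ℕ)
  | _, [] => 0
  | a, (i :: w) => Finsupp.single (i, a) 1 + wt (a + 1) w

lemma cval_X {N : ℕ} (w : List X) : ∀ a,
    cval (fun z => (MvPolynomial.X z : MvPolynomial (X × ZMod N) k)) a w =
      MvPolynomial.monomial (wt a w) 1 := by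
  induction w with
  | nil => intro a; simp [cval, wt]
  | cons i w ih =>
    intro a
    rw [cval, ih, wt, MvPolynomial.X, MvPolynomial.monomial_mul, mul_one]

lemma wt_ne {N : ℕ} (w : List X) : ∀ (a : ZMod N) (i : X) (b : ZMod N), wt a w (i, b) ≠ 0 →
    ∃ l < w.length, b = a + (l : ℕ) := by
  classical
  induction w with
  | nil => intro a i b h; simp [wt] at h
  | cons j w ih =>
    intro a i b h
    by_cases hb : b = a
    · exact ⟨0, by simp, by simp [hb]⟩
    · rw [wt, Finsupp.add_apply, Finsupp.single_eq_of_ne (by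
        intro h; exact hb (congrArg Prod.snd h)), zero_add] at h
      obtain ⟨l, hl, e⟩ := ih _ _ _ h
      refine ⟨l + 1, by simpa using hl, ?_⟩
      rw [e]; push_cast; ring

lemma wt_inj {N : ℕ} (w : List X) : ∀ (w' : List X) (a : ZMod N), w.length = w'.length →
    w.length ≤ N → wt a w = wt a w' → w = w' := by
  classical
  induction w with
  | nil => intro w' a h _ _; exact (List.length_eq_zero_iff.1 h.symm).symm
  | cons i w ih =>
    intro w' a h hN e
    rcases w' with _ | ⟨i', w'⟩
    · simp at h
    simp only [List.length_cons, add_left_inj] at h hN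
    have hz : wt (a + 1) w' (i, a) = 0 := by
      by_contra h'
      obtain ⟨l, hl, e⟩ := wt_ne _ _ _ _ h'
      have : ((l + 1 : ℕ) : ZMod N) = 0 := by
        push_cast
        have := sub_eq_zero.2 e.symm
        rw [← this]; ring
      rw [ZMod.natCast_eq_zero_iff] at this
      have := Nat.le_of_dvd (by omega) this
      omega
    have h2 := DFunLike.congr_fun e (i, a)
    rw [wt, wt, Finsupp.add_apply, Finsupp.add_apply, hz, Finsupp.single_eq_same] at h2
    have hi : i = i' := by
      by_contra hi
      rw [Finsupp.single_eq_of_ne (by intro h; exact hi (congrArg Prod.fst h))] at h2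
      omega
    subst hi
    rw [wt, wt, add_right_inj] at e
    rw [ih w' _ h (by omega) e]

/-- cyclic matrices -/
def cyc {N : ℕ} (y : X × ZMod N → k) (i : X) : Matrix (ZMod N) (ZMod N) k :=
  Matrix.of fun a b => if b = a + 1 then y (i, a) else 0

lemma cyc_prod {N : ℕ} [NeZero N] (y : X × ZMod N → k) (w : List X) : ∀ a b : ZMod N,
    (w.map (cyc y)).prod a b = if b = a + (w.length : ℕ) then cval y a w else 0 := by
  induction w with
  | nil => intro a b; simp [cval, Matrix.one_apply, eq_comm]
  | cons i w ih =>
    intro a b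
    rw [List.map_cons, List.prod_cons, Matrix.mul_apply, Finset.sum_eq_single (a + 1)]
    · rw [ih]
      simp only [cyc, Matrix.of_apply, if_true, mul_ite, mul_zero, cval, List.length_cons]
      push_cast
      rw [add_assoc, add_comm (1 : ZMod N)]
    · intro c _ hc; simp [cyc, hc]
    · simp

lemma scale_lemma [Infinite k] {ι : Type} [Fintype ι] [DecidableEq ι] (f : FreeAlgebra k X)
    (T : X → Matrix ι ι k)
    (h : (∑ w ∈ supp f with w.length = dg f, cf f w • (w.map T).prod).det ≠ 0) :
    ∃ T' : X → Matrix ι ι k, (FreeAlgebra.lift k T' f).det ≠ 0 := by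
  let P : Matrix ι ι (Polynomial k) := ∑ w ∈ supp f,
    (cf f w • (w.map T).prod).map (fun t => Polynomial.C t * Polynomial.X ^ (dg f - w.length))
  have hP : ∀ s, P.map (Polynomial.eval s) =
      ∑ w ∈ supp f, s ^ (dg f - w.length) • (cf f w • (w.map T).prod) := by
    intro s
    ext i j
    simp only [P, Matrix.map_apply, Matrix.sum_apply, Polynomial.eval_finsetSum, Matrix.smul_apply]
    refine Finset.sum_congr rfl fun w _ => ?_
    simp [mul_comm]
  have hdet : ∀ s, P.det.eval s = (P.map (Polynomial.eval s)).det := by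
    intro s
    exact RingHom.map_det (Polynomial.evalRingHom s) P
  have h0 : P.det ≠ 0 := by
    intro h0
    apply h
    have := hdet 0
    rw [h0, hP, Polynomial.eval_zero] at this
    rw [this]
    congr 1
    rw [Finset.sum_filter]
    refine Finset.sum_congr rfl fun w hw => ?_
    have := le_dg ((mem_supp f w).1 hw)
    by_cases h : w.length = dg f
    · simp [h]
    · rw [if_neg h, zero_pow (by omega), zero_smul]
  have h1 : P.det * Polynomial.X ≠ 0 := mul_ne_zero h0 Polynomial.X_ne_zero
  obtain ⟨s, hs⟩ : ∃ s, (P.det * Polynomial.X).eval s ≠ 0 := by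
    by_contra! h
    exact h1 (Polynomial.funext (by simpa using h))
  rw [Polynomial.eval_mul, Polynomial.eval_X] at hs
  have hs0 : s ≠ 0 := right_ne_zero_of_mul hs
  have hs1 := left_ne_zero_of_mul hs
  rw [hdet, hP] at hs1
  refine ⟨fun i => s⁻¹ • T i, ?_⟩
  have key : FreeAlgebra.lift k (fun i => s⁻¹ • T i) f = (s⁻¹) ^ (dg f) •
      ∑ w ∈ supp f, s ^ (dg f - w.length) • (cf f w • (w.map T).prod) := by
    rw [lift_eq_sum, Finset.smul_sum]
    refine Finset.sum_congr rfl fun w hw => ?_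
    have hl := le_dg ((mem_supp f w).1 hw)
    have e1 : ∀ w : List X, (w.map (fun i => s⁻¹ • T i)).prod = (s⁻¹) ^ w.length • (w.map T).prod := by
      intro w
      induction w with
      | nil => simp
      | cons i w ih => simp [ih, smul_smul, pow_succ]
    rw [e1, smul_smul, smul_smul, smul_smul]
    congr 1
    obtain ⟨r, hr⟩ := Nat.exists_eq_add_of_le hl
    rw [hr, Nat.add_sub_cancel_left, pow_add, mul_assoc ((s⁻¹) ^ _),
      ← mul_pow, inv_mul_cancel₀ hs0, one_pow, mul_one, mul_comm]
  rw [key, Matrix.det_smul]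
  exact mul_ne_zero (pow_ne_zero _ (pow_ne_zero _ (inv_ne_zero hs0))) hs1

lemma nonsing_eval [Infinite k] (f : FreeAlgebra k X) (hf : f ≠ 0) :
    ∃ (n : ℕ) (_ : 1 ≤ n) (T : X → Matrix (Fin n) (Fin n) k), (FreeAlgebra.lift k T f).det ≠ 0 := by
  classical
  let N := dg f + 1
  let F : ZMod N → MvPolynomial (X × ZMod N) k := fun a =>
    ∑ w ∈ supp f with w.length = dg f,
      MvPolynomial.C (cf f w) * cval (fun z => (MvPolynomial.X z)) a w
  have hF : ∀ a, F a ≠ 0 := by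
    intro a h
    obtain ⟨w0, hw0, hl⟩ := exists_top hf
    have := congrArg (MvPolynomial.coeff (wt a w0)) h
    simp only [F, cval_X, MvPolynomial.coeff_sum, MvPolynomial.coeff_C_mul,
      MvPolynomial.coeff_monomial, MvPolynomial.coeff_zero] at this
    rw [Finset.sum_eq_single w0] at this
    · simp at this; exact hw0 this
    · intro w hw hne
      rw [Finset.mem_filter] at hw
      rw [if_neg, mul_zero]
      intro e
      exact hne (wt_inj w w0 a (by omega) (by omega) e)
    · intro h
      exact absurd (Finset.mem_filter.2 ⟨(mem_supp f w0).2 hw0, hl⟩) h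
  have hprod : ∏ a, F a ≠ 0 := Finset.prod_ne_zero_iff.2 fun a _ => hF a
  obtain ⟨y, hy⟩ : ∃ y, MvPolynomial.eval y (∏ a, F a) ≠ 0 := by
    by_contra! h
    exact hprod (MvPolynomial.funext (by simpa using h))
  rw [map_prod, Finset.prod_ne_zero_iff] at hy
  have hy' : ∀ a, ∑ w ∈ supp f with w.length = dg f, cf f w * cval y a w ≠ 0 := by
    intro a
    have := hy a (Finset.mem_univ a)
    simp only [F, map_sum, map_mul, MvPolynomial.eval_C] at this
    simpa [cval_map (MvPolynomial.eval y)] using this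
  have key : (∑ w ∈ supp f with w.length = dg f, cf f w • (w.map (cyc y)).prod).det ≠ 0 := by
    have : (∑ w ∈ supp f with w.length = dg f, cf f w • (w.map (cyc y)).prod) =
        Matrix.diagonal (fun a => ∑ w ∈ supp f with w.length = dg f, cf f w * cval y a w) *
          (Equiv.addRight ((dg f : ℕ) : ZMod N)).toPEquiv.toMatrix := by
      ext a b
      rw [Matrix.diagonal_mul, PEquiv.toMatrix_apply]
      simp only [Matrix.sum_apply, Matrix.smul_apply, cyc_prod, smul_eq_mul]
      rw [Finset.sum_mul]
      refine Finset.sum_congr rfl fun w hw => ?_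
      rw [(Finset.mem_filter.1 hw).2]
      simp [eq_comm]
    rw [this, Matrix.det_mul, Matrix.det_diagonal]
    refine mul_ne_zero (Finset.prod_ne_zero_iff.2 fun a _ => hy' a) ?_
    have := Matrix.det_permutation (R := k) (Equiv.addRight ((dg f : ℕ) : ZMod N))
    rw [this]
    rcases Int.units_eq_one_or (Equiv.Perm.sign (Equiv.addRight ((dg f : ℕ) : ZMod N))) with h | h <;>
      rw [h] <;> simp
  obtain ⟨T, hT⟩ := scale_lemma f _ key
  exact ⟨N, by omega, T, hT⟩

end LemN
end NCN

set_option linter.unusedSimpArgs false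
set_option linter.unusedSectionVars false
namespace NCN
open Matrix

section Density
variable {k : Type*} [Field k] {Y : Type}

/-- the module over the free algebra defined by a tuple of matrices -/
def VM {ι : Type} (_T : Y → Matrix ι ι k) : Type _ := ι → k

instance {ι : Type} (T : Y → Matrix ι ι k) : AddCommGroup (VM T) :=
  inferInstanceAs (AddCommGroup (ι → k))

noncomputable instance {ι : Type} [Fintype ι] [DecidableEq ι] (T : Y → Matrix ι ι k) :
    Module (FreeAlgebra k Y) (VM T) where
  smul r v := (FreeAlgebra.lift k T r) *ᵥ (v : ι → k)
  one_smul v := (congrArg (fun M : Matrix ι ι k => M *ᵥ (v : ι → k))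
    (map_one (FreeAlgebra.lift k T))).trans (one_mulVec _)
  mul_smul r s v := (congrArg (fun M : Matrix ι ι k => M *ᵥ (v : ι → k))
    (map_mul (FreeAlgebra.lift k T) r s)).trans (mulVec_mulVec _ _ _).symm
  smul_zero r := mulVec_zero _
  smul_add r v w := mulVec_add _ _ _
  add_smul r s v := (congrArg (fun M : Matrix ι ι k => M *ᵥ (v : ι → k))
    (map_add (FreeAlgebra.lift k T) r s)).trans (add_mulVec _ _ _)
  zero_smul v := (congrArg (fun M : Matrix ι ι k => M *ᵥ (v : ι → k))
    (map_zero (FreeAlgebra.lift k T))).trans (zero_mulVec _)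

lemma VM_smul {ι : Type} [Fintype ι] [DecidableEq ι] (T : Y → Matrix ι ι k) (r : FreeAlgebra k Y)
    (v : ι → k) : (r • (show VM T from v)) = ((FreeAlgebra.lift k T r) *ᵥ v : ι → k) := rfl

/-- `U` is an invariant subspace; irreducibility in matrix terms implies simplicity -/
lemma VM_simple {ι : Type} [Fintype ι] [DecidableEq ι] [Nonempty ι] (T : Y → Matrix ι ι k)
    (h : ∀ U : Submodule k (ι → k), (∀ y, ∀ u ∈ U, T y *ᵥ u ∈ U) → U = ⊥ ∨ U = ⊤) :
    IsSimpleModule (FreeAlgebra k Y) (VM T) := by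
  have hnt : Nontrivial (VM T) := inferInstanceAs (Nontrivial (ι → k))
  rw [isSimpleModule_iff]
  refine { toNontrivial := inferInstance, eq_bot_or_eq_top := ?_ }
  intro W
  let U : Submodule k (ι → k) :=
    { carrier := {u | (show VM T from u) ∈ W}
      add_mem' := fun {a b} ha hb => W.add_mem (x := (show VM T from a)) (y := (show VM T from b)) ha hb
      zero_mem' := W.zero_mem
      smul_mem' := fun c x hx => by
        have := W.smul_mem (algebraMap k _ c) hx
        rw [VM_smul, AlgHom.commutes, Algebra.algebraMap_eq_smul_one, smul_mulVec, one_mulVec] at this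
        exact this }
  have hU : ∀ u : ι → k, u ∈ U ↔ (show VM T from u) ∈ W := fun u => Iff.rfl
  rcases h U (fun y u hu => by
    have := W.smul_mem (FreeAlgebra.ι k y) hu
    rw [VM_smul, FreeAlgebra.lift_ι_apply] at this
    exact this) with h | h
  · left
    rw [eq_bot_iff]
    intro w hw
    have : (show ι → k from w) ∈ U := hw
    rw [h] at this
    exact (Submodule.mem_bot (FreeAlgebra k Y)).2 ((Submodule.mem_bot k (x := (show ι → k from w))).1 this)
  · right
    rw [eq_top_iff]
    intro w _
    have : (show ι → k from w) ∈ U := by rw [h]; trivial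
    exact this

lemma density {τ : Type} [Fintype τ] [DecidableEq τ] {ι : τ → Type} [∀ t, Fintype (ι t)]
    [∀ t, DecidableEq (ι t)] (T : ∀ t, Y → Matrix (ι t) (ι t) k)
    (hs : ∀ t, IsSimpleModule (FreeAlgebra k Y) (VM (T t))) (t0 : τ)
    (hne : ∀ t ≠ t0, IsEmpty (VM (T t0) ≃ₗ[FreeAlgebra k Y] VM (T t))) :
    ∃ r : FreeAlgebra k Y, FreeAlgebra.lift k (T t0) r = 1 ∧
      ∀ t ≠ t0, FreeAlgebra.lift k (T t) r = 0 := by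
  classical
  let M := ∀ t, VM (T t)
  have z1 : ∀ t ≠ t0, ∀ φ : VM (T t0) →ₗ[FreeAlgebra k Y] VM (T t), φ = 0 := by
    intro t ht φ
    rcases φ.bijective_or_eq_zero with h | h
    · exact ((hne t ht).false (LinearEquiv.ofBijective φ h)).elim
    · exact h
  have z2 : ∀ t ≠ t0, ∀ φ : VM (T t) →ₗ[FreeAlgebra k Y] VM (T t0), φ = 0 := by
    intro t ht φ
    rcases φ.bijective_or_eq_zero with h | h
    · exact ((hne t ht).false (LinearEquiv.ofBijective φ h).symm).elim
    · exact h
  let pr : M →ₗ[FreeAlgebra k Y] M :=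
    (LinearMap.single (FreeAlgebra k Y) (fun t => VM (T t)) t0).comp (LinearMap.proj t0)
  have hpr : ∀ m : M, pr m = Pi.single t0 (m t0) := fun m => rfl
  have hcomm : ∀ (φ : Module.End (FreeAlgebra k Y) M) (m : M), pr (φ m) = φ (pr m) := by
    intro φ m
    have hm : m = ∑ t, Pi.single t (m t) := (Finset.univ_sum_single m).symm
    have h1 : (φ m) t0 = (φ (pr m)) t0 := by
      have e : m = pr m + ∑ t ∈ Finset.univ.erase t0, Pi.single t (m t) := by
        conv_lhs => rw [hm, ← Finset.add_sum_erase _ _ (Finset.mem_univ t0)]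
        rfl
      conv_lhs => rw [e]
      rw [map_add, Pi.add_apply, map_sum, Finset.sum_apply, Finset.sum_eq_zero, add_zero]
      intro t ht
      have := LinearMap.congr_fun (z2 t (Finset.ne_of_mem_erase ht)
        ((LinearMap.proj t0).comp (φ.comp (LinearMap.single (FreeAlgebra k Y) (fun t => VM (T t)) t))))
        (m t)
      exact this
    funext t
    by_cases ht : t = t0
    · subst ht
      rw [← h1, hpr, Pi.single_eq_same]
    · have := LinearMap.congr_fun (z1 t ht
        ((LinearMap.proj t).comp (φ.comp (LinearMap.single (FreeAlgebra k Y) (fun t => VM (T t)) t0))))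
        (m t0)
      have h2 : φ (pr m) t = 0 := this
      rw [h2]
      rw [hpr, Pi.single_eq_of_ne ht]
  let f : Module.End (Module.End (FreeAlgebra k Y) M) M :=
    { toFun := pr
      map_add' := map_add pr
      map_smul' := fun φ m => hcomm φ m }
  let bv : ∀ t, ι t → VM (T t) := fun t i => (Pi.single i 1 : ι t → k)
  let bas : (Σ t, ι t) → M := fun p => Pi.single (M := fun t => VM (T t)) p.1 (bv p.1 p.2)
  obtain ⟨r, hr⟩ := jacobson_density f (Finset.univ.image bas)
  have hr' : ∀ t i, pr (bas ⟨t, i⟩) = r • bas ⟨t, i⟩ := fun t i =>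
    hr _ (Finset.mem_image_of_mem _ (Finset.mem_univ _))
  have hb : ∀ t i, bas ⟨t, i⟩ t = bv t i := fun t i => Pi.single_eq_same _ _
  have hsm : ∀ t i, (r • bas ⟨t, i⟩) t = r • bv t i := by
    intro t i
    rw [Pi.smul_apply, hb]
  have hcol : ∀ t i j, (show ι t → k from r • bv t j) i = FreeAlgebra.lift k (T t) r i j := by
    intro t i j
    have : (FreeAlgebra.lift k (T t) r *ᵥ (Pi.single j 1)) i = FreeAlgebra.lift k (T t) r i j := by
      rw [mulVec_single_one, Matrix.col_apply]
    exact this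
  refine ⟨r, ?_, ?_⟩
  · ext i j
    have h1 := congrFun (hr' t0 j) t0
    rw [hsm, hpr, Pi.single_eq_same, hb] at h1
    rw [← hcol, ← h1, Matrix.one_apply]
    exact Pi.single_apply _ _ _
  · intro t ht
    ext i j
    have h1 := congrFun (hr' t j) t
    rw [hsm, hpr, Pi.single_eq_of_ne ht] at h1
    rw [← hcol, ← h1]
    rfl

end Density
end NCN

set_option linter.unusedSimpArgs false
set_option linter.unusedSectionVars false
namespace NCN
open Matrix

section Geom
variable {k : Type*} [Field k] {κ : Type} [Fintype κ]

/-- the matrices `A_o ⊗ E_ab` -/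
def ke {N n : ℕ} (A : κ → Matrix (Fin n) (Fin n) k) (y : κ × Fin N × Fin N) :
    Matrix (Fin n × Fin N) (Fin n × Fin N) k :=
  kroneckerMap (· * ·) (A y.1) (Matrix.single y.2.1 y.2.2 1)

/-- the normalized matrices -/
noncomputable def tm {N n : ℕ} (A : κ → Matrix (Fin n) (Fin n) k) (X0 : κ → Matrix (Fin N) (Fin N) k)
    (y : κ × Fin N × Fin N) : Matrix (Fin n × Fin N) (Fin n × Fin N) k :=
  (pe A X0)⁻¹ * ke A y

lemma mul_tm {N n : ℕ} {A : κ → Matrix (Fin n) (Fin n) k} {X0 : κ → Matrix (Fin N) (Fin N) k}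
    (h : IsUnit (pe A X0)) (y : κ × Fin N × Fin N) : pe A X0 * tm A X0 y = ke A y := by
  rw [tm, ← Matrix.mul_assoc, Matrix.mul_nonsing_inv _ ((Matrix.isUnit_iff_isUnit_det _).1 h),
    Matrix.one_mul]

lemma ke_mulVec {N n : ℕ} (A : κ → Matrix (Fin n) (Fin n) k) (o : κ) (a b : Fin N)
    (u : Fin n × Fin N → k) (i : Fin n) (c : Fin N) :
    (ke A (o, a, b) *ᵥ u) (i, c) = if c = a then (A o *ᵥ fun j => u (j, b)) i else 0 := by
  simp only [ke, Matrix.mulVec, dotProduct, Fintype.sum_prod_type, kroneckerMap_apply,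
    Matrix.single_apply]
  by_cases h : c = a
  · subst h
    simp
  · simp [h, Ne.symm h]

lemma pe_mulVec {N n : ℕ} (A : κ → Matrix (Fin n) (Fin n) k) (X0 : κ → Matrix (Fin N) (Fin N) k)
    (u : Fin n × Fin N → k) (c : Fin N) :
    (fun i => (pe A X0 *ᵥ u) (i, c)) = ∑ o, ∑ b, X0 o c b • (A o *ᵥ fun j => u (j, b)) := by
  funext i
  simp only [Matrix.mulVec, dotProduct, Fintype.sum_prod_type, pe_apply, Finset.sum_apply,
    Pi.smul_apply, smul_eq_mul, Finset.mul_sum, Finset.sum_mul]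
  rw [Finset.sum_comm]
  conv_rhs => rw [Finset.sum_comm]
  refine Finset.sum_congr rfl fun b _ => ?_
  rw [Finset.sum_comm]
  refine Finset.sum_congr rfl fun o _ => Finset.sum_congr rfl fun j _ => ?_
  ring

/-- slices -/
def slc (k : Type*) [Field k] {N n : ℕ} (b : Fin N) : (Fin n × Fin N → k) →ₗ[k] (Fin n → k) where
  toFun u i := u (i, b)
  map_add' _ _ := rfl
  map_smul' _ _ := rfl

/-- `W ⊗ k^N` -/
def pw (N : ℕ) {n : ℕ} (W : Submodule k (Fin n → k)) : Submodule k (Fin n × Fin N → k) :=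
  ⨅ b, W.comap (slc k b)

lemma mem_pw {N n : ℕ} {W : Submodule k (Fin n → k)} {u : Fin n × Fin N → k} :
    u ∈ pw N W ↔ ∀ b, slc k b u ∈ W := by
  simp [pw]

lemma finrank_pw {N n : ℕ} (W : Submodule k (Fin n → k)) :
    Module.finrank k (pw N W) = N * Module.finrank k W := by
  let e : pw N W ≃ₗ[k] (Fin N → W) :=
    { toFun := fun u b => ⟨slc k b u.1, mem_pw.1 u.2 b⟩
      map_add' := fun _ _ => rfl
      map_smul' := fun _ _ => rfl
      invFun := fun w => ⟨fun p => (w p.2).1 p.1, mem_pw.2 fun b => (w b).2⟩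
      left_inv := fun _ => rfl
      right_inv := fun _ => rfl }
  rw [e.finrank_eq, Module.finrank_pi_fintype]
  simp

lemma tm_simple {N n : ℕ} (hN : 0 < N) (hn : 0 < n) {A : κ → Matrix (Fin n) (Fin n) k}
    {X0 : κ → Matrix (Fin N) (Fin N) k} (hG : IsUnit (pe A X0)) (hA : Stab A) :
    IsSimpleModule (FreeAlgebra k (κ × Fin N × Fin N)) (VM (tm A X0)) := by
  have : Nonempty (Fin n × Fin N) := ⟨(⟨0, hn⟩, ⟨0, hN⟩)⟩
  apply VM_simple
  intro U hU
  let U' := U.map (pe A X0).mulVecLin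
  have hker : (∀ y, ∀ u ∈ U, ke A y *ᵥ u ∈ U') := by
    intro y u hu
    refine ⟨_, hU y u hu, ?_⟩
    rw [Matrix.mulVecLin_apply, Matrix.mulVec_mulVec, mul_tm hG]
  have hinj : Function.Injective (pe A X0).mulVecLin := Matrix.mulVec_injective_of_isUnit hG
  have hsurj : Function.Surjective (pe A X0).mulVecLin := Matrix.mulVec_surjective_iff_isUnit.2 hG
  have hrU : Module.finrank k U' = Module.finrank k U := (Submodule.equivMapOfInjective _ hinj U).finrank_eq.symm
  let U1 : Submodule k (Fin n → k) := ⨆ b : Fin N, U.map (slc k b)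
  let U2 : Submodule k (Fin n → k) := ⨆ o, U1.map (A o).mulVecLin
  have h1 : U ≤ pw N U1 := fun u hu => mem_pw.2 fun b =>
    Submodule.mem_iSup_of_mem b (Submodule.mem_map_of_mem hu)
  have h2 : pw N U2 ≤ U' := by
    let inj : Fin N → (Fin n → k) →ₗ[k] (Fin n × Fin N → k) := fun a =>
      { toFun := fun w p => if p.2 = a then w p.1 else 0
        map_add' := fun x y => by funext p; simp only [Pi.add_apply]; split_ifs <;> simp
        map_smul' := fun c x => by funext p; simp }
    have hk : ∀ a, U2 ≤ U'.comap (inj a) := by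
      intro a
      refine iSup_le fun o => ?_
      rw [Submodule.map_le_iff_le_comap]
      refine iSup_le fun b => ?_
      rw [Submodule.map_le_iff_le_comap]
      intro u hu
      have := hker (o, a, b) u hu
      simp only [Submodule.mem_comap]
      convert this using 1
      funext ⟨i, c⟩
      rw [ke_mulVec]
      rfl
    intro u hu
    have : u = ∑ a, inj a (slc k a u) := by
      funext ⟨i, c⟩
      rw [Finset.sum_apply]
      simp [inj, slc]
    rw [this]
    exact Submodule.sum_mem _ fun a _ => hk a (mem_pw.1 hu a)
  have hle : Module.finrank k U2 ≤ Module.finrank k U1 := by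
    have e1 := Submodule.finrank_mono h1
    have e2 := Submodule.finrank_mono h2
    rw [finrank_pw] at e1 e2
    rw [hrU] at e2
    exact Nat.le_of_mul_le_mul_left (e2.trans e1) hN
  rcases hA U1 hle with h | h
  · left
    rw [eq_bot_iff]
    intro u hu
    have := mem_pw.1 (h1 hu)
    rw [h] at this
    rw [Submodule.mem_bot]
    funext ⟨i, c⟩
    exact congrFun ((Submodule.mem_bot k).1 (this c)) i
  · right
    have hU2 : U2 = ⊤ := by
      rw [eq_top_iff]
      intro w _
      obtain ⟨v, hv⟩ := hsurj (fun p => w p.1)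
      have e := pe_mulVec A X0 v ⟨0, hN⟩
      have e2 : (fun i => (pe A X0 *ᵥ v) (i, (⟨0, hN⟩ : Fin N))) = w := by
        rw [← Matrix.mulVecLin_apply, hv]
      rw [← e2, e]
      refine Submodule.sum_mem _ fun o _ => Submodule.sum_mem _ fun b _ => Submodule.smul_mem _ _ ?_
      refine Submodule.mem_iSup_of_mem o ?_
      refine Submodule.mem_map_of_mem (f := (A o).mulVecLin) ?_
      rw [h]; trivial
    have hU' : U' = ⊤ := by
      rw [eq_top_iff]
      refine le_trans ?_ h2
      intro u _
      rw [mem_pw, hU2]; intro b; trivial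
    apply Submodule.eq_top_of_finrank_eq
    rw [← hrU, hU', finrank_top]

end Geom
end NCN

set_option linter.unusedSimpArgs false
set_option linter.unusedSectionVars false
namespace NCN
open Matrix

section Iso
variable {k : Type*} [Field k] {κ : Type} [Fintype κ]

lemma VM_hom_matrix {Y ι ι' : Type} [Fintype ι] [DecidableEq ι] [Fintype ι'] [DecidableEq ι']
    {T : Y → Matrix ι ι k} {T' : Y → Matrix ι' ι' k} (Φ : VM T →ₗ[FreeAlgebra k Y] VM T') :
    ∃ F : Matrix ι' ι k, (∀ v : ι → k, F *ᵥ v = (show ι' → k from Φ (show VM T from v))) ∧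
      ∀ y, @Eq (Matrix ι' ι k) (F * T y) (T' y * F) := by
  let φ : (ι → k) →ₗ[k] (ι' → k) :=
    { toFun := fun v => Φ (show VM T from v)
      map_add' := fun v w => Φ.map_add (show VM T from v) (show VM T from w)
      map_smul' := fun c v => by
        have h := Φ.map_smul (algebraMap k _ c) (show VM T from v)
        rw [VM_smul, AlgHom.commutes, Algebra.algebraMap_eq_smul_one, smul_mulVec, one_mulVec] at h
        refine h.trans ?_
        have h2 : ∀ w : ι' → k, (FreeAlgebra.lift k T' (algebraMap k _ c)) *ᵥ w = c • w := by
          intro w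
          rw [AlgHom.commutes, Algebra.algebraMap_eq_smul_one, smul_mulVec, one_mulVec]
        exact h2 _ }
  have h1 : ∀ v : ι → k, LinearMap.toMatrix' φ *ᵥ v = (show ι' → k from Φ (show VM T from v)) :=
    fun v => LinearMap.toMatrix'_mulVec φ v
  refine ⟨LinearMap.toMatrix' φ, h1, fun y => ?_⟩
  apply Matrix.ext_of_mulVec_single
  intro i
  rw [← mulVec_mulVec, ← mulVec_mulVec, h1, h1]
  have h := Φ.map_smul (FreeAlgebra.ι k y) (show VM T from (Pi.single i 1 : ι → k))
  rw [VM_smul, FreeAlgebra.lift_ι_apply] at h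
  refine h.trans ?_
  have h2 := VM_smul T' (FreeAlgebra.ι k y) (Φ (show VM T from (Pi.single i 1 : ι → k)))
  rw [FreeAlgebra.lift_ι_apply] at h2
  exact h2

/-- blocks -/
def blk {N m n : ℕ} (c e : Fin N) (F : Matrix (Fin m × Fin N) (Fin n × Fin N) k) :
    Matrix (Fin m) (Fin n) k := Matrix.of fun i j => F (i, c) (j, e)

lemma blk_ext {N m n : ℕ} {F F' : Matrix (Fin m × Fin N) (Fin n × Fin N) k}
    (h : ∀ c e, blk c e F = blk c e F') : F = F' := by
  ext ⟨i, c⟩ ⟨j, e⟩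
  exact congrFun (congrFun (h c e) i) j

lemma blk_mul_ke {N m n : ℕ} (F : Matrix (Fin m × Fin N) (Fin n × Fin N) k)
    (A : κ → Matrix (Fin n) (Fin n) k) (o : κ) (a b c e : Fin N) :
    blk c e (F * ke A (o, a, b)) = if b = e then blk c a F * A o else 0 := by
  ext i j
  simp only [blk, ke, Matrix.of_apply, Matrix.mul_apply, Fintype.sum_prod_type, kroneckerMap_apply,
    Matrix.single_apply]
  by_cases h : b = e
  · subst h
    simp [Matrix.mul_apply]
  · simp [h]

lemma blk_ke_mul {N m n : ℕ} (F : Matrix (Fin m × Fin N) (Fin n × Fin N) k)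
    (B : κ → Matrix (Fin m) (Fin m) k) (o : κ) (a b c e : Fin N) :
    blk c e (ke B (o, a, b) * F) = if c = a then B o * blk b e F else 0 := by
  ext i j
  simp only [blk, ke, Matrix.of_apply, Matrix.mul_apply, Fintype.sum_prod_type, kroneckerMap_apply,
    Matrix.single_apply]
  by_cases h : c = a
  · subst h
    simp [Matrix.mul_apply]
  · simp [h, Ne.symm h]

lemma blk_mul {N m n l : ℕ} (F : Matrix (Fin m × Fin N) (Fin n × Fin N) k)
    (F' : Matrix (Fin n × Fin N) (Fin l × Fin N) k) (c e : Fin N) :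
    blk c e (F * F') = ∑ b, blk c b F * blk b e F' := by
  ext i j
  simp only [blk, Matrix.of_apply, Matrix.mul_apply, Fintype.sum_prod_type, Matrix.sum_apply]
  rw [Finset.sum_comm]

lemma blk_pe {N n : ℕ} (A : κ → Matrix (Fin n) (Fin n) k) (X0 : κ → Matrix (Fin N) (Fin N) k)
    (c e : Fin N) : blk c e (pe A X0) = ∑ o, X0 o c e • A o := by
  ext i j
  simp [blk, pe_apply, Matrix.sum_apply, mul_comm]

lemma blk_kron {N m n : ℕ} (φ : Matrix (Fin m) (Fin n) k) (c e : Fin N) :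
    blk c e (kroneckerMap (· * ·) φ (1 : Matrix (Fin N) (Fin N) k)) = if c = e then φ else 0 := by
  ext i j
  simp only [blk, Matrix.of_apply, kroneckerMap_apply, Matrix.one_apply]
  split_ifs <;> simp

lemma blk_one {N n : ℕ} (c : Fin N) :
    blk c c (1 : Matrix (Fin n × Fin N) (Fin n × Fin N) k) = 1 := by
  ext i j
  simp [blk, Matrix.one_apply]

lemma iso_pencil {N n m : ℕ} (hN : 0 < N) {A : κ → Matrix (Fin n) (Fin n) k}
    {B : κ → Matrix (Fin m) (Fin m) k} {X0 : κ → Matrix (Fin N) (Fin N) k}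
    (hA : IsUnit (pe A X0)) (hB : IsUnit (pe B X0))
    (Φ : VM (tm A X0) ≃ₗ[FreeAlgebra k (κ × Fin N × Fin N)] VM (tm B X0)) :
    ∃ (P : Matrix (Fin n) (Fin m) k) (P' : Matrix (Fin m) (Fin n) k)
      (Q : Matrix (Fin m) (Fin n) k) (Q' : Matrix (Fin n) (Fin m) k),
      P * P' = 1 ∧ P' * P = 1 ∧ Q * Q' = 1 ∧ Q' * Q = 1 ∧ ∀ o, A o = P * B o * Q := by
  obtain ⟨F, hF, hFT⟩ := VM_hom_matrix Φ.toLinearMap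
  obtain ⟨F', hF', -⟩ := VM_hom_matrix Φ.symm.toLinearMap
  have hFF' : F * F' = 1 := by
    apply Matrix.ext_of_mulVec_single
    intro i
    rw [← mulVec_mulVec, hF', hF, one_mulVec]
    exact Φ.apply_symm_apply _
  have hF'F : F' * F = 1 := by
    apply Matrix.ext_of_mulVec_single
    intro i
    rw [← mulVec_mulVec, hF, hF', one_mulVec]
    exact Φ.symm_apply_apply _
  obtain ⟨GA, hGA⟩ : ∃ G, G = pe A X0 := ⟨_, rfl⟩
  obtain ⟨GB, hGB⟩ : ∃ G, G = pe B X0 := ⟨_, rfl⟩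
  have hA' := (Matrix.isUnit_iff_isUnit_det _).1 hA
  have hB' := (Matrix.isUnit_iff_isUnit_det _).1 hB
  have a1 : GA * GA⁻¹ = 1 := by rw [hGA]; exact Matrix.mul_nonsing_inv _ hA'
  have a2 : GA⁻¹ * GA = 1 := by rw [hGA]; exact Matrix.nonsing_inv_mul _ hA'
  have b1 : GB * GB⁻¹ = 1 := by rw [hGB]; exact Matrix.mul_nonsing_inv _ hB'
  have b2 : GB⁻¹ * GB = 1 := by rw [hGB]; exact Matrix.nonsing_inv_mul _ hB'
  obtain ⟨Ψ, hΨ⟩ : ∃ Ψ, Ψ = GB * F * GA⁻¹ := ⟨_, rfl⟩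
  obtain ⟨Ψ', hΨ'⟩ : ∃ Ψ', Ψ' = GA * F' * GB⁻¹ := ⟨_, rfl⟩
  have hΨΨ' : Ψ * Ψ' = 1 := by
    calc Ψ * Ψ' = GB * F * (GA⁻¹ * GA) * F' * GB⁻¹ := by rw [hΨ, hΨ']; simp only [Matrix.mul_assoc]
      _ = GB * (F * F') * GB⁻¹ := by rw [a2]; simp only [Matrix.mul_assoc, Matrix.one_mul]
      _ = 1 := by rw [hFF', Matrix.mul_one, b1]
  have hΨ'Ψ : Ψ' * Ψ = 1 := by
    calc Ψ' * Ψ = GA * F' * (GB⁻¹ * GB) * F * GA⁻¹ := by rw [hΨ, hΨ']; simp only [Matrix.mul_assoc]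
      _ = GA * (F' * F) * GA⁻¹ := by rw [b2]; simp only [Matrix.mul_assoc, Matrix.one_mul]
      _ = 1 := by rw [hF'F, Matrix.mul_one, a1]
  have hrel : ∀ y (KA : Matrix (Fin n × Fin N) (Fin n × Fin N) k)
      (KB : Matrix (Fin m × Fin N) (Fin m × Fin N) k), KA = ke A y → KB = ke B y →
      Ψ * KA = KB * F := by
    intro y KA KB hKA hKB
    have h1 : tm A X0 y = GA⁻¹ * KA := by rw [tm, ← hGA, ← hKA]
    have h2 : tm B X0 y = GB⁻¹ * KB := by rw [tm, ← hGB, ← hKB]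
    have h3 : F * (GA⁻¹ * KA) = GB⁻¹ * KB * F := by
      rw [← h1, ← h2]; exact hFT y
    calc Ψ * KA = GB * (F * (GA⁻¹ * KA)) := by rw [hΨ]; simp only [Matrix.mul_assoc]
      _ = (GB * GB⁻¹) * KB * F := by rw [h3]; simp only [Matrix.mul_assoc]
      _ = KB * F := by rw [b1, Matrix.one_mul]
  have hblk : ∀ o a b c e, (if b = e then blk c a Ψ * A o else 0) =
      if c = a then B o * blk b e F else 0 := by
    intro o a b c e
    rw [← blk_mul_ke, ← blk_ke_mul, hrel _ _ _ rfl rfl]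
  let z : Fin N := ⟨0, hN⟩
  let φ := blk z z F
  let ψ := blk z z Ψ
  have h0 : ∀ o, ψ * A o = B o * φ := fun o => by simpa using hblk o z z z z
  have hFk : F = kroneckerMap (· * ·) φ (1 : Matrix (Fin N) (Fin N) k) := by
    have : GB * F = GB * kroneckerMap (· * ·) φ (1 : Matrix (Fin N) (Fin N) k) := by
      apply blk_ext
      intro c e
      rw [blk_mul, blk_mul]
      refine Finset.sum_congr rfl fun b _ => ?_
      rw [hGB, blk_pe, Matrix.sum_mul, Matrix.sum_mul]
      refine Finset.sum_congr rfl fun o _ => ?_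
      rw [Matrix.smul_mul, Matrix.smul_mul, blk_kron]
      congr 1
      have := hblk o z b z e
      rw [if_pos rfl] at this
      rw [← this]
      split_ifs
      · exact h0 o
      · simp
    rw [← Matrix.one_mul F, ← b2, Matrix.mul_assoc, this, ← Matrix.mul_assoc, b2, Matrix.one_mul]
  have hΨk : Ψ = kroneckerMap (· * ·) ψ (1 : Matrix (Fin N) (Fin N) k) := by
    have : Ψ * GA = kroneckerMap (· * ·) ψ (1 : Matrix (Fin N) (Fin N) k) * GA := by
      apply blk_ext
      intro c e
      rw [blk_mul, blk_mul]
      refine Finset.sum_congr rfl fun b _ => ?_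
      rw [hGA, blk_pe, Matrix.mul_sum, Matrix.mul_sum]
      refine Finset.sum_congr rfl fun o _ => ?_
      rw [Matrix.mul_smul, Matrix.mul_smul, blk_kron]
      congr 1
      have := hblk o b z c z
      rw [if_pos rfl] at this
      rw [this]
      split_ifs
      · exact (h0 o).symm
      · simp
    rw [← Matrix.mul_one Ψ, ← a1, ← Matrix.mul_assoc, this, Matrix.mul_assoc, a1, Matrix.mul_one]
  have l1 : ∀ {p q : ℕ} {φ : Matrix (Fin p) (Fin q) k} {F' : Matrix (Fin q × Fin N) (Fin p × Fin N) k},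
      kroneckerMap (· * ·) φ (1 : Matrix (Fin N) (Fin N) k) * F' = 1 → φ * blk z z F' = 1 := by
    intro p q φ F' h
    have := congrArg (blk z z) h
    rw [blk_mul, blk_one, Finset.sum_eq_single z, blk_kron, if_pos rfl] at this
    · exact this
    · intro b _ hb
      rw [blk_kron, if_neg (Ne.symm hb), Matrix.zero_mul]
    · intro h; exact absurd (Finset.mem_univ _) h
  have l2 : ∀ {p q : ℕ} {φ : Matrix (Fin p) (Fin q) k} {F' : Matrix (Fin q × Fin N) (Fin p × Fin N) k},
      F' * kroneckerMap (· * ·) φ (1 : Matrix (Fin N) (Fin N) k) = 1 → blk z z F' * φ = 1 := by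
    intro p q φ F' h
    have := congrArg (blk z z) h
    rw [blk_mul, blk_one, Finset.sum_eq_single z, blk_kron, if_pos rfl] at this
    · exact this
    · intro b _ hb
      rw [blk_kron, if_neg hb, Matrix.mul_zero]
    · intro h; exact absurd (Finset.mem_univ _) h
  rw [hFk] at hFF' hF'F
  rw [hΨk] at hΨΨ' hΨ'Ψ
  refine ⟨blk z z Ψ', ψ, φ, blk z z F', l2 hΨ'Ψ, l1 hΨΨ', l1 hFF', l2 hF'F, fun o => ?_⟩
  rw [Matrix.mul_assoc, ← h0, ← Matrix.mul_assoc, l2 hΨ'Ψ, Matrix.one_mul]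

/-- the evaluation point -/
def xpt {N e : ℕ} (H : Option (κ × Fin N × Fin N) → Matrix (Fin e) (Fin e) k)
    (X0 : κ → Matrix (Fin N) (Fin N) k) (o : κ) : Matrix (Fin e × Fin N) (Fin e × Fin N) k :=
  kroneckerMap (· * ·) (H none) (X0 o) +
    ∑ y : Fin N × Fin N, kroneckerMap (· * ·) (H (some (o, y))) (Matrix.single y.1 y.2 1)

lemma pe_xpt {N n e : ℕ} {A : κ → Matrix (Fin n) (Fin n) k} {X0 : κ → Matrix (Fin N) (Fin N) k}
    (hA : IsUnit (pe A X0)) {h : FreeAlgebra k (κ × Fin N × Fin N)}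
    {H : Option (κ × Fin N × Fin N) → Matrix (Fin e) (Fin e) k} (hH : HE (pm h) (lp H)) :
    IsUnit (pe A (xpt H X0)) ↔ IsUnit (FreeAlgebra.lift k (tm A X0) h) := by
  rw [eval_unit hH]
  let σ : Fin n × (Fin e × Fin N) ≃ Fin e × (Fin n × Fin N) :=
    ⟨fun p => (p.2.1, p.1, p.2.2), fun p => (p.2.1, p.1, p.2.2), fun _ => rfl, fun _ => rfl⟩
  have e1 : kroneckerMap (· * ·) (1 : Matrix (Fin e) (Fin e) k) (pe A X0) *
      pe H (fun o => Option.elim o 1 (tm A X0)) =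
      kroneckerMap (· * ·) (H none) (pe A X0) + ∑ y, kroneckerMap (· * ·) (H (some y)) (ke A y) := by
    have := fun o => (Matrix.mul_kronecker_mul (1 : Matrix (Fin e) (Fin e) k) (H o) (pe A X0)
      ((fun o => Option.elim o 1 (tm A X0)) o)).symm
    simp only [Matrix.kronecker] at this
    have hpe : pe H (fun o => Option.elim o 1 (tm A X0)) =
      ∑ o, kroneckerMap (· * ·) (H o) (Option.elim o 1 (tm A X0)) := rfl
    rw [hpe, Matrix.mul_sum, Fintype.sum_option]
    have t1 := this none
    have t2 := fun y => this (some y)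
    simp only [Option.elim, Matrix.one_mul, Matrix.mul_one, mul_tm hA] at t1 t2
    exact congrArg₂ (· + ·) t1 (Finset.sum_congr rfl fun y _ => t2 y)
  have e2 : pe A (xpt H X0) = (kroneckerMap (· * ·) (1 : Matrix (Fin e) (Fin e) k) (pe A X0) *
      pe H (fun o => Option.elim o 1 (tm A X0))).submatrix σ σ := by
    rw [e1]
    ext ⟨i, p, a⟩ ⟨j, q, b⟩
    simp only [pe_apply, xpt, Matrix.submatrix_apply, Matrix.add_apply, Matrix.sum_apply,
      kroneckerMap_apply, σ, Equiv.coe_fn_mk, ke, mul_add, Finset.sum_add_distrib,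
      Finset.mul_sum]
    congr 1
    · refine Finset.sum_congr rfl fun o _ => ?_
      ring
    · rw [Fintype.sum_prod_type]
      refine Finset.sum_congr rfl fun o _ => Finset.sum_congr rfl fun y _ => ?_
      ring
  rw [e2, Matrix.isUnit_submatrix_equiv]
  have hk : IsUnit (kroneckerMap (· * ·) (1 : Matrix (Fin e) (Fin e) k) (pe A X0)) := by
    obtain ⟨⟨G, G', h1, h2⟩, hG⟩ := hA
    simp only at hG
    rw [← hG]
    have m := fun G G' : Matrix (Fin n × Fin N) (Fin n × Fin N) k =>
      (Matrix.mul_kronecker_mul (1 : Matrix (Fin e) (Fin e) k) (1 : Matrix (Fin e) (Fin e) k) G G').symm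
    simp only [Matrix.kronecker] at m
    apply isUnit_of_two (b := kroneckerMap (· * ·) (1 : Matrix (Fin e) (Fin e) k) G')
    · rw [m, h1, Matrix.one_mul]; exact Matrix.one_kronecker_one
    · rw [m, h2, Matrix.one_mul]; exact Matrix.one_kronecker_one
  obtain ⟨K, hK⟩ := hk
  rw [← hK, Units.isUnit_units_mul]

lemma geometric {τ : Type} [Fintype τ] [DecidableEq τ] {m : τ → ℕ} (hm : ∀ t, 0 < m t)
    (B : ∀ t, κ → Matrix (Fin (m t)) (Fin (m t)) k) (hB : ∀ t, Stab (B t)) {N : ℕ} (hN : 0 < N)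
    (X0 : κ → Matrix (Fin N) (Fin N) k) (hX0 : ∀ t, IsUnit (pe (B t) X0)) (t0 : τ)
    (hne : ∀ t ≠ t0, ¬ ∃ (P : Matrix (Fin (m t0)) (Fin (m t)) k) (P' : Matrix (Fin (m t)) (Fin (m t0)) k)
      (Q : Matrix (Fin (m t)) (Fin (m t0)) k) (Q' : Matrix (Fin (m t0)) (Fin (m t)) k),
      P * P' = 1 ∧ P' * P = 1 ∧ Q * Q' = 1 ∧ Q' * Q = 1 ∧ ∀ o, B t0 o = P * B t o * Q) :
    ∃ (ν : Type) (_ : Fintype ν) (_ : DecidableEq ν) (Y : κ → Matrix ν ν k),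
      ¬ IsUnit (pe (B t0) Y) ∧ ∀ t ≠ t0, IsUnit (pe (B t) Y) := by
  obtain ⟨r, h1, h2⟩ := density (fun t => tm (B t) X0)
    (fun t => tm_simple hN (hm t) (hX0 t) (hB t)) t0
    (fun t ht => ⟨fun Φ => hne t ht (iso_pencil hN (hX0 t0) (hX0 t) Φ)⟩)
  obtain ⟨e, H, hH⟩ := linearize (1 - r)
  refine ⟨Fin e × Fin N, inferInstance, inferInstance, xpt H X0, ?_, ?_⟩
  · rw [pe_xpt (hX0 t0) hH, map_sub, map_one, h1, sub_self]
    have : Nonempty (Fin (m t0) × Fin N) := ⟨(⟨0, hm t0⟩, ⟨0, hN⟩)⟩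
    exact not_isUnit_zero
  · intro t ht
    rw [pe_xpt (hX0 t) hH, map_sub, map_one, h2 t ht, sub_zero]
    exact isUnit_one

end Iso
end NCN

set_option linter.unusedSimpArgs false
set_option linter.unusedSectionVars false
namespace NCN
open Matrix

section Final
variable {k : Type*} [Field k]

lemma one_pencil {X : Type} [Fintype X] [DecidableEq X] :
    ∃ (n : ℕ) (A : Option X → Matrix (Fin n) (Fin n) k),
      0 < n ∧ HE (pm (1 : FreeAlgebra k X)) (lp A) ∧ Stab A ∧ A none = 1 ∧ ∀ x, A (some x) = 0 := by
  refine ⟨1, cp 1, one_pos, ?_, ?_, rfl, fun _ => rfl⟩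
  · rw [lp_cp, cm_one]
    have h1 : (pm (1 : FreeAlgebra k X)) = (1 : Matrix (Fin 1) (Fin 1) (FreeAlgebra k X)).submatrix
        (Equiv.ofUnique Unit (Fin 1)) (Equiv.ofUnique Unit (Fin 1)) := by
      ext i j; simp [pm]
    rw [h1]
    exact HE_reindex _ _
  · intro U _
    have h1 : Module.finrank k U ≤ 1 := by
      have := Submodule.finrank_le U
      simpa using this
    rcases Nat.le_one_iff_eq_zero_or_eq_one.1 h1 with h | h
    · left; exact Submodule.finrank_eq_zero.1 h
    · right; apply Submodule.eq_top_of_finrank_eq; rw [h]; simp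

lemma irr_pencil {X : Type} [Fintype X] [DecidableEq X] {p : FreeAlgebra k X} (hp : Irreducible p) :
    ∃ (n : ℕ) (A : Option X → Matrix (Fin n) (Fin n) k),
      0 < n ∧ HE (pm p) (lp A) ∧ Stab A := by
  obtain ⟨n, A, h, hs⟩ := stable_pencil hp
  refine ⟨n, A, Nat.pos_of_ne_zero ?_, h, hs⟩
  rintro rfl
  exact hp.not_isUnit (isUnit_pm.1 (h.isUnit (isUnit_of_subsingleton _)))

lemma HE_of_pencil {X : Type} [Fintype X] [DecidableEq X] {n m : ℕ} {p q : FreeAlgebra k X}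
    {A : Option X → Matrix (Fin n) (Fin n) k} {B : Option X → Matrix (Fin m) (Fin m) k}
    (hA : HE (pm p) (lp A)) (hB : HE (pm q) (lp B))
    (h : ∃ (P : Matrix (Fin n) (Fin m) k) (P' : Matrix (Fin m) (Fin n) k)
      (Q : Matrix (Fin m) (Fin n) k) (Q' : Matrix (Fin n) (Fin m) k),
      P * P' = 1 ∧ P' * P = 1 ∧ Q * Q' = 1 ∧ Q' * Q = 1 ∧ ∀ o, A o = P * B o * Q) :
    HE (pm p) (pm q) := by
  obtain ⟨P, P', Q, Q', h1, h2, h3, h4, h5⟩ := h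
  refine (hA.trans ?_).trans hB.symm
  have e : A = fun o => P * B o * Q := funext h5
  refine HE_equiv (P := (cm P : Matrix _ _ (FreeAlgebra k X))) (P' := cm P') (Q := cm Q) (Q' := cm Q')
    ?_ ?_ ?_ ?_ ?_
  · rw [← cm_mul, h1, cm_one]
  · rw [← cm_mul, h2, cm_one]
  · rw [← cm_mul, h3, cm_one]
  · rw [← cm_mul, h4, cm_one]
  · rw [← lp_mul, ← e]

lemma separate [Infinite k] {X : Type} [Fintype X] [DecidableEq X] {p : FreeAlgebra k X}
    (hp : Irreducible p) (qs : List (FreeAlgebra k X)) (hq : ∀ q ∈ qs, Irreducible q)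
    (hne : ∀ q ∈ qs, ¬ HE (pm p) (pm q)) :
    ∃ (n : ℕ) (_ : 1 ≤ n) (T : X → Matrix (Fin n) (Fin n) k),
      ¬ IsUnit (FreeAlgebra.lift k T p) ∧ ∀ q ∈ qs, IsUnit (FreeAlgebra.lift k T q) := by
  let h : Option (Option (Fin qs.length)) → FreeAlgebra k X :=
    fun t => t.elim p (fun t => t.elim 1 (fun i => qs[i]))
  obtain ⟨n0, A0, hn0, hA0, hS0, hA0n, hA0s⟩ := one_pencil (k := k) (X := X)
  have hex : ∀ t, ∃ (nA : Σ n : ℕ, Option X → Matrix (Fin n) (Fin n) k),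
      0 < nA.1 ∧ HE (pm (h t)) (lp nA.2) ∧ Stab nA.2 ∧ (t = some none → nA = ⟨n0, A0⟩) := by
    rintro (_ | _ | i)
    · obtain ⟨n, A, h1, h2, h3⟩ := irr_pencil hp
      exact ⟨⟨n, A⟩, h1, h2, h3, by simp⟩
    · exact ⟨⟨n0, A0⟩, hn0, hA0, hS0, fun _ => rfl⟩
    · obtain ⟨n, A, h1, h2, h3⟩ := irr_pencil (hq qs[i] (List.getElem_mem _))
      exact ⟨⟨n, A⟩, h1, h2, h3, by simp⟩
  choose nA hpos hHE hS hnA using hex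
  have hprod : (p * qs.prod : FreeAlgebra k X) ≠ 0 := by
    refine mul_ne_zero hp.ne_zero (List.prod_ne_zero ?_)
    intro h0; exact (hq 0 h0).ne_zero rfl
  obtain ⟨N, hN, T, hT⟩ := nonsing_eval _ hprod
  rw [map_mul, det_mul, map_list_prod] at hT
  have hTp : IsUnit (FreeAlgebra.lift k T p) := by
    rw [Matrix.isUnit_iff_isUnit_det, isUnit_iff_ne_zero]; exact left_ne_zero_of_mul hT
  have hTq : ∀ q ∈ qs, IsUnit (FreeAlgebra.lift k T q) := by
    intro q hqq
    rw [Matrix.isUnit_iff_isUnit_det, isUnit_iff_ne_zero]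
    have h2 := right_ne_zero_of_mul hT
    rw [← Matrix.coe_detMonoidHom, map_list_prod, List.map_map] at h2
    intro h0
    apply h2
    apply List.prod_eq_zero
    exact List.mem_map.2 ⟨q, hqq, h0⟩
  have hTh : ∀ t, IsUnit (FreeAlgebra.lift k T (h t)) := by
    rintro (_ | _ | i)
    · exact hTp
    · simp only [h, Option.elim, map_one]; exact isUnit_one
    · exact hTq _ (List.getElem_mem _)
  obtain ⟨ν, hν, hν', Y, hY0, hY⟩ := geometric hpos (fun t => (nA t).2) hS (by omega : 0 < N)
    (fun o => Option.elim o 1 T) (fun t => (eval_unit (hHE t) T).1 (hTh t)) none (by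
      rintro (_ | _ | i) ht hP
      · exact ht rfl
      · have h1 := HE_of_pencil (hHE none) (hHE (some none)) hP
        exact hp.not_isUnit (isUnit_pm.1 (h1.isUnit (isUnit_pm.2 isUnit_one)))
      · exact hne _ (List.getElem_mem i.2) (HE_of_pencil (hHE none) (hHE (some (some i))) hP))
  have hYn : IsUnit (Y none) := by
    have h1 := hY (some none) (by simp)
    rw [hnA _ rfl] at h1
    have h2 : pe A0 Y = kroneckerMap (· * ·) (1 : Matrix (Fin n0) (Fin n0) k) (Y none) := by
      rw [pe, Fintype.sum_option, hA0n]
      simp only [hA0s]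
      ext i j
      simp [Matrix.sum_apply]
    rw [h2, Matrix.isUnit_iff_isUnit_det, isUnit_iff_ne_zero] at h1
    rw [Matrix.isUnit_iff_isUnit_det, isUnit_iff_ne_zero]
    intro h3
    apply h1
    have := Matrix.det_kronecker (1 : Matrix (Fin n0) (Fin n0) k) (Y none)
    refine this.trans ?_
    rw [h3]
    simp [hn0.ne']
  have hYd := (Matrix.isUnit_iff_isUnit_det _).1 hYn
  let T' : X → Matrix ν ν k := fun x => (Y none)⁻¹ * Y (some x)
  have key : ∀ t, IsUnit (FreeAlgebra.lift k T' (h t)) ↔ IsUnit (pe (nA t).2 Y) := by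
    intro t
    rw [eval_unit (hHE t) T']
    have e : pe (nA t).2 Y = kroneckerMap (· * ·) (1 : Matrix (Fin (nA t).1) (Fin (nA t).1) k) (Y none) *
        pe (nA t).2 (fun o => Option.elim o 1 T') := by
      have hpe : pe (nA t).2 (fun o => Option.elim o 1 T') =
        ∑ o, kroneckerMap (· * ·) ((nA t).2 o) (Option.elim o 1 T') := rfl
      rw [hpe, Matrix.mul_sum, pe]
      refine Finset.sum_congr rfl fun o _ => ?_
      have := (Matrix.mul_kronecker_mul (1 : Matrix (Fin (nA t).1) (Fin (nA t).1) k) ((nA t).2 o)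
        (Y none) (Option.elim o 1 T'))
      refine Eq.trans ?_ this
      rw [Matrix.one_mul]
      congr 1
      cases o with
      | none => simp
      | some x => simp only [Option.elim, T']; rw [← Matrix.mul_assoc, Matrix.mul_nonsing_inv _ hYd, Matrix.one_mul]
    have hk : IsUnit (kroneckerMap (· * ·) (1 : Matrix (Fin (nA t).1) (Fin (nA t).1) k) (Y none)) := by
      have := Matrix.det_kronecker (1 : Matrix (Fin (nA t).1) (Fin (nA t).1) k) (Y none)
      rw [Matrix.isUnit_iff_isUnit_det]
      rw [this, det_one, one_pow, one_mul]
      exact hYd.pow _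
    obtain ⟨K, hK⟩ := hk
    rw [e, ← hK, Units.isUnit_units_mul]
  have c1 : ¬ IsUnit (FreeAlgebra.lift k T' p) := fun h1 => hY0 ((key none).1 h1)
  have c2 : ∀ q ∈ qs, IsUnit (FreeAlgebra.lift k T' q) := by
    intro q hqq
    obtain ⟨i, hi, rfl⟩ := List.mem_iff_getElem.1 hqq
    exact (key (some (some ⟨i, hi⟩))).2 (hY _ (by simp))
  have hne' : Nonempty ν := by
    by_contra h0
    rw [not_nonempty_iff] at h0
    exact c1 (isUnit_of_subsingleton _)
  let e := Fintype.equivFin ν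
  let Θ := Matrix.reindexAlgEquiv k k e
  have hΘ : ∀ f, FreeAlgebra.lift k (fun x => Θ (T' x)) f = Θ (FreeAlgebra.lift k T' f) := by
    intro f
    have : FreeAlgebra.lift k (fun x => Θ (T' x)) = (Θ : _ →ₐ[k] _).comp (FreeAlgebra.lift k T') := by
      ext x; simp
    rw [this]; rfl
  refine ⟨Fintype.card ν, Fintype.card_pos, fun x => Θ (T' x), ?_, ?_⟩
  · rw [hΘ, MulEquiv.isUnit_map]; exact c1
  · intro q hqq; rw [hΘ, MulEquiv.isUnit_map]; exact c2 q hqq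

/-- joint block diagonal evaluation -/
lemma block_eval {d : ℕ} {ι : Type} [Fintype ι] [LinearOrder ι] [Nonempty ι] (n : ι → ℕ)
    (hn : ∀ j, 1 ≤ n j) (X : ∀ j, Fin d → Matrix (Fin (n j)) (Fin (n j)) k) :
    ∃ (N : ℕ) (_ : 1 ≤ N) (Y : Fin d → Matrix (Fin N) (Fin N) k),
      ∀ f, (FreeAlgebra.lift k Y f).det = ∏ j, (FreeAlgebra.lift k (X j) f).det := by
  let e := Fintype.equivFin (Σ j, Fin (n j))
  let Θ := Matrix.reindexAlgEquiv k k e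
  have : Nonempty (Σ j, Fin (n j)) := ⟨⟨Classical.arbitrary ι, ⟨0, hn _⟩⟩⟩
  let D : Fin d → Matrix (Σ j, Fin (n j)) (Σ j, Fin (n j)) k := fun x => blockDiagonal' fun j => X j x
  have hD : ∀ f, FreeAlgebra.lift k D f = blockDiagonal' fun j => FreeAlgebra.lift k (X j) f := by
    intro f
    induction f using FreeAlgebra.induction with
    | grade0 r =>
      simp only [AlgHom.commutes]
      simp only [Algebra.algebraMap_eq_smul_one]
      have := Matrix.blockDiagonal'_smul r (fun j => (1 : Matrix (Fin (n j)) (Fin (n j)) k))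
      rw [show (fun j => r • (1 : Matrix (Fin (n j)) (Fin (n j)) k)) =
        r • (fun j => (1 : Matrix (Fin (n j)) (Fin (n j)) k)) from rfl, this]
      congr 1
      exact Matrix.blockDiagonal'_one.symm
    | grade1 x => simp [D]
    | mul a b ha hb => simp only [map_mul, ha, hb, Matrix.blockDiagonal'_mul]
    | add a b ha hb =>
      simp only [map_add, ha, hb]
      exact (Matrix.blockDiagonal'_add _ _).symm
  have hΘ : ∀ f, FreeAlgebra.lift k (fun x => Θ (D x)) f = Θ (FreeAlgebra.lift k D f) := by
    intro f
    have : FreeAlgebra.lift k (fun x => Θ (D x)) = (Θ : _ →ₐ[k] _).comp (FreeAlgebra.lift k D) := by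
      ext x; simp
    rw [this]; rfl
  refine ⟨Fintype.card (Σ j, Fin (n j)), Fintype.card_pos, fun x => Θ (D x), fun f => ?_⟩
  rw [hΘ, hD]
  simp only [Θ, Matrix.coe_reindexAlgEquiv, Matrix.det_reindex_self]
  rw [(Matrix.blockTriangular_blockDiagonal' _).det_fintype]
  refine Finset.prod_congr rfl fun j _ => ?_
  let σ : Fin (n j) ≃ {a : Σ j, Fin (n j) // a.1 = j} := (Equiv.sigmaSubtype (β := fun j => Fin (n j)) j).symm
  rw [← Matrix.det_submatrix_equiv_self σ]
  congr 1
  ext a b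
  simp [σ, Matrix.toSquareBlock_def, Equiv.sigmaSubtype]

lemma det_lift_prod {d n : ℕ} (X : Fin d → Matrix (Fin n) (Fin n) k) (u : k)
    (ps : List (FreeAlgebra k (Fin d))) :
    (FreeAlgebra.lift k X (algebraMap k _ u * ps.prod)).det =
      u ^ n * (ps.map fun p => (FreeAlgebra.lift k X p).det).prod := by
  rw [map_mul, det_mul, AlgHom.commutes, Matrix.algebraMap_eq_diagonal, map_list_prod,
    ← Matrix.coe_detMonoidHom, map_list_prod, List.map_map]
  congr 1
  simp

lemma sa_isUnit {d n : ℕ} {p q : FreeAlgebra k (Fin d)} (h : StablyAssociated p q)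
    (X : Fin d → Matrix (Fin n) (Fin n) k) (hp : (FreeAlgebra.lift k X p).det = 0) :
    (FreeAlgebra.lift k X q).det = 0 := by
  have h1 := ((HE_of_sa h).map ((FreeAlgebra.lift k X : _ →ₐ[k] Matrix (Fin n) (Fin n) k) :
    FreeAlgebra k (Fin d) →+* Matrix (Fin n) (Fin n) k)).isUnit_iff
  have e1 : ∀ h, (pm h).map ((FreeAlgebra.lift k X : _ →ₐ[k] Matrix (Fin n) (Fin n) k) :
      FreeAlgebra k (Fin d) →+* Matrix (Fin n) (Fin n) k) =
      pm (FreeAlgebra.lift k X h) := by intro h; ext; simp [pm]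
  rw [e1, e1, isUnit_pm, isUnit_pm, Matrix.isUnit_iff_isUnit_det, Matrix.isUnit_iff_isUnit_det,
    isUnit_iff_ne_zero, isUnit_iff_ne_zero, not_iff_not] at h1
  exact h1.1 hp

end Final
end NCN

/-- Helton–Klep–Volčič determinantal Nullstellensatz: `g` is singular wherever all
`f_j` are singular iff, for some `j`, every irreducible factor of `f_j` is stably
associated to an irreducible factor of `g`. -/
theorem determinantal_nullstellensatz
    (k : Type*) [Field k] [IsAlgClosed k] [CharZero k]
    (d ℓ : ℕ) (hd : 1 ≤ d)
    (f : Fin ℓ → FreeAlgebra k (Fin d)) (g : FreeAlgebra k (Fin d))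
    (hf : ∀ j, f j ≠ 0) (hg : g ≠ 0) :
    (∀ (n : ℕ), 1 ≤ n → ∀ X : Fin d → Matrix (Fin n) (Fin n) k,
        (∀ j, (ncEval X (f j)).det = 0) → (ncEval X g).det = 0) ↔
      (∃ j : Fin ℓ, ∃ (u u' : k) (ps qs : List (FreeAlgebra k (Fin d))),
        u ≠ 0 ∧ u' ≠ 0 ∧
        (∀ p ∈ ps, Irreducible p) ∧ (∀ q ∈ qs, Irreducible q) ∧
        f j = algebraMap k (FreeAlgebra k (Fin d)) u * ps.prod ∧
        g = algebraMap k (FreeAlgebra k (Fin d)) u' * qs.prod ∧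
        ∀ p ∈ ps, ∃ q ∈ qs, StablyAssociated p q) := by
  have hinf : Infinite k := inferInstance
  unfold ncEval
  constructor
  · intro H
    have hj : ∃ j, ∀ (n : ℕ), 1 ≤ n → ∀ X : Fin d → Matrix (Fin n) (Fin n) k,
        (FreeAlgebra.lift k X (f j)).det = 0 → (FreeAlgebra.lift k X g).det = 0 := by
      by_contra hcon
      push Not at hcon
      choose n hn X h1 h2 using hcon
      rcases Nat.eq_zero_or_pos ℓ with h0 | h0
      · subst h0
        obtain ⟨n, hn, T, hT⟩ := NCN.nonsing_eval g hg
        exact hT (H n hn T (fun j => j.elim0))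
      · have : Nonempty (Fin ℓ) := ⟨⟨0, h0⟩⟩
        obtain ⟨N, hN, Y, hY⟩ := NCN.block_eval n hn X
        have h3 := H N hN Y (fun j => by
          rw [hY]; exact Finset.prod_eq_zero (Finset.mem_univ j) (h1 j))
        rw [hY] at h3
        exact Finset.prod_ne_zero_iff.2 (fun j _ => h2 j) h3
    obtain ⟨j, hj⟩ := hj
    obtain ⟨u, ps, hu, hps, hfe⟩ := NCN.exists_factor (f j) (hf j)
    obtain ⟨u', qs, hu', hqs, hge⟩ := NCN.exists_factor g hg
    refine ⟨j, u, u', ps, qs, hu, hu', hps, hqs, hfe, hge, fun p hp => ?_⟩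
    by_contra hcon
    push Not at hcon
    obtain ⟨n, hn, T, h1, h2⟩ := NCN.separate (hps p hp) qs hqs (fun q hq h =>
      hcon q hq (NCN.sa_of_HE (hps p hp).ne_zero (hqs q hq).ne_zero h))
    have h3 := hj n hn T (by
      rw [hfe, NCN.det_lift_prod, mul_eq_zero]
      right
      apply List.prod_eq_zero
      refine List.mem_map.2 ⟨p, hp, ?_⟩
      by_contra h4
      exact h1 ((Matrix.isUnit_iff_isUnit_det _).2 (isUnit_iff_ne_zero.2 h4)))
    rw [hge, NCN.det_lift_prod] at h3
    refine mul_ne_zero (pow_ne_zero _ hu') (List.prod_ne_zero ?_) h3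
    intro h0
    obtain ⟨q, hq, h5⟩ := List.mem_map.1 h0
    exact isUnit_iff_ne_zero.1 ((Matrix.isUnit_iff_isUnit_det _).1 (h2 q hq)) h5
  · rintro ⟨j, u, u', ps, qs, hu, hu', hps, hqs, hfe, hge, hsa⟩ n hn X hX
    have h1 := hX j
    rw [hfe, NCN.det_lift_prod, mul_eq_zero] at h1
    have h2 := h1.resolve_left (pow_ne_zero _ hu)
    rw [List.prod_eq_zero_iff] at h2
    obtain ⟨p, hp, h3⟩ := List.mem_map.1 h2
    obtain ⟨q, hq, hpq⟩ := hsa p hp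
    rw [hge, NCN.det_lift_prod, mul_eq_zero]
    right
    apply List.prod_eq_zero
    exact List.mem_map.2 ⟨q, hq, NCN.sa_isUnit hpq X h3⟩
end

section
/- Let f_1,…,f_ℓ, g ∈ k⟨x_1,…,x_d⟩ be nonzero. If for every n ≥ 1 and every X ∈ M_n(k)^d the conditions det f_1(X) = … = det f_ℓ(X) = 0 imply det g(X) = 0, then there exists an index j ∈ {1,…,ℓ} such that for every n ≥ 1 and every X ∈ M_n(k)^d, det f_j(X) = 0 implies det g(X) = 0. -/
namespace NCAux

open Matrix

/-- Transfer a tuple indexed by a general finite type to `Fin n`. -/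
lemma transfer {k : Type*} [Field k] {d : ℕ} {ι : Type*} [Fintype ι] [DecidableEq ι] [Nonempty ι]
    (X : Fin d → Matrix ι ι k) :
    ∃ n : ℕ, 1 ≤ n ∧ ∃ Y : Fin d → Matrix (Fin n) (Fin n) k,
      ∀ f : FreeAlgebra k (Fin d), (ncEval Y f).det = (FreeAlgebra.lift k X f).det := by
  refine ⟨Fintype.card ι, Fintype.card_pos,
    fun i => Matrix.reindexAlgEquiv k k (Fintype.equivFin ι) (X i), fun f => ?_⟩
  have key : FreeAlgebra.lift k
      (fun i => Matrix.reindexAlgEquiv k k (Fintype.equivFin ι) (X i)) =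
      (Matrix.reindexAlgEquiv k k (Fintype.equivFin ι)).toAlgHom.comp (FreeAlgebra.lift k X) := by
    ext i
    simp
  rw [ncEval, key]
  exact Matrix.det_reindexAlgEquiv k k _ _

/-- Evaluation at a direct sum. -/
lemma lift_fromBlocks {k : Type*} [Field k] {d : ℕ} {ι κ : Type*} [Fintype ι] [DecidableEq ι]
    [Fintype κ] [DecidableEq κ]
    (X : Fin d → Matrix ι ι k) (Y : Fin d → Matrix κ κ k) (f : FreeAlgebra k (Fin d)) :
    FreeAlgebra.lift k (fun i => Matrix.fromBlocks (X i) 0 0 (Y i)) f =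
      Matrix.fromBlocks (FreeAlgebra.lift k X f) 0 0 (FreeAlgebra.lift k Y f) := by
  induction f using FreeAlgebra.induction with
  | grade0 r =>
    rw [AlgHom.commutes, AlgHom.commutes, AlgHom.commutes]
    simp only [Algebra.algebraMap_eq_smul_one]
    rw [← Matrix.fromBlocks_one, Matrix.fromBlocks_smul]
    simp
  | grade1 x => simp
  | mul a b ha hb => simp [ha, hb, Matrix.fromBlocks_multiply]
  | add a b ha hb => simp [ha, hb, Matrix.fromBlocks_add]

/-- The product of weights of a cyclic weighted shift along a word. -/
def wt {R : Type*} [CommSemiring R] {d N : ℕ} (a : Fin d → ZMod N → R) :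
    List (Fin d) → ZMod N → R
  | [], _ => 1
  | i :: w, r => a i r * wt a w (r + 1)

lemma map_wt {R S : Type*} [CommSemiring R] [CommSemiring S] (φ : R →+* S) {d N : ℕ}
    (a : Fin d → ZMod N → R) (w : List (Fin d)) (r : ZMod N) :
    φ (wt a w r) = wt (fun i x => φ (a i x)) w r := by
  induction w generalizing r with
  | nil => simp [wt]
  | cons i w ih => simp [wt, ih]

/-- Weighted cyclic shifts. -/
def sh {R : Type*} [CommSemiring R] {d N : ℕ} (a : Fin d → ZMod N → R) (i : Fin d) :
    Matrix (ZMod N) (ZMod N) R :=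
  Matrix.of fun r c => if c = r + 1 then a i r else 0

lemma sh_prod {R : Type*} [CommSemiring R] {d N : ℕ} [NeZero N] (a : Fin d → ZMod N → R)
    (w : List (Fin d)) (r c : ZMod N) :
    (w.map (sh a)).prod r c = if c = r + (w.length : ZMod N) then wt a w r else 0 := by
  induction w generalizing r with
  | nil => simp [wt, Matrix.one_apply, eq_comm]
  | cons i w ih =>
    simp only [List.map_cons, List.prod_cons, Matrix.mul_apply, ih, sh, Matrix.of_apply, wt,
      ite_mul, zero_mul, Finset.sum_ite_eq', Finset.sum_ite_eq, Finset.mem_univ, if_true,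
      List.length_cons]
    have : r + ((w.length + 1 : ℕ) : ZMod N) = r + 1 + (w.length : ZMod N) := by
      push_cast; ring
    simp only [this]
    split_ifs <;> simp

/-- Indicator weights isolate one word. -/
lemma wt_indicator {k : Type*} [Field k] {d : ℕ} (w0 : List (Fin d)) (r : ZMod (w0.length + 1))
    (w : List (Fin d)) (j : ℕ) (hj : j + w.length = w0.length) :
    wt (fun i x => if w0[(x - r).val]? = some i then (1 : k) else 0) w (r + (j : ZMod _)) =
      if w = w0.drop j then 1 else 0 := by
  induction w generalizing j with
  | nil =>
    have : j = w0.length := by simpa using hj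
    subst this
    simp [wt]
  | cons i w ih =>
    have hlt : j < w0.length := by simp at hj; omega
    have hv : ((r + (j : ZMod (w0.length + 1))) - r).val = j := by
      rw [add_sub_cancel_left, ZMod.val_cast_of_lt (by omega)]
    have h1 : r + (j : ZMod (w0.length + 1)) + 1 = r + ((j + 1 : ℕ) : ZMod _) := by
      push_cast; ring
    have := ih (j + 1) (by simp at hj; omega)
    rw [wt, h1, this, hv, List.drop_eq_getElem_cons hlt, List.getElem?_eq_getElem hlt]
    simp only [Option.some.injEq, List.cons.injEq]
    by_cases h2 : w0[j] = i
    · simp [h2]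
    · simp [h2, Ne.symm h2]

/-- Expansion of the evaluation along words. -/
lemma lift_eq_sum {k : Type*} [Field k] {d : ℕ} (g : FreeAlgebra k (Fin d)) (hg : g ≠ 0) :
    ∃ p : List (Fin d) →₀ k, p ≠ 0 ∧ ∀ {ι : Type} [Fintype ι] [DecidableEq ι]
      (X : Fin d → Matrix ι ι k),
      FreeAlgebra.lift k X g = ∑ w ∈ p.support, p w • (w.map X).prod := by
  let e := FreeAlgebra.equivMonoidAlgebraFreeMonoid (R := k) (X := Fin d)
  refine ⟨(e g).coeff, ?_, ?_⟩
  · intro h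
    apply hg
    apply e.injective
    rw [map_zero]
    exact MonoidAlgebra.coeff_injective (h.trans MonoidAlgebra.coeff_zero.symm)
  · intro ι _ _ X
    have key : FreeAlgebra.lift k X =
        (MonoidAlgebra.lift k (Matrix ι ι k) (FreeMonoid (Fin d)) (FreeMonoid.lift X)).comp
          e.toAlgHom := by
      ext i
      simp [e, FreeAlgebra.equivMonoidAlgebraFreeMonoid]
    rw [key]
    simp only [AlgHom.comp_apply]
    rw [MonoidAlgebra.lift_apply, Finsupp.sum]
    refine Finset.sum_congr rfl fun w _ => ?_
    rw [FreeMonoid.lift_apply]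
    rfl

/-- A family of polynomials each with a nonvanishing point has a common one. -/
lemma common_point {k : Type*} [Field k] [Infinite k] {σ ι : Type*} [Fintype ι]
    (c : ι → MvPolynomial σ k) (hc : ∀ r, ∃ a, MvPolynomial.eval a (c r) ≠ 0) :
    ∃ a, ∀ r, MvPolynomial.eval a (c r) ≠ 0 := by
  have h0 : ∏ r, c r ≠ 0 := by
    rw [Finset.prod_ne_zero_iff]
    rintro r - h
    obtain ⟨a, ha⟩ := hc r
    simp [h] at ha
  by_contra! hcon
  apply h0
  apply MvPolynomial.funext
  intro a
  obtain ⟨r, hr⟩ := hcon a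
  rw [map_prod, map_zero]
  exact Finset.prod_eq_zero (Finset.mem_univ r) hr

/-- A nonzero noncommutative polynomial is nonsingular at some matrix tuple. -/
lemma exists_nonsing {k : Type*} [Field k] [Infinite k] {d : ℕ} (g : FreeAlgebra k (Fin d))
    (hg : g ≠ 0) :
    ∃ n : ℕ, 1 ≤ n ∧ ∃ Y : Fin d → Matrix (Fin n) (Fin n) k, (ncEval Y g).det ≠ 0 := by
  obtain ⟨p, hp, hsum⟩ := lift_eq_sum g hg
  obtain ⟨w0, hw0, hmax⟩ := Finset.exists_max_image p.support List.length
    (Finsupp.support_nonempty_iff.mpr hp)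
  set m := w0.length with hm
  -- the generic top coefficients
  let S := p.support.filter (fun w => w.length = m)
  obtain ⟨a, ha⟩ : ∃ a : Fin d → ZMod (m + 1) → k, ∀ r, ∑ w ∈ S, p w * wt a w r ≠ 0 := by
    let A : Fin d → ZMod (m + 1) → MvPolynomial (Fin d × ZMod (m + 1)) k :=
      fun i x => MvPolynomial.X (i, x)
    have hev : ∀ (b : Fin d × ZMod (m + 1) → k) r,
        MvPolynomial.eval b (∑ w ∈ S, MvPolynomial.C (p w) * wt A w r) =
          ∑ w ∈ S, p w * wt (fun i x => b (i, x)) w r := by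
      intro b r
      simp [map_sum, map_wt, A]
    obtain ⟨b, hb⟩ := common_point
      (fun r => ∑ w ∈ S, MvPolynomial.C (p w) * wt A w r) (by
        intro r
        refine ⟨fun q => if w0[(q.2 - r).val]? = some q.1 then 1 else 0, ?_⟩
        rw [hev]
        have : ∀ w ∈ S, p w * wt (fun i x => if w0[(x - r).val]? = some i then (1 : k) else 0) w r
            = if w = w0 then p w else 0 := by
          intro w hw
          have := wt_indicator (k := k) w0 r w 0 (by simpa using (Finset.mem_filter.mp hw).2)
          simp only [Nat.cast_zero, add_zero, List.drop_zero] at this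
          rw [this]
          simp
        have hmem : w0 ∈ S := Finset.mem_filter.mpr ⟨hw0, rfl⟩
        rw [Finset.sum_congr rfl this, Finset.sum_ite_eq', if_pos hmem]
        exact Finsupp.mem_support_iff.mp hw0)
    refine ⟨fun i x => b (i, x), fun r => ?_⟩
    rw [← hev]
    exact hb r
  -- homogenization
  let W : List (Fin d) → Matrix (ZMod (m + 1)) (ZMod (m + 1)) k := fun w => (w.map (sh a)).prod
  let Q : Matrix (ZMod (m + 1)) (ZMod (m + 1)) (Polynomial k) := Matrix.of fun r c =>
    ∑ w ∈ p.support, Polynomial.C (p w * W w r c) * Polynomial.X ^ (m - w.length)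
  have hQ : ∀ s, (Polynomial.eval s Q.det) =
      (∑ w ∈ p.support, (s ^ (m - w.length) * p w) • W w).det := by
    intro s
    rw [← Polynomial.coe_evalRingHom, RingHom.map_det]
    congr 1
    ext r c
    simp only [RingHom.mapMatrix_apply, Matrix.map_apply, Q, Matrix.of_apply,
      Polynomial.coe_evalRingHom, Polynomial.eval_finsetSum, Polynomial.eval_mul,
      Polynomial.eval_C, Polynomial.eval_pow, Polynomial.eval_X, Matrix.sum_apply,
      Matrix.smul_apply, smul_eq_mul]
    exact Finset.sum_congr rfl fun w _ => by ring
  have hQ0 : Polynomial.eval 0 Q.det ≠ 0 := by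
    rw [hQ]
    have : (∑ w ∈ p.support, ((0 : k) ^ (m - w.length) * p w) • W w) =
        (Matrix.diagonal fun r => ∑ w ∈ S, p w * wt a w r).submatrix id
          (Equiv.subRight (m : ZMod (m + 1))) := by
      ext r c
      rw [Matrix.sum_apply, Matrix.submatrix_apply, Matrix.diagonal_apply, Finset.sum_filter,
        id, Equiv.subRight_apply]
      have hiff : r = c - (m : ZMod (m + 1)) ↔ c = r + (m : ZMod (m + 1)) := by
        rw [eq_sub_iff_add_eq, eq_comm]
      have hterm : ∀ w ∈ p.support, (((0 : k) ^ (m - w.length) * p w) • W w) r c =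
          if r = c - (m : ZMod (m + 1)) then (if w.length = m then p w * wt a w r else 0)
            else 0 := by
        intro w hw
        have hle : w.length ≤ m := hmax w hw
        rw [Matrix.smul_apply, smul_eq_mul, show W w r c = _ from sh_prod a w r c]
        by_cases hl : w.length = m
        · simp only [hl, hiff, Nat.sub_self, pow_zero, one_mul, if_true]
          split_ifs <;> simp
        · have : m - w.length ≠ 0 := by omega
          simp [zero_pow this, hl]
      rw [Finset.sum_congr rfl hterm]
      split_ifs <;> simp
    rw [this, Matrix.det_permute', Matrix.det_diagonal]
    refine mul_ne_zero ?_ (Finset.prod_ne_zero_iff.mpr fun r _ => ha r)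
    rcases Int.units_eq_one_or
      (Equiv.Perm.sign (Equiv.subRight (m : ZMod (m + 1)))) with h | h <;> simp [h]
  obtain ⟨s, hs0, hs⟩ : ∃ s : k, s ≠ 0 ∧ Polynomial.eval s Q.det ≠ 0 := by
    by_contra! hcon
    have : Polynomial.X * Q.det = 0 := by
      apply Polynomial.funext
      intro s
      by_cases h : s = 0
      · simp [h]
      · simp [hcon s h]
    rcases mul_eq_zero.mp this with h | h
    · exact Polynomial.X_ne_zero h
    · simp [h] at hQ0
  obtain ⟨n, hn, Y, hY⟩ := transfer (fun i => s⁻¹ • sh a i)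
  refine ⟨n, hn, Y, ?_⟩
  rw [hY]
  rw [hQ] at hs
  have hw : ∀ w : List (Fin d), (w.map (fun i => s⁻¹ • sh a i)).prod = (s⁻¹) ^ w.length • W w := by
    intro w
    induction w with
    | nil => simp [W]
    | cons i w ih =>
      rw [List.map_cons, List.prod_cons, ih]
      simp only [W, List.map_cons, List.prod_cons, List.length_cons, smul_mul_smul_comm, pow_succ']
  have : (∑ w ∈ p.support, (s ^ (m - w.length) * p w) • W w) =
      s ^ m • FreeAlgebra.lift k (fun i => s⁻¹ • sh a i) g := by
    rw [hsum, Finset.smul_sum]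
    refine Finset.sum_congr rfl fun w hws => ?_
    have hle : w.length ≤ m := hmax w hws
    rw [hw, smul_smul, smul_smul, pow_sub₀ s hs0 hle, inv_pow]
    congr 1
    ring
  rw [this, Matrix.det_smul] at hs
  exact right_ne_zero_of_mul hs

end NCAux

/-- If `g` is singular wherever all of `f_1, …, f_ℓ` are simultaneously singular,
then `g` is singular wherever a single `f_j` is singular, for some `j`. -/
theorem determinantal_zeros_reduction
    (k : Type*) [Field k] [IsAlgClosed k] [CharZero k]
    (d ℓ : ℕ) (hd : 1 ≤ d)
    (f : Fin ℓ → FreeAlgebra k (Fin d)) (g : FreeAlgebra k (Fin d))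
    (hf : ∀ j, f j ≠ 0) (hg : g ≠ 0)
    (h : ∀ (n : ℕ), 1 ≤ n → ∀ X : Fin d → Matrix (Fin n) (Fin n) k,
        (∀ j, (ncEval X (f j)).det = 0) → (ncEval X g).det = 0) :
    ∃ j : Fin ℓ, ∀ (n : ℕ), 1 ≤ n → ∀ X : Fin d → Matrix (Fin n) (Fin n) k,
        (ncEval X (f j)).det = 0 → (ncEval X g).det = 0 := by
  classical
  by_contra! hcon
  have hinf : Infinite k := IsAlgClosed.instInfinite
  have key : ∀ s : Finset (Fin ℓ), ∃ n : ℕ, 1 ≤ n ∧ ∃ X : Fin d → Matrix (Fin n) (Fin n) k,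
      (∀ j ∈ s, (ncEval X (f j)).det = 0) ∧ (ncEval X g).det ≠ 0 := by
    intro s
    induction s using Finset.induction_on with
    | empty =>
      obtain ⟨n, hn, Y, hY⟩ := NCAux.exists_nonsing g hg
      exact ⟨n, hn, Y, by simp, hY⟩
    | insert j s _ ih =>
      obtain ⟨n, hn, X, hX, hgX⟩ := ih
      obtain ⟨n', hn', X', hX', hgX'⟩ := hcon j
      have : Nonempty (Fin n ⊕ Fin n') := ⟨Sum.inl ⟨0, hn⟩⟩
      obtain ⟨N, hN, Y, hY⟩ := NCAux.transfer (fun i => Matrix.fromBlocks (X i) 0 0 (X' i))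
      have hdet : ∀ q, (ncEval Y q).det = (ncEval X q).det * (ncEval X' q).det := by
        intro q
        rw [hY, NCAux.lift_fromBlocks, Matrix.det_fromBlocks_zero₂₁]
        rfl
      refine ⟨N, hN, Y, ?_, ?_⟩
      · intro i hi
        rw [hdet]
        rcases Finset.mem_insert.mp hi with rfl | hi
        · rw [hX', mul_zero]
        · rw [hX i hi, zero_mul]
      · rw [hdet]
        exact mul_ne_zero hgX hgX'
  obtain ⟨n, hn, X, hX, hgX⟩ := key Finset.univ
  exact hgX (h n hn X fun j => hX j (Finset.mem_univ j))
end

section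
/- Let f, g ∈ k⟨x_1,…,x_d⟩ be stably associated. Then for every n ≥ 1 and every X ∈ M_n(k)^d, the kernels of f(X) and g(X) have the same dimension; in particular, f(X) is singular if and only if g(X) is singular. -/
theorem StablyAssociated.symm' {k : Type*} [CommSemiring k] {d : ℕ}
    {f g : FreeAlgebra k (Fin d)} (h : StablyAssociated f g) : StablyAssociated g f := by
  obtain ⟨P, Q, ⟨p, rfl⟩, ⟨q, rfl⟩, h⟩ := h
  refine ⟨(p⁻¹ : _ˣ), (q⁻¹ : _ˣ), Units.isUnit _, Units.isUnit _, ?_⟩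
  rw [h]
  simp [mul_assoc]

theorem StablyAssociated.exists_rel {k : Type*} [CommSemiring k] {d : ℕ}
    {f g : FreeAlgebra k (Fin d)} (h : StablyAssociated f g) :
    ∃ p a s t : FreeAlgebra k (Fin d), p * f = g * a ∧ s * a + t * f = 1 := by
  obtain ⟨P, Q, ⟨p, rfl⟩, ⟨q, rfl⟩, h⟩ := h
  have h1 : (p⁻¹ : _ˣ).val * Matrix.diagonal ![f, 1] = Matrix.diagonal ![g, 1] * q.val := by
    rw [h]; simp [mul_assoc]
  have h2 : (q⁻¹ : _ˣ).val * q.val = 1 := by simp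
  have e00 := congrFun (congrFun h1 0) 0
  have e10 := congrFun (congrFun h1 1) 0
  have e := congrFun (congrFun h2 0) 0
  rw [Matrix.mul_diagonal, Matrix.diagonal_mul] at e00 e10
  rw [Matrix.mul_apply, Fin.sum_univ_two] at e
  simp only [Matrix.cons_val_zero, Matrix.cons_val_one, one_mul, Matrix.one_apply_eq] at e00 e10 e
  refine ⟨_, _, (q⁻¹ : _ˣ).val 0 0, (q⁻¹ : _ˣ).val 0 1 * (p⁻¹ : _ˣ).val 1 0, e00, ?_⟩
  · rw [mul_assoc, e10]
    exact e

theorem StablyAssociated.finrank_ker_le {k : Type*} [Field k] {d : ℕ}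
    {f g : FreeAlgebra k (Fin d)} (h : StablyAssociated f g) {n : ℕ}
    (X : Fin d → Matrix (Fin n) (Fin n) k) :
    Module.finrank k (LinearMap.ker (ncEval X f).mulVecLin) ≤
      Module.finrank k (LinearMap.ker (ncEval X g).mulVecLin) := by
  obtain ⟨p, a, s, t, h1, h2⟩ := h.exists_rel
  have e1 : ncEval X p * ncEval X f = ncEval X g * ncEval X a := by
    simp only [ncEval, ← map_mul, h1]
  have e2 : ncEval X s * ncEval X a + ncEval X t * ncEval X f = 1 := by
    simp only [ncEval, ← map_mul, ← map_add, h2, map_one]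
  have hm : ∀ v ∈ LinearMap.ker (ncEval X f).mulVecLin,
      (ncEval X a).mulVecLin v ∈ LinearMap.ker (ncEval X g).mulVecLin := by
    intro v hv
    simp only [LinearMap.mem_ker, Matrix.mulVecLin_apply] at hv ⊢
    rw [Matrix.mulVec_mulVec, ← e1, ← Matrix.mulVec_mulVec, hv, Matrix.mulVec_zero]
  refine LinearMap.finrank_le_finrank_of_injective
    (f := (ncEval X a).mulVecLin.restrict hm) ?_
  rw [injective_iff_map_eq_zero]
  rintro ⟨v, hv⟩ h0
  have h0' : (ncEval X a).mulVec v = 0 := congrArg Subtype.val h0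
  simp only [LinearMap.mem_ker, Matrix.mulVecLin_apply] at hv
  apply Subtype.ext
  change v = 0
  rw [← Matrix.one_mulVec v, ← e2, Matrix.add_mulVec, ← Matrix.mulVec_mulVec,
    ← Matrix.mulVec_mulVec, hv, h0', Matrix.mulVec_zero, Matrix.mulVec_zero, add_zero]

theorem det_eq_zero_iff_finrank_ker {k : Type*} [Field k] {n : ℕ}
    (M : Matrix (Fin n) (Fin n) k) :
    M.det = 0 ↔ Module.finrank k (LinearMap.ker M.mulVecLin) ≠ 0 := by
  rw [← Matrix.exists_mulVec_eq_zero_iff, Ne, Submodule.finrank_eq_zero, ← Ne,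
    Submodule.ne_bot_iff]
  simp [and_comm]

/-- Stably associated noncommutative polynomials have values with kernels of equal
dimension at every matrix tuple; in particular their values are simultaneously
singular. -/
theorem stablyAssociated_ker_dim_eq
    (k : Type*) [Field k] [IsAlgClosed k] [CharZero k]
    (d : ℕ) (hd : 1 ≤ d) (f g : FreeAlgebra k (Fin d))
    (hfg : StablyAssociated f g) :
    ∀ (n : ℕ), 1 ≤ n → ∀ X : Fin d → Matrix (Fin n) (Fin n) k,
      Module.finrank k (LinearMap.ker (ncEval X f).mulVecLin) =
        Module.finrank k (LinearMap.ker (ncEval X g).mulVecLin) ∧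
      ((ncEval X f).det = 0 ↔ (ncEval X g).det = 0) := by
  intro n _ X
  have h := le_antisymm (hfg.finrank_ker_le X) (hfg.symm'.finrank_ker_le X)
  exact ⟨h, by rw [det_eq_zero_iff_finrank_ker, det_eq_zero_iff_finrank_ker, h]⟩
end

section
/- Let f_1,…,f_ℓ, g ∈ k⟨x_1,…,x_d⟩. Then the following are equivalent: (i) for every n ≥ 1 and every X ∈ M_n(k)^d, if tr f_j(X) = 0 for all j = 1,…,ℓ then tr g(X) = 0; (ii) either 1 or g can be written as a k-linear combination of f_1,…,f_ℓ and finitely many commutators [p, q] = pq − qp with p, q ∈ k⟨x_1,…,x_d⟩. -/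
/-- `h` is a linear combination of `f_1, …, f_ℓ` and finitely many commutators. -/
def IsCombOfAndCommutators {k : Type*} [CommRing k] {d ℓ : ℕ}
    (f : Fin ℓ → FreeAlgebra k (Fin d)) (h : FreeAlgebra k (Fin d)) : Prop :=
  ∃ (c : Fin ℓ → k) (L : List (FreeAlgebra k (Fin d) × FreeAlgebra k (Fin d))),
    h = (∑ j, c j • f j) + (L.map fun pq => pq.1 * pq.2 - pq.2 * pq.1).sum

namespace TN

open Matrix

/-- Arbitrary prescribed power sums, with a number of points depending only on `D`. -/
theorem powersum (k : Type*) [Field k] [IsAlgClosed k] [CharZero k] (D : ℕ) :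
    ∃ N : ℕ, 1 ≤ N ∧ ∀ s : ℕ → k, ∃ t : Fin N → k, ∀ r, 1 ≤ r → r ≤ D → ∑ i, t i ^ r = s r := by
  induction D with
  | zero => exact ⟨1, le_rfl, fun s => ⟨0, fun r h1 h2 => by omega⟩⟩
  | succ D ih =>
    obtain ⟨N, hN, h⟩ := ih
    refine ⟨N + (D + 1), by omega, fun s => ?_⟩
    obtain ⟨t, ht⟩ := h s
    obtain ⟨ζ, hζ⟩ := HasEnoughRootsOfUnity.exists_primitiveRoot k (D + 1)
    have hD : ((D : k) + 1) ≠ 0 := by exact_mod_cast Nat.succ_ne_zero D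
    obtain ⟨α, hα⟩ := IsAlgClosed.exists_pow_nat_eq
      ((s (D + 1) - ∑ i, t i ^ (D + 1)) / ((D : k) + 1)) (Nat.succ_pos D)
    refine ⟨Fin.append t (fun i : Fin (D + 1) => α * ζ ^ (i : ℕ)), fun r h1 h2 => ?_⟩
    rw [Fin.sum_univ_add]
    simp only [Fin.append_left, Fin.append_right]
    rcases Nat.lt_or_ge D r with hr | hr
    · have : r = D + 1 := by omega
      subst this
      have : ∀ i : Fin (D + 1), (α * ζ ^ (i : ℕ)) ^ (D + 1)
          = (s (D + 1) - ∑ i, t i ^ (D + 1)) / ((D : k) + 1) := by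
        intro i
        rw [mul_pow, hα, ← pow_mul, mul_comm (i : ℕ), pow_mul, hζ.pow_eq_one, one_pow, mul_one]
      simp only [this]
      simp
      field_simp
      ring
    · rw [ht r h1 hr]
      have h0 : ∑ i : Fin (D + 1), (α * ζ ^ (i : ℕ)) ^ r = 0 := by
        have e : ∀ i : Fin (D + 1), (α * ζ ^ (i : ℕ)) ^ r = α ^ r * (ζ ^ r) ^ (i : ℕ) := by
          intro i; rw [mul_pow, ← pow_mul, ← pow_mul, mul_comm r]
        simp only [e]
        rw [← Finset.mul_sum, Fin.sum_univ_eq_sum_range (fun i => (ζ ^ r) ^ i)]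
        have hne : ζ ^ r ≠ 1 := hζ.pow_ne_one_of_pos_of_lt (by omega) (by omega)
        have := geom_sum_mul (ζ ^ r) (D + 1)
        rw [← pow_mul, mul_comm r, pow_mul, hζ.pow_eq_one, one_pow, sub_self] at this
        rcases mul_eq_zero.1 this with h | h
        · rw [h, mul_zero]
        · exact absurd (sub_eq_zero.1 h) hne
      rw [h0, add_zero]

section
variable {k : Type*} [Field k] {d : ℕ}

/-- `χ` agrees with the trace of a matrix tuple on nonempty words of length at most `D`. -/
def Att (D : ℕ) (χ : List (Fin d) → k) : Prop :=
  ∃ (ι : Type) (_ : Fintype ι) (_ : DecidableEq ι) (_ : Nonempty ι) (X : Fin d → Matrix ι ι k),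
    ∀ v, v ≠ [] → v.length ≤ D → χ v = ((v.map X).prod).trace

theorem prod_smul {ι : Type} [Fintype ι] [DecidableEq ι] {o : Type} [Fintype o] [DecidableEq o]
    (X : Fin d → Matrix ι ι k) (t : o → k) (v : List (Fin d)) :
    (v.map (fun i => blockDiagonal (fun j => t j • X i))).prod
      = blockDiagonal (fun j => t j ^ v.length • (v.map X).prod) := by
  induction v with
  | nil => simp [← blockDiagonal_one]; rfl
  | cons a v ih =>
    simp only [List.map_cons, List.prod_cons, ih, ← blockDiagonal_mul, List.length_cons]
    congr 1; ext1 j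
    rw [smul_mul_smul_comm, pow_succ, mul_comm]

theorem trace_scale {ι : Type} [Fintype ι] [DecidableEq ι] {N : ℕ}
    (X : Fin d → Matrix ι ι k) (t : Fin N → k) (v : List (Fin d)) :
    ((v.map (fun i => blockDiagonal (fun j => t j • X i))).prod).trace
      = (∑ j, t j ^ v.length) * ((v.map X).prod).trace := by
  rw [prod_smul, trace_blockDiagonal]
  simp [trace_smul, Finset.sum_mul]

theorem Att.scale [IsAlgClosed k] [CharZero k] {D : ℕ} {χ : List (Fin d) → k} (h : Att D χ)
    (s : ℕ → k) : Att D (fun v => s v.length * χ v) := by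
  obtain ⟨ι, _, _, _, X, hX⟩ := h
  obtain ⟨N, hN, hs⟩ := powersum k D
  obtain ⟨t, ht⟩ := hs s
  have : Nonempty (Fin N) := ⟨⟨0, hN⟩⟩
  refine ⟨ι × Fin N, inferInstance, inferInstance, inferInstance,
    fun i => blockDiagonal (fun j => t j • X i), fun v hv hl => ?_⟩
  rw [trace_scale, ht _ (List.length_pos_iff.2 hv) hl, ← hX v hv hl]

theorem Att.zero {D : ℕ} : Att D (fun _ : List (Fin d) => (0 : k)) := by
  refine ⟨Unit, inferInstance, inferInstance, inferInstance, 0, fun v hv _ => ?_⟩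
  cases v with
  | nil => exact absurd rfl hv
  | cons a v => simp

theorem Att.add {D : ℕ} {χ ψ : List (Fin d) → k} (h : Att D χ) (h' : Att D ψ) :
    Att D (fun v => χ v + ψ v) := by
  obtain ⟨ι, _, _, _, X, hX⟩ := h
  obtain ⟨κ, _, _, _, Y, hY⟩ := h'
  have key : ∀ v : List (Fin d), (v.map (fun i => fromBlocks (X i) 0 0 (Y i))).prod
      = fromBlocks (v.map X).prod 0 0 (v.map Y).prod := by
    intro v
    induction v with
    | nil => simp
    | cons a v ih => simp [ih, fromBlocks_multiply]
  refine ⟨ι ⊕ κ, inferInstance, inferInstance, inferInstance,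
    fun i => fromBlocks (X i) 0 0 (Y i), fun v hv hl => ?_⟩
  simp only [key, hX v hv hl, hY v hv hl]
  simp [trace, Fintype.sum_sum_type]

theorem Att.sum {D : ℕ} {J : Type*} (s : Finset J) (χ : J → List (Fin d) → k)
    (h : ∀ j ∈ s, Att D (χ j)) : Att D (fun v => ∑ j ∈ s, χ j v) := by
  classical
  induction s using Finset.induction_on with
  | empty => simpa using Att.zero
  | insert a s ha ih =>
    simp only [Finset.sum_insert ha]
    exact (h a (by simp)).add (ih fun j hj => h j (by simp [hj]))

/-- Segment of length `n` starting at `p` of a cyclic word. -/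
def seg {m : ℕ} (w : ZMod (m + 1) → Fin d) : ZMod (m + 1) → ℕ → List (Fin d)
  | _, 0 => []
  | p, n + 1 => w p :: seg w (p + 1) n

@[simp] theorem seg_length {m : ℕ} (w : ZMod (m + 1) → Fin d) (p : ZMod (m + 1)) (n : ℕ) :
    (seg w p n).length = n := by
  induction n generalizing p with
  | zero => rfl
  | succ n ih => simp [seg, ih]

theorem seg_get {m : ℕ} (w : ZMod (m + 1) → Fin d) (p : ZMod (m + 1)) (n j : ℕ)
    (h : j < (seg w p n).length) : (seg w p n)[j] = w (p + j) := by
  induction n generalizing p j with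
  | zero => simp at h
  | succ n ih =>
    cases j with
    | zero => simp [seg]
    | succ j =>
      simp only [seg, List.getElem_cons_succ]
      rw [ih]; push_cast; congr 1; ring

theorem seg_succ' {m : ℕ} (w : ZMod (m + 1) → Fin d) (p : ZMod (m + 1)) (n : ℕ) :
    seg w p (n + 1) = seg w p n ++ [w (p + n)] := by
  induction n generalizing p with
  | zero => simp [seg]
  | succ n ih =>
    rw [seg, ih, seg]
    simp; congr 1; ring

theorem seg_unique {m : ℕ} (p : ZMod (m + 1)) (v : List (Fin d)) (hv : v.length = m + 1) :
    ∃ w₀ : ZMod (m + 1) → Fin d, ∀ w, seg w p (m + 1) = v ↔ w = w₀ := by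
  have hlt : ∀ x : ZMod (m + 1), (x - p).val < v.length := fun x => by
    rw [hv]; exact ZMod.val_lt _
  refine ⟨fun x => v[(x - p).val]'(hlt x), fun w => ⟨?_, ?_⟩⟩
  · intro h
    funext x
    subst h
    rw [seg_get]
    simp
  · rintro rfl
    apply List.ext_getElem (by simp [hv])
    intro j h1 h2
    rw [seg_get]
    have : (p + (j : ZMod (m + 1)) - p).val = j := by
      rw [add_sub_cancel_left, ZMod.val_natCast, Nat.mod_eq_of_lt (by omega)]
    simp only [this]

theorem cycle_prod {m : ℕ} (w : ZMod (m + 1) → Fin d) (v : List (Fin d)) (p q : ZMod (m + 1)) :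
    ((v.map (fun i => (Matrix.of fun p q => if q = p + 1 ∧ w p = i then (1 : k) else 0 :
      Matrix (ZMod (m + 1)) (ZMod (m + 1)) k))).prod) p q
      = if seg w p v.length = v ∧ q = p + v.length then 1 else 0 := by
  induction v generalizing p with
  | nil => simp [seg, one_apply, eq_comm]
  | cons a v ih =>
    rw [List.map_cons, List.prod_cons, mul_apply]
    simp only [ih, of_apply]
    rw [Finset.sum_eq_single (p + 1)]
    · simp only [List.length_cons, seg, List.cons.injEq]
      push_cast
      have : p + 1 + (v.length : ZMod (m + 1)) = p + (v.length + 1) := by ring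
      rw [this]
      by_cases h1 : w p = a <;> simp [h1]
    · intro b _ hb
      simp [hb]
    · simp

theorem att_cyc [IsAlgClosed k] [CharZero k] (D m : ℕ) (w : ZMod (m + 1) → Fin d) :
    Att D (fun v => if v.length = m + 1 then
      ∑ p : ZMod (m + 1), (if seg w p (m + 1) = v then (1 : k) else 0) else 0) := by
  have h : Att D (fun v => ((v.map (fun i => (Matrix.of fun p q =>
      if q = p + 1 ∧ w p = i then (1 : k) else 0 :
      Matrix (ZMod (m + 1)) (ZMod (m + 1)) k))).prod).trace) :=
    ⟨ZMod (m + 1), inferInstance, inferInstance, inferInstance, _, fun v _ _ => rfl⟩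
  have h2 := h.scale (fun r => if r = m + 1 then 1 else 0)
  convert h2 using 2 with v
  by_cases hv : v.length = m + 1
  · have h0 : ((m : ZMod (m + 1)) + 1) = 0 := by
      have := ZMod.natCast_self (m + 1)
      push_cast at this; exact this
    simp only [hv, if_true, one_mul, trace, diag_apply, cycle_prod]
    push_cast
    simp [h0]
  · simp [hv]

theorem seg_trace {m : ℕ} (χ : List (Fin d) → k) (hχ : ∀ u v, χ (u ++ v) = χ (v ++ u))
    (w : ZMod (m + 1) → Fin d) (p : ZMod (m + 1)) : χ (seg w p (m + 1)) = χ (seg w 0 (m + 1)) := by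
  have h0 : ((m : ZMod (m + 1)) + 1) = 0 := by
    have := ZMod.natCast_self (m + 1)
    push_cast at this; exact this
  have step : ∀ p, χ (seg w (p + 1) (m + 1)) = χ (seg w p (m + 1)) := by
    intro p
    rw [seg_succ', hχ, seg]
    have : p + 1 + (m : ZMod (m + 1)) = p := by
      rw [add_assoc, add_comm 1, h0, add_zero]
    rw [this]; rfl
  have : ∀ n : ℕ, χ (seg w (n : ZMod (m + 1)) (m + 1)) = χ (seg w 0 (m + 1)) := by
    intro n
    induction n with
    | zero => simp
    | succ n ih => rw [Nat.cast_succ, step, ih]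
  have h := this p.val
  rwa [ZMod.natCast_zmod_val] at h

theorem att_tracial_len [IsAlgClosed k] [CharZero k] (D m : ℕ) (χ : List (Fin d) → k)
    (hχ : ∀ u v, χ (u ++ v) = χ (v ++ u)) :
    Att D (fun v => if v.length = m + 1 then χ v else 0) := by
  have h := Att.sum (D := D) (Finset.univ : Finset (ZMod (m + 1) → Fin d)) _ (fun w _ =>
    (att_cyc (k := k) D m w).scale (fun _ => χ (seg w 0 (m + 1)) / ((m : k) + 1)))
  have hm : ((m : k) + 1) ≠ 0 := by exact_mod_cast Nat.succ_ne_zero m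
  convert h using 2 with v
  by_cases hv : v.length = m + 1
  · simp only [hv, if_true, Finset.mul_sum]
    rw [Finset.sum_comm]
    have : ∀ p : ZMod (m + 1), ∑ w : ZMod (m + 1) → Fin d,
        χ (seg w 0 (m + 1)) / ((m : k) + 1) * (if seg w p (m + 1) = v then (1 : k) else 0)
        = χ v / ((m : k) + 1) := by
      intro p
      obtain ⟨w₀, h0⟩ := seg_unique p v hv
      rw [Finset.sum_eq_single w₀]
      · have e := (h0 w₀).2 rfl
        rw [← seg_trace χ hχ w₀ p, e]; simp
      · intro w _ hw
        rw [if_neg (fun hh => hw ((h0 w).1 hh)), mul_zero]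
      · simp
    simp only [this]
    simp [ZMod.card]
    field_simp
  · simp [hv]

theorem att_tracial [IsAlgClosed k] [CharZero k] (D : ℕ) (χ : List (Fin d) → k)
    (hχ : ∀ u v, χ (u ++ v) = χ (v ++ u)) : Att D χ := by
  obtain ⟨ι, a, b, c, X, hX⟩ := Att.sum (D := D) (Finset.range D) _
    (fun m _ => att_tracial_len D m χ hχ)
  refine ⟨ι, a, b, c, X, fun v hv hl => ?_⟩
  rw [← hX v hv hl]
  dsimp only
  rw [Finset.sum_eq_single (v.length - 1)]
  · have := List.length_pos_iff.2 hv
    rw [if_pos (by omega)]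
  · intro m _ hm
    rw [if_neg (by omega)]
  · intro h
    have := List.length_pos_iff.2 hv
    simp at h; omega

/-- The monomial of a word. -/
noncomputable def mon (v : List (Fin d)) : FreeAlgebra k (Fin d) :=
  (v.map (FreeAlgebra.ι k)).prod

theorem mon_append (u v : List (Fin d)) : (mon (u ++ v) : FreeAlgebra k (Fin d)) = mon u * mon v := by
  simp [mon]

theorem exists_deg (a : FreeAlgebra k (Fin d)) :
    ∃ D, ∀ E, D ≤ E → a ∈ Submodule.span k (mon '' {v : List (Fin d) | v.length ≤ E}) := by
  have top : a ∈ Submodule.span k (Set.range (mon : List (Fin d) → FreeAlgebra k (Fin d))) := by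
    induction a using FreeAlgebra.induction with
    | grade0 r =>
      rw [Algebra.algebraMap_eq_smul_one]
      exact Submodule.smul_mem _ _ (Submodule.subset_span ⟨[], by simp [mon]⟩)
    | grade1 x => exact Submodule.subset_span ⟨[x], by simp [mon]⟩
    | mul a b ha hb =>
      have := Submodule.mul_mem_mul ha hb
      rw [Submodule.span_mul_span] at this
      refine Submodule.span_mono ?_ this
      rintro _ ⟨_, ⟨u, rfl⟩, _, ⟨v, rfl⟩, rfl⟩
      exact ⟨u ++ v, mon_append u v⟩
    | add a b ha hb => exact Submodule.add_mem _ ha hb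
  induction top using Submodule.span_induction with
  | mem x hx =>
    obtain ⟨v, rfl⟩ := hx
    exact ⟨v.length, fun E hE => Submodule.subset_span ⟨v, hE, rfl⟩⟩
  | zero => exact ⟨0, fun E _ => Submodule.zero_mem _⟩
  | add x y _ _ hx hy =>
    obtain ⟨D, hD⟩ := hx
    obtain ⟨D', hD'⟩ := hy
    exact ⟨max D D', fun E hE => Submodule.add_mem _ (hD E (le_of_max_le_left hE))
      (hD' E (le_of_max_le_right hE))⟩
  | smul c x _ hx =>
    obtain ⟨D, hD⟩ := hx
    exact ⟨D, fun E hE => Submodule.smul_mem _ _ (hD E hE)⟩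

/-- Every tracial functional nonzero at `1` is, up to a nonzero scalar and up to degree `D`,
the trace of a matrix tuple. -/
theorem realize [IsAlgClosed k] [CharZero k] (D : ℕ) (ψ : FreeAlgebra k (Fin d) →ₗ[k] k)
    (hψ : ∀ p q, ψ (p * q) = ψ (q * p)) (h1 : ψ 1 ≠ 0) :
    ∃ (n : ℕ) (_ : 1 ≤ n) (X : Fin d → Matrix (Fin n) (Fin n) k) (c : k), c ≠ 0 ∧
      ∀ a ∈ Submodule.span k (mon '' {v : List (Fin d) | v.length ≤ D}),
        (ncEval X a).trace = c * ψ a := by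
  obtain ⟨ι, _, _, _, X, hX⟩ := att_tracial D (fun v => ψ (mon v))
    (fun u v => by simp only [mon_append]; exact hψ _ _)
  obtain ⟨N, hN, hs⟩ := powersum k D
  have hn : 0 < Fintype.card ι * N := Nat.mul_pos Fintype.card_pos hN
  have hnk : ((Fintype.card ι * N : ℕ) : k) ≠ 0 := by exact_mod_cast hn.ne'
  obtain ⟨t, ht⟩ := hs (fun _ => ((Fintype.card ι * N : ℕ) : k) / ψ 1)
  set Y : Fin d → Matrix (ι × Fin N) (ι × Fin N) k :=
    fun i => blockDiagonal (fun j => t j • X i) with hY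
  let e : ι × Fin N ≃ Fin (Fintype.card ι * N) := Fintype.equivFinOfCardEq (by simp)
  refine ⟨Fintype.card ι * N, hn, fun i => reindexAlgEquiv k k e (Y i),
    ((Fintype.card ι * N : ℕ) : k) / ψ 1, div_ne_zero hnk h1, fun a ha => ?_⟩
  induction ha using Submodule.span_induction with
  | mem x hx =>
    obtain ⟨v, hv, rfl⟩ := hx
    have e1 : ncEval (fun i => reindexAlgEquiv k k e (Y i)) (mon v)
        = reindexAlgEquiv k k e ((v.map Y).prod) := by
      simp only [ncEval, mon, map_list_prod, List.map_map]
      congr 1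
      apply List.map_congr_left
      intro i _
      simp
    have e2 : ∀ M : Matrix (ι × Fin N) (ι × Fin N) k, (reindexAlgEquiv k k e M).trace = M.trace := by
      intro M
      simp only [trace, diag_apply, coe_reindexAlgEquiv, reindex_apply, submatrix_apply]
      exact Equiv.sum_comp e.symm (fun i => M i i)
    rw [e1, e2]
    by_cases hv0 : v = []
    · subst hv0
      simp [mon, h1]
    · rw [hY, trace_scale, ht _ (List.length_pos_iff.2 hv0) hv, ← hX v hv0 hv]
  | zero => simp [ncEval]
  | add x y _ _ hx hy =>
    simp only [ncEval, map_add, trace_add, mul_add] at hx hy ⊢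
    rw [hx, hy]
  | smul c x _ hx =>
    simp only [ncEval, map_smul, trace_smul, smul_eq_mul] at hx ⊢
    rw [hx]; ring

theorem isComb_of_mem {ℓ : ℕ} (f : Fin ℓ → FreeAlgebra k (Fin d)) (h : FreeAlgebra k (Fin d))
    (hh : h ∈ Submodule.span k (Set.range f) ⊔
      Submodule.span k {x | ∃ p q : FreeAlgebra k (Fin d), p * q - q * p = x}) :
    IsCombOfAndCommutators f h := by
  obtain ⟨y, hy, z, hz, rfl⟩ := Submodule.mem_sup.1 hh
  obtain ⟨c, rfl⟩ := (Submodule.mem_span_range_iff_exists_fun k).1 hy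
  suffices ∃ L : List (FreeAlgebra k (Fin d) × FreeAlgebra k (Fin d)),
      z = (L.map fun pq => pq.1 * pq.2 - pq.2 * pq.1).sum by
    obtain ⟨L, rfl⟩ := this
    exact ⟨c, L, rfl⟩
  clear hh
  induction hz using Submodule.span_induction with
  | mem x hx =>
    obtain ⟨p, q, rfl⟩ := hx
    exact ⟨[(p, q)], by simp⟩
  | zero => exact ⟨[], by simp⟩
  | add x y _ _ hx hy =>
    obtain ⟨L, rfl⟩ := hx
    obtain ⟨L', rfl⟩ := hy
    exact ⟨L ++ L', by simp⟩
  | smul c x _ hx =>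
    obtain ⟨L, rfl⟩ := hx
    refine ⟨L.map (fun pq => (c • pq.1, pq.2)), ?_⟩
    rw [List.smul_sum]
    simp [List.map_map, Function.comp_def, smul_sub]

theorem trace_of_isComb {ℓ n : ℕ} (f : Fin ℓ → FreeAlgebra k (Fin d)) (h : FreeAlgebra k (Fin d))
    (hh : IsCombOfAndCommutators f h) (X : Fin d → Matrix (Fin n) (Fin n) k)
    (hX : ∀ j, (ncEval X (f j)).trace = 0) : (ncEval X h).trace = 0 := by
  obtain ⟨c, L, rfl⟩ := hh
  have hL : (ncEval X (L.map fun pq => pq.1 * pq.2 - pq.2 * pq.1).sum).trace = 0 := by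
    induction L with
    | nil => simp [ncEval]
    | cons a L ih =>
      simp only [ncEval, List.map_cons, List.sum_cons, map_add, map_sub, map_mul, trace_add,
        trace_sub] at ih ⊢
      rw [ih, trace_mul_comm]; simp
  simp only [ncEval, map_add, trace_add, map_sum, map_smul, trace_sum, trace_smul] at hL hX ⊢
  rw [hL]; simp [hX]

end

end TN

/-- Klep–Špenko tracial Nullstellensatz: `tr g(X) = 0` whenever
`tr f_1(X) = ⋯ = tr f_ℓ(X) = 0` if and only if `1` or `g` is a linear
combination of `f_1, …, f_ℓ` and commutators. -/
theorem tracial_nullstellensatz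
    (k : Type*) [Field k] [IsAlgClosed k] [CharZero k]
    (d ℓ : ℕ) (hd : 1 ≤ d)
    (f : Fin ℓ → FreeAlgebra k (Fin d)) (g : FreeAlgebra k (Fin d)) :
    (∀ (n : ℕ), 1 ≤ n → ∀ X : Fin d → Matrix (Fin n) (Fin n) k,
        (∀ j, (ncEval X (f j)).trace = 0) → (ncEval X g).trace = 0) ↔
      (IsCombOfAndCommutators f (1 : FreeAlgebra k (Fin d)) ∨
        IsCombOfAndCommutators f g) := by
  constructor
  · intro H
    by_contra hcon
    obtain ⟨hc1, hcg⟩ := not_or.1 hcon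
    set S := Submodule.span k (Set.range f) ⊔
      Submodule.span k {x | ∃ p q : FreeAlgebra k (Fin d), p * q - q * p = x} with hS
    have h1 : (1 : FreeAlgebra k (Fin d)) ∉ S := fun h => hc1 (TN.isComb_of_mem f _ h)
    have hg : g ∉ S := fun h => hcg (TN.isComb_of_mem f _ h)
    obtain ⟨φ₁, ha1, hk1⟩ := Submodule.exists_le_ker_of_notMem h1
    obtain ⟨φ₂, ha2, hk2⟩ := Submodule.exists_le_ker_of_notMem hg
    obtain ⟨ψ, hψ1, hψg, hψS⟩ : ∃ ψ : FreeAlgebra k (Fin d) →ₗ[k] k,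
        ψ 1 ≠ 0 ∧ ψ g ≠ 0 ∧ ∀ x ∈ S, ψ x = 0 := by
      by_cases h3 : φ₁ g = 0
      · by_cases h4 : φ₂ 1 = 0
        · refine ⟨φ₁ + φ₂, by simpa [h4] using ha1, by simpa [h3] using ha2, fun x hx => ?_⟩
          have e1 : φ₁ x = 0 := hk1 hx
          have e2 : φ₂ x = 0 := hk2 hx
          simp [e1, e2]
        · exact ⟨φ₂, h4, ha2, fun x hx => hk2 hx⟩
      · exact ⟨φ₁, ha1, h3, fun x hx => hk1 hx⟩
    have htr : ∀ p q, ψ (p * q) = ψ (q * p) := by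
      intro p q
      rw [← sub_eq_zero, ← map_sub]
      exact hψS _ (Submodule.mem_sup_right (Submodule.subset_span ⟨p, q, rfl⟩))
    choose Df hDf using fun j => TN.exists_deg (f j)
    obtain ⟨Dg, hDg⟩ := TN.exists_deg g
    obtain ⟨n, hn, X, c, hc, hX⟩ := TN.realize (max Dg (Finset.univ.sup Df)) ψ htr hψ1
    have e := H n hn X (fun j => by
      rw [hX _ (hDf j _ (le_max_of_le_right (Finset.le_sup (Finset.mem_univ j)))),
        hψS _ (Submodule.mem_sup_left (Submodule.subset_span ⟨j, rfl⟩)), mul_zero])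
    rw [hX _ (hDg _ (le_max_left _ _))] at e
    exact mul_ne_zero hc hψg e
  · rintro (h | h) n hn X hX
    · have := TN.trace_of_isComb f 1 h X hX
      simp [ncEval] at this
      omega
    · exact TN.trace_of_isComb f g h X hX
end

section
/- Let f ∈ k⟨x_1,…,x_d⟩. Then tr f(X) = 0 for every n ≥ 1 and every X ∈ M_n(k)^d if and only if f is a finite sum of commutators, i.e. f = Σ_i [p_i, q_i] with p_i, q_i ∈ k⟨x_1,…,x_d⟩, where [p, q] = pq − qp. -/
namespace TraceZero

open scoped Fin.CommRing in
/-- The cyclic partial permutation matrices attached to a word `w` of length `m + 1`. -/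
def cycMat (k : Type*) [Field k] {d m : ℕ} (w : Fin (m + 1) → Fin d) (i : Fin d) :
    Matrix (Fin (m + 1)) (Fin (m + 1)) k :=
  Matrix.of fun a b => if b = a + 1 ∧ w a = i then 1 else 0

open scoped Fin.CommRing in
lemma prod_cycMat (k : Type*) [Field k] {d m : ℕ} (w : Fin (m + 1) → Fin d)
    (v : List (Fin d)) : ∀ a b : Fin (m + 1), (v.map (cycMat k w)).prod a b =
      if b = a + (v.length : Fin (m + 1)) ∧
        v = (List.range v.length).map (fun j : ℕ => w (a + (j : Fin (m + 1)))) then 1 else 0 := by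
  induction v with
  | nil => intro a b; simp [Matrix.one_apply, eq_comm]
  | cons i v ih =>
    intro a b
    rw [List.map_cons, List.prod_cons, Matrix.mul_apply]
    simp only [ih]
    rw [Finset.sum_eq_single (a + 1)]
    · have h1 : ∀ j : ℕ, a + 1 + (j : Fin (m + 1)) = a + ((j + 1 : ℕ) : Fin (m + 1)) := by
        intro j; push_cast; ring
      simp only [cycMat, Matrix.of_apply, h1, List.length_cons, List.range_succ_eq_map,
        List.map_cons, List.map_map, List.cons.injEq, Nat.cast_zero, add_zero, true_and,
        Function.comp_def, Nat.succ_eq_add_one]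
      rw [ite_zero_mul_ite_zero, mul_one]
      congr 1
      apply propext
      constructor
      · rintro ⟨h, h2, h3⟩; exact ⟨h2, h.symm, h3⟩
      · rintro ⟨h, h2, h3⟩; exact ⟨h2.symm, h, h3⟩
    · intro c _ hc
      simp [cycMat, hc]
    · simp

open scoped Fin.CommRing in
lemma trace_cycMat (k : Type*) [Field k] {d m : ℕ} (V v : List (Fin d))
    (hV : V.length = m + 1) (hv : v.length = m + 1) :
    ((v.map (cycMat k (fun i : Fin (m + 1) => V[i.1]'(by rw [hV]; exact i.2)))).prod).trace =
      ∑ a ∈ Finset.range (m + 1), if v = V.rotate a then (1 : k) else 0 := by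
  rw [Matrix.trace, Finset.sum_range]
  refine Finset.sum_congr rfl fun a _ => ?_
  rw [Matrix.diag_apply, prod_cycMat]
  have h0 : ((m + 1 : ℕ) : Fin (m + 1)) = 0 := by simp
  rw [hv, h0]
  have : (List.range (m + 1)).map
      (fun j : ℕ => V[(a + (j : Fin (m + 1))).1]'(by rw [hV]; exact (a + (j : Fin (m + 1))).2)) =
      V.rotate a := by
    apply List.ext_getElem
    · simp [hV]
    · intro j h1 h2
      rw [List.getElem_rotate]
      simp only [List.getElem_map, List.getElem_range]
      congr 1
      simp only [Fin.val_add, Fin.val_natCast, hV, Nat.add_mod_mod]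
      rw [add_comm]
  simp only [add_zero, true_and]
  rw [this]

/-- The `k`-subspace of finite sums of commutators. -/
def comms (k : Type*) [Field k] (A : Type*) [Ring A] [Algebra k A] : Submodule k A where
  carrier := {f | ∃ L : List (A × A), f = (L.map fun pq => pq.1 * pq.2 - pq.2 * pq.1).sum}
  zero_mem' := ⟨[], by simp⟩
  add_mem' := by
    rintro _ _ ⟨L, rfl⟩ ⟨M, rfl⟩
    exact ⟨L ++ M, by simp⟩
  smul_mem' := by
    rintro c _ ⟨L, rfl⟩
    refine ⟨L.map fun pq => (c • pq.1, pq.2), ?_⟩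
    rw [List.smul_sum, List.map_map, List.map_map]
    congr 1
    apply List.map_congr_left
    intro p _
    simp [smul_sub]

/-- The monomial of a word. -/
noncomputable def word (k : Type*) [Field k] {d : ℕ} (W : List (Fin d)) : FreeAlgebra k (Fin d) :=
  (W.map (FreeAlgebra.ι k)).prod

lemma word_sub_rotate (k : Type*) [Field k] {d : ℕ} (W : List (Fin d)) (a : ℕ) :
    word k W - word k (W.rotate a) ∈ comms k (FreeAlgebra k (Fin d)) := by
  refine ⟨[(word k (W.take (a % W.length)), word k (W.drop (a % W.length)))], ?_⟩
  rw [List.rotate_eq_drop_append_take_mod]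
  conv_lhs => enter [1]; rw [← List.take_append_drop (a % W.length) W]
  simp only [word, List.map_append, List.prod_append, List.map_cons, List.map_nil, List.sum_cons,
    List.sum_nil, add_zero]

lemma exists_coeffs (k : Type*) [Field k] {d : ℕ} (f : FreeAlgebra k (Fin d)) :
    ∃ c : List (Fin d) →₀ k, f = ∑ W ∈ c.support, c W • word k W := by
  have h : f ∈ Submodule.span k (Set.range (word k (d := d))) := by
    have h1 : f ∈ Algebra.adjoin k (Set.range (FreeAlgebra.ι k : Fin d → _)) := by
      rw [FreeAlgebra.adjoin_range_ι]; trivial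
    rw [← Subalgebra.mem_toSubmodule, Algebra.adjoin_eq_span] at h1
    refine Submodule.span_mono ?_ h1
    intro x hx
    rw [← FreeMonoid.mrange_lift] at hx
    obtain ⟨W, rfl⟩ := hx
    exact ⟨FreeMonoid.toList W, by simp [word, FreeMonoid.lift_apply]⟩
  obtain ⟨c, hc⟩ := (Finsupp.mem_span_range_iff_exists_finsupp).1 h
  exact ⟨c, by rw [← hc]; rfl⟩

lemma eval_word (k : Type*) [Field k] {d n : ℕ} (X : Fin d → Matrix (Fin n) (Fin n) k)
    (W : List (Fin d)) : ncEval X (word k W) = (W.map X).prod := by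
  simp [ncEval, word, map_list_prod, Function.comp_def]

lemma homog (k : Type*) [Field k] [CharZero k] {d n : ℕ} (X : Fin d → Matrix (Fin n) (Fin n) k)
    (c : List (Fin d) →₀ k)
    (h : ∀ Y : Fin d → Matrix (Fin n) (Fin n) k,
      (ncEval Y (∑ W ∈ c.support, c W • word k W)).trace = 0) (m : ℕ) :
    ∑ W ∈ c.support, (if W.length = m then c W * ((W.map X).prod).trace else 0) = 0 := by
  have hs : ∀ (t : k) (W : List (Fin d)),
      (W.map (fun i => t • X i)).prod = t ^ W.length • (W.map X).prod := by
    intro t W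
    induction W with
    | nil => simp
    | cons i W ih => simp [ih, pow_succ, smul_smul]
  have hp : (∑ W ∈ c.support,
      Polynomial.C (c W * ((W.map X).prod).trace) * Polynomial.X ^ W.length) = 0 := by
    apply Polynomial.funext
    intro t
    have := h (fun i => t • X i)
    have e : ncEval (fun i => t • X i) (∑ W ∈ c.support, c W • word k W) =
        ∑ W ∈ c.support, c W • ncEval (fun i => t • X i) (word k W) := by
      simp [ncEval]
    rw [e, Matrix.trace_sum] at this
    simp only [eval_word, hs, Matrix.trace_smul, smul_eq_mul] at this
    rw [Polynomial.eval_finsetSum, Polynomial.eval_zero, ← this]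
    refine Finset.sum_congr rfl fun W _ => ?_
    simp only [Polynomial.eval_mul, Polynomial.eval_C, Polynomial.eval_pow, Polynomial.eval_X]
    ring
  have := congrArg (fun p => Polynomial.coeff p m) hp
  simp only [Polynomial.finsetSum_coeff, Polynomial.coeff_C_mul_X_pow, Polynomial.coeff_zero]
    at this
  refine Eq.trans (Finset.sum_congr rfl fun W _ => ?_) this
  simp only [eq_comm]

lemma count_flip (k : Type*) [Field k] {d m : ℕ} (V W : List (Fin d))
    (hV : V.length = m + 1) (hW : W.length = m + 1) :
    (∑ a ∈ Finset.range (m + 1), if W.rotate a = V then (1 : k) else 0) =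
      ∑ a ∈ Finset.range (m + 1), if W = V.rotate a then (1 : k) else 0 := by
  rw [Finset.sum_range, Finset.sum_range]
  refine Fintype.sum_equiv (Equiv.neg (Fin (m + 1))) _ _ fun a => ?_
  congr 1
  apply propext
  have h1 : V.rotate ((-a : Fin (m + 1)) : ℕ) = V.rotate (m + 1 - a) := by
    have h2 := List.rotate_mod V (m + 1 - a)
    rw [hV] at h2
    rw [Fin.val_neg', h2]
  rw [Equiv.neg_apply, h1]
  constructor
  · rintro rfl
    rw [List.rotate_rotate, Nat.add_sub_cancel' a.2.le, ← hW, List.rotate_length]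
  · rintro rfl
    rw [List.rotate_rotate, Nat.sub_add_cancel a.2.le, ← hV, List.rotate_length]

lemma cyc_sum (k : Type*) [Field k] [CharZero k] {d : ℕ} (c : List (Fin d) →₀ k)
    (h : ∀ n : ℕ, 1 ≤ n → ∀ Y : Fin d → Matrix (Fin n) (Fin n) k,
      (ncEval Y (∑ W ∈ c.support, c W • word k W)).trace = 0) :
    ∑ W ∈ c.support, ∑ a ∈ Finset.range W.length,
      Finsupp.single (W.rotate a) (c W * (W.length : k)⁻¹) = 0 := by
  ext V
  rw [Finsupp.finsetSum_apply, Finsupp.zero_apply]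
  simp only [Finsupp.finsetSum_apply, Finsupp.single_apply]
  rcases hm : V.length with _ | m
  · refine Finset.sum_eq_zero fun W _ => Finset.sum_eq_zero fun a ha => ?_
    rw [if_neg]
    rintro rfl
    rw [List.length_rotate] at hm
    simp [hm] at ha
  · have key := homog k (cycMat k (fun i : Fin (m + 1) => V[i.1]'(by rw [hm]; exact i.2))) c
      (h (m + 1) (by omega)) (m + 1)
    have : ((m + 1 : ℕ) : k)⁻¹ * (∑ W ∈ c.support, (if W.length = m + 1 then c W *
      ((W.map (cycMat k (fun i : Fin (m + 1) => V[i.1]'(by rw [hm]; exact i.2)))).prod).trace else 0)) = 0 := by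
      rw [key, mul_zero]
    refine Eq.trans ?_ this
    rw [Finset.mul_sum]
    refine Finset.sum_congr rfl fun W _ => ?_
    split_ifs with hW
    · rw [trace_cycMat k V W hm hW, ← count_flip k V W hm hW, hW, Finset.mul_sum, Finset.mul_sum]
      refine Finset.sum_congr rfl fun a _ => ?_
      split_ifs <;> ring
    · rw [mul_zero]
      refine Finset.sum_eq_zero fun a ha => ?_
      rw [if_neg]
      rintro rfl
      rw [List.length_rotate] at hm
      exact hW hm

lemma const_zero (k : Type*) [Field k] [CharZero k] {d : ℕ} (c : List (Fin d) →₀ k)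
    (h : ∀ n : ℕ, 1 ≤ n → ∀ Y : Fin d → Matrix (Fin n) (Fin n) k,
      (ncEval Y (∑ W ∈ c.support, c W • word k W)).trace = 0) : c [] = 0 := by
  have key := homog k (fun _ => 0) c (h 1 le_rfl) 0
  by_contra hc
  rw [Finset.sum_eq_single []] at key
  · simp at key; exact hc key
  · intro W _ hW
    simp [hW]
  · simp

lemma mem_comms (k : Type*) [Field k] [CharZero k] {d : ℕ} (c : List (Fin d) →₀ k)
    (h : ∀ n : ℕ, 1 ≤ n → ∀ Y : Fin d → Matrix (Fin n) (Fin n) k,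
      (ncEval Y (∑ W ∈ c.support, c W • word k W)).trace = 0) :
    ∑ W ∈ c.support, c W • word k W ∈ comms k (FreeAlgebra k (Fin d)) := by
  have h0 := congrArg (Finsupp.linearCombination k (word k (d := d))) (cyc_sum k c h)
  simp only [map_sum, Finsupp.linearCombination_single, map_zero] at h0
  rw [← sub_zero (∑ W ∈ c.support, c W • word k W), ← h0, ← Finset.sum_sub_distrib]
  refine Submodule.sum_mem _ fun W hW => ?_
  have hl : (W.length : k) ≠ 0 := by
    rw [Nat.cast_ne_zero]
    intro hl
    rw [List.length_eq_zero_iff] at hl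
    rw [hl] at hW
    exact (Finsupp.mem_support_iff.1 hW) (const_zero k c h)
  have : c W • word k W - ∑ a ∈ Finset.range W.length,
      (c W * (W.length : k)⁻¹) • word k (W.rotate a) =
      ∑ a ∈ Finset.range W.length,
        (c W * (W.length : k)⁻¹) • (word k W - word k (W.rotate a)) := by
    simp only [smul_sub, Finset.sum_sub_distrib, Finset.sum_const, Finset.card_range]
    congr 1
    rw [← Nat.cast_smul_eq_nsmul k, smul_smul]
    congr 1
    field_simp
  rw [this]
  exact Submodule.sum_mem _ fun a _ => Submodule.smul_mem _ _ (word_sub_rotate k W a)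

end TraceZero

/-- A noncommutative polynomial has trace zero at every matrix tuple of every size
if and only if it is a finite sum of commutators. -/
theorem trace_zero_iff_sum_commutators
    (k : Type*) [Field k] [IsAlgClosed k] [CharZero k]
    (d : ℕ) (hd : 1 ≤ d) (f : FreeAlgebra k (Fin d)) :
    (∀ (n : ℕ), 1 ≤ n → ∀ X : Fin d → Matrix (Fin n) (Fin n) k,
        (ncEval X f).trace = 0) ↔
      ∃ L : List (FreeAlgebra k (Fin d) × FreeAlgebra k (Fin d)),
        f = (L.map fun pq => pq.1 * pq.2 - pq.2 * pq.1).sum := by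
  constructor
  · intro h
    obtain ⟨c, rfl⟩ := TraceZero.exists_coeffs k f
    exact TraceZero.mem_comms k c h
  · rintro ⟨L, rfl⟩ n _ X
    induction L with
    | nil => simp [ncEval]
    | cons p L ih =>
      simp only [ncEval, List.map_cons, List.sum_cons, map_add, map_sub, map_mul,
        Matrix.trace_add, Matrix.trace_sub] at ih ⊢
      rw [ih, Matrix.trace_mul_comm, sub_self, add_zero]
end

section
/- Let f_1,…,f_ℓ ∈ k⟨x_1,…,x_d⟩. Then f_1,…,f_ℓ are linearly dependent over k if and only if for every n ≥ 1, every X ∈ M_n(k)^d and every vector v ∈ k^n, the vectors f_1(X)v,…,f_ℓ(X)v are linearly dependent in k^n. -/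
theorem word_apply {k : Type*} [Field k] {d n N : ℕ}
    (e : Fin n ≃ {l : List (Fin d) // l.length ≤ N})
    (X : Fin d → Matrix (Fin n) (Fin n) k)
    (hX : ∀ i a b, X i a b = if (e a).1 = i :: (e b).1 then 1 else 0)
    (v : Fin n → k) (hv : ∀ a, v a = if (e a).1 = [] then 1 else 0)
    (w : List (Fin d)) :
    ∀ a, ((w.map X).prod.mulVec v) a = if (e a).1 = w then 1 else 0 := by
  induction w with
  | nil => intro a; simp [hv]
  | cons i w ih =>
    intro a
    rw [List.map_cons, List.prod_cons, ← Matrix.mulVec_mulVec]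
    simp only [Matrix.mulVec, dotProduct] at ih ⊢
    simp only [ih, hX]
    rcases h : (e a).1 with _ | ⟨j, t⟩
    · simp
    · have ht : t.length ≤ N := by
        have := (e a).2
        rw [h] at this
        simp at this
        omega
      rw [Finset.sum_eq_single (e.symm ⟨t, ht⟩)]
      · by_cases h1 : j = i <;> by_cases h2 : t = w <;> simp [h1, h2]
      · intro b _ hb
        have : t ≠ (e b).1 := by
          rintro rfl
          exact hb (by simp)
        simp [this]
      · simp

theorem eval_coeff {k : Type*} [Field k] {d n N : ℕ}
    (e : Fin n ≃ {l : List (Fin d) // l.length ≤ N})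
    (X : Fin d → Matrix (Fin n) (Fin n) k)
    (hX : ∀ i a b, X i a b = if (e a).1 = i :: (e b).1 then 1 else 0)
    (v : Fin n → k) (hv : ∀ a, v a = if (e a).1 = [] then 1 else 0)
    (f : FreeAlgebra k (Fin d)) (a : Fin n) :
    ((ncEval X f).mulVec v) a =
      (FreeAlgebra.equivMonoidAlgebraFreeMonoid f).coeff (FreeMonoid.ofList (e a).1) := by
  obtain ⟨g, rfl⟩ := FreeAlgebra.equivMonoidAlgebraFreeMonoid.symm.surjective f
  rw [AlgEquiv.apply_symm_apply]
  have key : (FreeAlgebra.lift k X).comp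
      (FreeAlgebra.equivMonoidAlgebraFreeMonoid (R := k) (X := Fin d)).symm.toAlgHom =
      MonoidAlgebra.lift k _ _ (FreeMonoid.lift X) := by
    apply MonoidAlgebra.algHom_ext'
    · apply FreeMonoid.hom_eq
      intro i
      simp [FreeAlgebra.equivMonoidAlgebraFreeMonoid]
    · exact Subsingleton.elim _ _
  have h2 : ncEval X (FreeAlgebra.equivMonoidAlgebraFreeMonoid.symm g) =
      MonoidAlgebra.lift k _ _ (FreeMonoid.lift X) g := by
    rw [← key]; rfl
  rw [h2]
  induction g using MonoidAlgebra.induction_linear with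
  | zero => simp
  | add p q hp hq =>
    rw [map_add, Matrix.add_mulVec, Pi.add_apply, hp (by rw [← key]; rfl), hq (by rw [← key]; rfl)]
    simp
  | single w r =>
    have := word_apply e X hX v hv w.toList a
    rw [MonoidAlgebra.lift_single, Matrix.smul_mulVec, Pi.smul_apply, FreeMonoid.lift_apply, this]
    classical
    simp [MonoidAlgebra.coeff_single, Finsupp.single_apply, eq_comm]
    exact if_congr Iff.rfl rfl rfl

/-- Brešar–Klep local-global principle for linear dependence: `f_1, …, f_ℓ` are
linearly dependent over `k` if and only if the vectors `f_1(X)v, …, f_ℓ(X)v` are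
linearly dependent for every matrix tuple `X` and every vector `v`. -/
theorem local_global_linear_dependence
    (k : Type*) [Field k] [IsAlgClosed k] [CharZero k]
    (d ℓ : ℕ) (hd : 1 ≤ d) (f : Fin ℓ → FreeAlgebra k (Fin d)) :
    ¬ LinearIndependent k f ↔
      (∀ (n : ℕ), 1 ≤ n → ∀ X : Fin d → Matrix (Fin n) (Fin n) k,
        ∀ v : Fin n → k,
        ¬ LinearIndependent k (fun j => (ncEval X (f j)).mulVec v)) := by
  constructor
  · intro h n _ X v hl
    apply h
    rw [Fintype.linearIndependent_iff] at hl ⊢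
    intro c hc
    apply hl c
    have h1 : ncEval X (∑ j, c j • f j) = ∑ j, c j • ncEval X (f j) := by
      simp [ncEval]
    rw [hc] at h1
    have h2 : (∑ j, c j • ncEval X (f j)).mulVec v = 0 := by
      rw [← h1]; simp [ncEval]
    rw [Matrix.sum_mulVec] at h2
    simpa [Matrix.smul_mulVec] using h2
  · intro h hl
    classical
    let S : Finset (FreeMonoid (Fin d)) := Finset.univ.biUnion fun j =>
      (FreeAlgebra.equivMonoidAlgebraFreeMonoid (f j)).coeff.support
    let N : ℕ := S.sup FreeMonoid.length
    have hfin : Finite {l : List (Fin d) // l.length ≤ N} :=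
      (List.finite_length_le (Fin d) N).to_subtype
    obtain ⟨n, ⟨e'⟩⟩ := Finite.exists_equiv_fin {l : List (Fin d) // l.length ≤ N}
    let e := e'.symm
    have hn : 1 ≤ n := by
      have := (e' ⟨[], by simp⟩).2
      omega
    let X : Fin d → Matrix (Fin n) (Fin n) k :=
      fun i a b => if (e a).1 = i :: (e b).1 then 1 else 0
    let v : Fin n → k := fun a => if (e a).1 = [] then 1 else 0
    apply h n hn X v
    rw [Fintype.linearIndependent_iff] at hl ⊢
    intro c hc
    apply hl c
    apply FreeAlgebra.equivMonoidAlgebraFreeMonoid.injective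
    rw [map_zero]
    ext w
    rw [map_sum]
    simp only [map_smul, MonoidAlgebra.coeff_sum, MonoidAlgebra.coeff_smul, Finsupp.finsetSum_apply,
      Finsupp.smul_apply, MonoidAlgebra.coeff_zero, Finsupp.zero_apply]
    by_cases hw : w.toList.length ≤ N
    · have := congrFun hc (e.symm ⟨w.toList, hw⟩)
      simp only [Finset.sum_apply, Pi.smul_apply, Pi.zero_apply] at this
      rw [← this]
      refine Finset.sum_congr rfl fun j _ => ?_
      rw [eval_coeff e X (fun _ _ _ => rfl) v (fun _ => rfl)]
      simp
    · refine Finset.sum_eq_zero fun j _ => ?_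
      have : w ∉ (FreeAlgebra.equivMonoidAlgebraFreeMonoid (f j)).coeff.support := by
        intro hm
        exact hw (Finset.le_sup (f := FreeMonoid.length)
          (Finset.mem_biUnion.2 ⟨j, Finset.mem_univ _, hm⟩ : w ∈ S))
      rw [Finsupp.notMem_support_iff.1 this, smul_zero]
end
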